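/- arXiv:2308.06976 — 2 statements merged into one kernel-verified Lean document; each statement's English description precedes it below -/
import Mathlib

section
/- Let n ≥ 0 and m ≥ 1 be integers, 0 < λ < n+m, and α, β ∈ ℝ with λ+2α > 0 and λ+2β > 0. Set θ = (2(n+m)−λ−2α)/(λ+2α) and κ = (2(n+m)−λ−2β)/(λ+2β), and assume κ, θ > 0, κθ ≥ 1, α < m/(θ+1), β < m/(κ+1), α+β ≥ 0. Suppose u, v are positive continuous functions on ℝ^{n+m}, with ∫_{ℝ^{n+m}} u^{θ+1} < ∞, satisfying u(x,x̂) = |x̂|^{−α} ∫_{ℝ^{n+m}} v(y,ŷ)^κ |ŷ|^{−β} |(x,x̂)−(y,ŷ)|^{−λ} dy dŷ and v(y,ŷ) = |ŷ|^{−β} ∫_{ℝ^{n+m}} u(x,x̂)^θ |x̂|^{−α} |(x,x̂)−(y,ŷ)|^{−λ} dx dx̂ for all points with x̂ ≠ 0 and ŷ ≠ 0 respectively. Then there exist constants c₃, c₄, a > 0 and a point x₀ ∈ ℝ^n such that for all x ∈ ℝ^n, u(x,0) = c₃ (|x−x₀|² + a²)^{−(λ+2α)/2} and v(x,0) = c₄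 (|x−x₀|² + a²)^{−(λ+2β)/2}. -/
open MeasureTheory ENNReal

noncomputable section

/-- The Euclidean distance `|(x,x̂)-(y,ŷ)|` on `ℝ^n × ℝ^m`. -/
def pDist {n m : ℕ} (X Y : EuclideanSpace ℝ (Fin n) × EuclideanSpace ℝ (Fin m)) : ℝ :=
  Real.sqrt (‖X.1 - Y.1‖ ^ 2 + ‖X.2 - Y.2‖ ^ 2)

set_option linter.unusedSectionVars false

section Kelvin

variable {E : Type*} [NormedAddCommGroup E] [InnerProductSpace ℝ E]

/-- inversion in the sphere of radius `√t` -/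
def kJ (t : ℝ) (z : E) : E := (t / ‖z‖ ^ 2) • z

/-- Kelvin transform -/
def kT (lam t : ℝ) (u : E → ℝ) (z : E) : ℝ := (t / ‖z‖ ^ 2) ^ (lam / 2) * u (kJ t z)

/-- reflected squared distance -/
def kq (t : ℝ) (z w : E) : ℝ := ‖z‖ ^ 2 * ‖w‖ ^ 2 / t - 2 * inner ℝ z w + t

/-- exterior of the sphere -/
def kOut (t : ℝ) : Set E := {w | t < ‖w‖ ^ 2}

lemma kOut_ne {t : ℝ} (ht : 0 ≤ t) {w : E} (hw : w ∈ kOut t) : 0 < ‖w‖ := by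
  have h : t < ‖w‖ ^ 2 := hw
  rcases (norm_nonneg w).lt_or_eq with h1 | h1
  · exact h1
  · rw [← h1] at h; norm_num at h; linarith

lemma kJ_norm {t : ℝ} (ht : 0 ≤ t) {z : E} (hz : 0 < ‖z‖) : ‖kJ t z‖ = t / ‖z‖ := by
  rw [kJ, norm_smul, Real.norm_of_nonneg (by positivity)]
  field_simp

lemma kJ_kJ {t : ℝ} (ht : 0 < t) {z : E} (hz : 0 < ‖z‖) : kJ t (kJ t z) = z := by
  rw [kJ, kJ_norm ht.le hz, kJ, smul_smul]
  rw [show t / (t / ‖z‖) ^ 2 * (t / ‖z‖ ^ 2) = 1 by field_simp, one_smul]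

lemma kq_symm (t : ℝ) (z w : E) : kq t z w = kq t w z := by
  rw [kq, kq, real_inner_comm]; ring

lemma kq_sub {t : ℝ} (ht : 0 < t) (z w : E) :
    kq t z w - ‖z - w‖ ^ 2 = (‖z‖ ^ 2 - t) * (‖w‖ ^ 2 - t) / t := by
  rw [kq, norm_sub_sq_real]; field_simp; ring

lemma kq_eq {t : ℝ} (ht : 0 < t) (z : E) {w : E} (hw : 0 < ‖w‖) :
    ‖w‖ ^ 2 / t * ‖z - kJ t w‖ ^ 2 = kq t z w := by
  rw [norm_sub_sq_real, kJ_norm ht.le hw, kq, kJ, inner_smul_right]; field_simp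

lemma kq_J {t : ℝ} (ht : 0 < t) {z : E} (w : E) (hz : 0 < ‖z‖) :
    ‖z‖ ^ 2 / t * kq t (kJ t z) w = ‖z - w‖ ^ 2 := by
  rw [norm_sub_sq_real, kq, kJ_norm ht.le hz, kJ, real_inner_smul_left]; field_simp; ring

lemma kq_nonneg {t : ℝ} (ht : 0 < t) (z : E) {w : E} (hw : 0 < ‖w‖) : 0 ≤ kq t z w := by
  rw [← kq_eq ht z hw]; positivity

lemma rpow_flip {a b : ℝ} (ha : 0 < a) (hb : 0 < b) (s : ℝ) : (a / b) ^ s = (b / a) ^ (-s) := by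
  rw [Real.rpow_neg (by positivity), ← Real.inv_rpow (by positivity), inv_div]

variable [FiniteDimensional ℝ E] [MeasurableSpace E] [BorelSpace E] {μ : Measure E}
  [μ.IsAddHaarMeasure]

lemma kOut_meas (t : ℝ) : MeasurableSet (kOut t : Set E) :=
  (isOpen_lt continuous_const (continuous_norm.pow 2)).measurableSet

lemma kJ_deriv {t : ℝ} (ht : 0 < t) {x : E} (hx : 0 < ‖x‖) :
    HasFDerivAt (kJ t : E → E) ((t / ‖x‖ ^ 2) • ((ℝ ∙ x)ᗮ.reflection : E →L[ℝ] E)) x := by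
  have h := EuclideanGeometry.hasFDerivAt_inversion (c := (0 : E)) (R := √t) (norm_pos_iff.1 hx)
  have e : EuclideanGeometry.inversion (0 : E) (√t) = kJ t := by
    funext z
    simp [EuclideanGeometry.inversion, kJ, div_pow, Real.sq_sqrt ht.le]
  rw [e] at h
  simpa [div_pow, Real.sq_sqrt ht.le] using h

lemma kJ_det {t : ℝ} (ht : 0 < t) {x : E} :
    |((t / ‖x‖ ^ 2) • ((ℝ ∙ x)ᗮ.reflection : E →L[ℝ] E)).det|
      = (t / ‖x‖ ^ 2) ^ (Module.finrank ℝ E) := by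
  have : (((ℝ ∙ x)ᗮ.reflection : E →L[ℝ] E)).det
      = LinearMap.det (ℝ ∙ x)ᗮ.reflection.toLinearMap := rfl
  rw [ContinuousLinearMap.det, ContinuousLinearMap.toLinearMap_smul, LinearMap.det_smul, abs_mul]
  change _ * |(((ℝ ∙ x)ᗮ.reflection : E →L[ℝ] E)).det| = _
  rw [this, Submodule.det_reflection, abs_pow, abs_pow, abs_neg, abs_one, one_pow, mul_one,
    abs_of_nonneg (by positivity)]

lemma kJ_image {t : ℝ} (ht : 0 < t) :
    (kJ t '' kOut t : Set E) = {y | ‖y‖ ^ 2 < t} \ {0} := by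
  ext y
  constructor
  · rintro ⟨w, hw, rfl⟩
    have hw0 := kOut_ne ht.le hw
    have hw1 : t < ‖w‖ ^ 2 := hw
    have hn := kJ_norm ht.le hw0
    refine ⟨?_, ?_⟩
    · simp only [Set.mem_ofPred_eq, hn, div_pow]
      rw [div_lt_iff₀ (by positivity)]; nlinarith
    · rw [Set.mem_singleton_iff, ← norm_eq_zero, hn]; positivity
  · rintro ⟨h1, h2⟩
    have hy : 0 < ‖y‖ := norm_pos_iff.2 h2
    refine ⟨kJ t y, ?_, kJ_kJ ht hy⟩
    simp only [kOut, Set.mem_ofPred_eq, kJ_norm ht.le hy, div_pow] at h1 ⊢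
    rw [lt_div_iff₀ (by positivity)]; nlinarith

lemma kJ_inj {t : ℝ} (ht : 0 < t) : Set.InjOn (kJ t : E → E) (kOut t) := by
  intro a ha b hb h
  rw [← kJ_kJ ht (kOut_ne ht.le ha), h, kJ_kJ ht (kOut_ne ht.le hb)]

variable [Nontrivial E]

lemma kIn_ae (t : ℝ) : ({y | ‖y‖ ^ 2 < t} \ {0} : Set E) =ᵐ[μ] ((kOut t)ᶜ : Set E) := by
  have h0 : μ {(0 : E)} = 0 := measure_singleton _
  have h1 : μ (Metric.sphere (0 : E) √t) = 0 := Measure.addHaar_sphere μ 0 _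
  have h2 : ∀ᵐ y ∂μ, y ∉ ({0} ∪ Metric.sphere (0 : E) √t) := by
    exact measure_eq_zero_iff_ae_notMem.1 (measure_union_null h0 h1)
  filter_upwards [h2] with y hy
  simp only [Set.mem_union, Set.mem_singleton_iff, mem_sphere_iff_norm, sub_zero, not_or] at hy
  apply propext
  change (‖y‖ ^ 2 < t ∧ y ∉ ({0} : Set E)) ↔ ¬ (t < ‖y‖ ^ 2)
  rw [Set.mem_singleton_iff, not_lt]
  constructor
  · rintro ⟨h, -⟩; exact h.le
  · intro h
    refine ⟨lt_of_le_of_ne h ?_, hy.1⟩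
    intro h3
    apply hy.2
    rw [← h3, Real.sqrt_sq (norm_nonneg _)]

lemma kJ_integrable {t : ℝ} (ht : 0 < t) (g : E → ℝ) (hg : Integrable g μ) :
    IntegrableOn (fun w => (t / ‖w‖ ^ 2) ^ (Module.finrank ℝ E) * g (kJ t w)) (kOut t) μ := by
  have h := (integrableOn_image_iff_integrableOn_abs_det_fderiv_smul μ (kOut_meas t)
    (fun x hx => (kJ_deriv ht (kOut_ne ht.le hx)).hasFDerivWithinAt) (kJ_inj ht) g).1
      hg.integrableOn
  simpa only [kJ_det ht, smul_eq_mul] using h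

lemma kJ_integral {t : ℝ} (ht : 0 < t) (g : E → ℝ) (hg : Integrable g μ) :
    ∫ y, g y ∂μ =
      ∫ w in kOut t, (g w + (t / ‖w‖ ^ 2) ^ (Module.finrank ℝ E) * g (kJ t w)) ∂μ := by
  have h := integral_image_eq_integral_abs_det_fderiv_smul μ (kOut_meas t)
    (fun x hx => (kJ_deriv ht (kOut_ne ht.le hx)).hasFDerivWithinAt) (kJ_inj ht) g
  simp only [kJ_det ht, smul_eq_mul] at h
  rw [integral_add hg.integrableOn (kJ_integrable ht g hg), ← h, kJ_image ht,
    setIntegral_congr_set (kIn_ae t), integral_add_compl (kOut_meas t) hg]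

/-- solutions of the system -/
structure Sol (μ : Measure E) (lam p : ℝ) (u v : E → ℝ) : Prop where
  cu : Continuous u
  cv : Continuous v
  pu : ∀ x, 0 < u x
  pv : ∀ x, 0 < v x
  iu : ∀ z, Integrable (fun y => v y ^ p * (‖z - y‖ ^ 2) ^ (-(lam / 2))) μ
  iv : ∀ z, Integrable (fun y => u y ^ p * (‖z - y‖ ^ 2) ^ (-(lam / 2))) μ
  eu : ∀ z, u z = ∫ y, v y ^ p * (‖z - y‖ ^ 2) ^ (-(lam / 2)) ∂μ
  ev : ∀ z, v z = ∫ y, u y ^ p * (‖z - y‖ ^ 2) ^ (-(lam / 2)) ∂μ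

lemma Sol.symm {lam p : ℝ} {u v : E → ℝ} (h : Sol μ lam p u v) : Sol μ lam p v u :=
  ⟨h.cv, h.cu, h.pv, h.pu, h.iv, h.iu, h.ev, h.eu⟩

lemma Sol.translate {lam p : ℝ} {u v : E → ℝ} (h : Sol μ lam p u v) (x : E) :
    Sol μ lam p (fun y => u (x + y)) (fun y => v (x + y)) := by
  have e : ∀ z y : E, ‖z - y‖ = ‖(x + z) - (x + y)‖ := fun z y => by congr 1; abel
  refine ⟨h.cu.comp (by fun_prop), h.cv.comp (by fun_prop), fun _ => h.pu _, fun _ => h.pv _,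
    fun z => ?_, fun z => ?_, fun z => ?_, fun z => ?_⟩
  · simp only [e z]; exact (h.iu (x + z)).comp_add_left x
  · simp only [e z]; exact (h.iv (x + z)).comp_add_left x
  · simp only [e z]
    rw [h.eu, ← integral_add_left_eq_self _ x]
  · simp only [e z]
    rw [h.ev, ← integral_add_left_eq_self _ x]

lemma kT_pow {lam p t : ℝ} (ht : 0 < t)
    (hp : lam / 2 * p = Module.finrank ℝ E - lam / 2) {v : E → ℝ} (pv : ∀ x, 0 < v x)
    {w : E} (hw : 0 < ‖w‖) (z : E) :
    (t / ‖w‖ ^ 2) ^ (Module.finrank ℝ E) *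
      (v (kJ t w) ^ p * (‖z - kJ t w‖ ^ 2) ^ (-(lam / 2)))
      = kT lam t v w ^ p * (kq t z w) ^ (-(lam / 2)) := by
  rw [← kq_eq ht z hw, Real.mul_rpow (by positivity) (by positivity), ← rpow_flip ht (by positivity),
    kT, Real.mul_rpow (by positivity) (pv _).le, ← Real.rpow_mul (by positivity), hp,
    ← Real.rpow_natCast, Real.rpow_sub (by positivity)]
  field_simp

lemma Sol.rep {lam p t : ℝ} {u v : E → ℝ} (h : Sol μ lam p u v) (ht : 0 < t)
    (hp : lam / 2 * p = Module.finrank ℝ E - lam / 2) {z : E} (hz : z ∈ kOut t) :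
    IntegrableOn (fun w => ((‖z - w‖ ^ 2) ^ (-(lam / 2)) - (kq t z w) ^ (-(lam / 2))) *
      (v w ^ p - kT lam t v w ^ p)) (kOut t) μ ∧
    u z - kT lam t u z =
      ∫ w in kOut t, ((‖z - w‖ ^ 2) ^ (-(lam / 2)) - (kq t z w) ^ (-(lam / 2))) *
      (v w ^ p - kT lam t v w ^ p) ∂μ := by
  have hz0 := kOut_ne ht.le hz
  have e1 := h.eu z
  have e2 := h.eu (kJ t z)
  have i1 := (h.iu z).integrableOn (s := kOut t)
  have i2 := (h.iu (kJ t z)).integrableOn (s := kOut t)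
  have j1 := kJ_integrable ht _ (h.iu z)
  have j2 := kJ_integrable ht _ (h.iu (kJ t z))
  rw [kJ_integral ht _ (h.iu z)] at e1
  rw [kJ_integral ht _ (h.iu (kJ t z))] at e2
  have i2' := i2.const_mul ((t / ‖z‖ ^ 2) ^ (lam / 2))
  have j2' := j2.const_mul ((t / ‖z‖ ^ 2) ^ (lam / 2))
  have key : ∀ w ∈ kOut t, ((‖z - w‖ ^ 2) ^ (-(lam / 2)) - (kq t z w) ^ (-(lam / 2))) *
      (v w ^ p - kT lam t v w ^ p) =
      (v w ^ p * (‖z - w‖ ^ 2) ^ (-(lam / 2)) + (t / ‖w‖ ^ 2) ^ (Module.finrank ℝ E) *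
        (v (kJ t w) ^ p * (‖z - kJ t w‖ ^ 2) ^ (-(lam / 2)))) -
      ((t / ‖z‖ ^ 2) ^ (lam / 2) * (v w ^ p * (‖kJ t z - w‖ ^ 2) ^ (-(lam / 2))) +
        (t / ‖z‖ ^ 2) ^ (lam / 2) * ((t / ‖w‖ ^ 2) ^ (Module.finrank ℝ E) *
        (v (kJ t w) ^ p * (‖kJ t z - kJ t w‖ ^ 2) ^ (-(lam / 2))))) := by
    intro w hw
    have hw0 := kOut_ne ht.le hw
    rw [kT_pow ht hp h.pv hw0 z, kT_pow ht hp h.pv hw0 (kJ t z)]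
    have a1 : (t / ‖z‖ ^ 2) ^ (lam / 2) * (‖kJ t z - w‖ ^ 2) ^ (-(lam / 2))
        = kq t z w ^ (-(lam / 2)) := by
      rw [rpow_flip ht (by positivity), ← Real.mul_rpow (by positivity) (by positivity),
        norm_sub_rev, kq_eq ht w hz0, kq_symm]
    have a2 : (t / ‖z‖ ^ 2) ^ (lam / 2) * (kq t (kJ t z) w) ^ (-(lam / 2))
        = (‖z - w‖ ^ 2) ^ (-(lam / 2)) := by
      rw [rpow_flip ht (by positivity), ← Real.mul_rpow (by positivity) (kq_nonneg ht _ hw0),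
        kq_J ht w hz0]
    rw [← a1, ← a2]; ring
  have I := (i1.add j1).sub (i2'.add j2')
  constructor
  · exact (integrableOn_congr_fun key (kOut_meas t)).2 I
  · rw [setIntegral_congr_fun (kOut_meas t) key]
    refine Eq.trans ?_ (integral_sub (i1.add j1) (i2'.add j2')).symm
    simp only [Pi.add_apply]
    rw [← e1, kT, e2, ← integral_const_mul]
    simp only [mul_add]

end Kelvin

section Moving

variable {E : Type*} [NormedAddCommGroup E] [InnerProductSpace ℝ E]
variable [FiniteDimensional ℝ E] [MeasurableSpace E] [BorelSpace E] {μ : Measure E}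
  [μ.IsAddHaarMeasure]

lemma exists_bound_ball {u : E → ℝ} (cu : Continuous u) (R : ℝ) :
    ∃ M : ℝ, 0 < M ∧ ∀ y, ‖y‖ ≤ R → u y ≤ M := by
  obtain ⟨C, hC⟩ := (isCompact_closedBall (0 : E) R).exists_bound_of_continuousOn cu.continuousOn
  refine ⟨max C 1, by positivity, fun y hy => ?_⟩
  exact ((le_abs_self _).trans (hC y (by simpa using hy))).trans (le_max_left _ _)

lemma exists_lower_ball {u : E → ℝ} (cu : Continuous u) (pu : ∀ x, 0 < u x) (R : ℝ) :
    ∃ c : ℝ, 0 < c ∧ ∀ y, ‖y‖ ≤ R → c ≤ u y := by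
  have cu' : Continuous (fun y => (u y)⁻¹) := cu.inv₀ (fun x => (pu x).ne')
  obtain ⟨M, hM, h⟩ := exists_bound_ball cu' R
  exact ⟨M⁻¹, by positivity, fun y hy => inv_le_of_inv_le₀ (pu y) (h y hy)⟩

lemma Sol.riesz_loc {lam p : ℝ} {u v : E → ℝ} (h : Sol μ lam p u v) (hp : 1 ≤ p) :
    IntegrableOn (fun y : E => (‖y‖ ^ 2) ^ (-(lam / 2))) (Metric.ball 0 1) μ := by
  obtain ⟨c, hc, hcv⟩ := exists_lower_ball h.cv h.pv 1
  have i := ((h.iu 0).integrableOn (s := Metric.ball 0 1)).const_mul ((c ^ p)⁻¹)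
  refine Integrable.mono' i ?_ ?_
  · have : Measurable (fun y : E => (‖y‖ ^ 2) ^ (-(lam / 2))) := by fun_prop
    exact this.aestronglyMeasurable
  · refine (ae_restrict_iff' measurableSet_ball).2 (Filter.Eventually.of_forall fun y hy => ?_)
    have hy' : ‖y‖ ≤ 1 := by simpa using (Metric.mem_ball.1 hy).le
    rw [Real.norm_of_nonneg (by positivity), zero_sub, norm_neg]
    have : c ^ p ≤ v y ^ p := Real.rpow_le_rpow hc.le (hcv y hy') (by linarith)
    have h2 : 0 < c ^ p := by positivity
    rw [← mul_assoc]
    refine le_mul_of_one_le_left (by positivity) ?_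
    rw [inv_mul_eq_div, one_le_div h2]; exact this

lemma Sol.riesz_small {lam p : ℝ} {u v : E → ℝ} (h : Sol μ lam p u v) (hlam : 0 < lam) (hp : 1 ≤ p)
    {ε : ℝ} (hε : 0 < ε) :
    ∃ η : ℝ≥0∞, 0 < η ∧ ∀ S : Set E, MeasurableSet S → μ S < η → ∀ z : E,
      IntegrableOn (fun y : E => (‖z - y‖ ^ 2) ^ (-(lam / 2))) S μ ∧
      ∫ y in S, (‖z - y‖ ^ 2) ^ (-(lam / 2)) ∂μ ≤ ε := by
  set k : E → ℝ≥0∞ := fun y => ENNReal.ofReal ((‖y‖ ^ 2) ^ (-(lam / 2))) with hk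
  have mk : Measurable k := by fun_prop
  have i := (h.riesz_loc hp).lintegral_lt_top
  rw [← lintegral_indicator measurableSet_ball] at i
  obtain ⟨δ, hδ, H⟩ := exists_pos_setLIntegral_lt_of_measure_lt i.ne
    (ε := ENNReal.ofReal (ε / 2)) (by simpa using hε)
  refine ⟨min δ (ENNReal.ofReal (ε / 2)), lt_min hδ (by simpa using hε), fun S mS hS z => ?_⟩
  have key : ∫⁻ y in S, k (z - y) ∂μ ≤ ENNReal.ofReal ε := by
    have mp := Measure.measurePreserving_sub_left μ z
    have e0 : (fun y : E => z - y) ⁻¹' ((fun y : E => z - y) ⁻¹' S) = S := by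
      ext y; simp
    have mS' : MeasurableSet ((fun y : E => z - y) ⁻¹' S) := mp.measurable mS
    have e1 := mp.setLIntegral_comp_preimage mS' (mk.indicator (measurableSet_ball (x := (0:E)) (ε := 1)))
    have e2 := mp.measure_preimage mS.nullMeasurableSet
    rw [e0] at e1
    have h1 := H _ (e2.le.trans_lt (hS.trans_le (min_le_left _ _)))
    calc ∫⁻ y in S, k (z - y) ∂μ
        ≤ ∫⁻ y in S, ((Metric.ball (0:E) 1).indicator k (z - y) + 1) ∂μ := by
          refine lintegral_mono fun y => ?_
          by_cases hy : z - y ∈ Metric.ball (0:E) 1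
          · simp [Set.indicator_of_mem hy]
          · simp only [Set.indicator_of_notMem hy, zero_add, hk]
            rw [← ENNReal.ofReal_one]
            apply ENNReal.ofReal_le_ofReal
            have : 1 ≤ ‖z - y‖ := by simpa using hy
            apply Real.rpow_le_one_of_one_le_of_nonpos (by nlinarith) (by linarith)
      _ = ∫⁻ y in S, (Metric.ball (0:E) 1).indicator k (z - y) ∂μ + μ S := by
          rw [lintegral_add_right _ measurable_const]; simp
      _ ≤ ENNReal.ofReal (ε / 2) + ENNReal.ofReal (ε / 2) := by
          gcongr
          · rw [e1]; exact h1.le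
          · exact (hS.trans_le (min_le_right _ _)).le
      _ = ENNReal.ofReal ε := by
          rw [← ENNReal.ofReal_add (by positivity) (by positivity)]; congr 1; ring
  have m' : Measurable (fun y : E => (‖z - y‖ ^ 2) ^ (-(lam / 2))) := by fun_prop
  constructor
  · refine ⟨m'.aestronglyMeasurable, ?_⟩
    rw [hasFiniteIntegral_iff_ofReal (Filter.Eventually.of_forall fun y => by positivity)]
    exact key.trans_lt ENNReal.ofReal_lt_top
  · rw [integral_eq_lintegral_of_nonneg_ae (Filter.Eventually.of_forall fun y => by positivity)
      m'.aestronglyMeasurable]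
    exact ENNReal.toReal_le_of_le_ofReal hε.le key

lemma rpow_sub_le {a b p : ℝ} (hb : 0 < b) (hab : b ≤ a) (hp : 1 ≤ p) :
    a ^ p - b ^ p ≤ p * a ^ (p - 1) * (a - b) := by
  have ha : 0 < a := hb.trans_le hab
  have h := one_add_mul_self_le_rpow_one_add (s := b / a - 1)
    (by have : 0 < b / a := by positivity
        linarith) hp
  rw [add_sub_cancel, Real.div_rpow hb.le ha.le, le_div_iff₀ (by positivity)] at h
  have e : a ^ p = a ^ (p - 1) * a := by
    rw [Real.rpow_sub_one ha.ne']; field_simp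
  have : (1 + p * (b / a - 1)) * a ^ p = a ^ p - p * a ^ (p - 1) * (a - b) := by
    rw [e]; field_simp; ring
  linarith

lemma kern_le {s A B : ℝ} (hs : 0 < s) (hA : 0 < A) (hAB : A ≤ B) : B ^ (-s) ≤ A ^ (-s) :=
  Real.rpow_le_rpow_of_nonpos hA hAB (by linarith)

lemma kT_pos {lam t : ℝ} (ht : 0 < t) {u : E → ℝ} (pu : ∀ x, 0 < u x) {w : E} (hw : 0 < ‖w‖) :
    0 < kT lam t u w := mul_pos (by positivity) (pu _)

lemma kT_le {lam t r M : ℝ} (hlam : 0 < lam) (ht : 0 < t) (htr : t ≤ r)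
    {u : E → ℝ} (pu : ∀ x, 0 < u x) (hM : ∀ y : E, ‖y‖ ^ 2 ≤ r → u y ≤ M) {w : E}
    (hw : w ∈ kOut t) : kT lam t u w ≤ M := by
  have hw0 := kOut_ne ht.le hw
  have hw1 : t < ‖w‖ ^ 2 := hw
  have h1 : (t / ‖w‖ ^ 2) ^ (lam / 2) ≤ 1 := by
    apply Real.rpow_le_one (by positivity) _ (by linarith)
    rw [div_le_one (by positivity)]; exact hw1.le
  have h2 : u (kJ t w) ≤ M := by
    apply hM
    rw [kJ_norm ht.le hw0, div_pow]
    refine le_trans ?_ htr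
    rw [div_le_iff₀ (by positivity)]; nlinarith
  calc kT lam t u w ≤ 1 * u (kJ t w) := mul_le_mul_of_nonneg_right h1 (pu _).le
    _ ≤ M := by rw [one_mul]; exact h2

variable [Nontrivial E]

lemma Sol.narrow_step {lam p t r M D : ℝ} {u v : E → ℝ} (h : Sol μ lam p u v) (hlam : 0 < lam)
    (hp1 : 1 ≤ p) (hp : lam / 2 * p = Module.finrank ℝ E - lam / 2) (ht : 0 < t) (htr : t ≤ r)
    (hMv : ∀ y : E, ‖y‖ ^ 2 ≤ r → v y ≤ M)
    (hI : ∀ z : E, IntegrableOn (fun y : E => (‖z - y‖ ^ 2) ^ (-(lam / 2)))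
      (kOut t ∩ {w | ‖w‖ ^ 2 < r}) μ ∧
      p * M ^ (p - 1) * ∫ y in kOut t ∩ {w | ‖w‖ ^ 2 < r}, (‖z - y‖ ^ 2) ^ (-(lam / 2)) ∂μ ≤ 1 / 2)
    (hfar : ∀ z : E, r ≤ ‖z‖ ^ 2 → kT lam t v z ≤ v z) (hD : 0 ≤ D)
    (hstep : ∀ w ∈ kOut t ∩ {w | ‖w‖ ^ 2 < r}, kT lam t v w - v w ≤ D)
    {z : E} (hz : z ∈ kOut t) : kT lam t u z - u z ≤ D / 2 := by
  set S : Set E := kOut t ∩ {w | ‖w‖ ^ 2 < r} with hS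
  have mS : MeasurableSet S := (kOut_meas t).inter
    (isOpen_lt (continuous_norm.pow 2) continuous_const).measurableSet
  have hM0 : 0 < M := (h.pv 0).trans_le (hMv 0 (by simp; linarith))
  obtain ⟨i1, e1⟩ := h.rep ht hp hz
  have e2 : kT lam t u z - u z = ∫ w in kOut t,
      -(((‖z - w‖ ^ 2) ^ (-(lam / 2)) - (kq t z w) ^ (-(lam / 2))) *
      (v w ^ p - kT lam t v w ^ p)) ∂μ := by rw [integral_neg, ← e1]; ring
  rw [e2]
  have hle : ∫ w in kOut t, -(((‖z - w‖ ^ 2) ^ (-(lam / 2)) - (kq t z w) ^ (-(lam / 2))) *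
      (v w ^ p - kT lam t v w ^ p)) ∂μ ≤
      ∫ w in kOut t, S.indicator (fun w => (p * M ^ (p - 1) * D) *
        (‖z - w‖ ^ 2) ^ (-(lam / 2))) w ∂μ := by
    refine integral_mono_ae i1.neg ?_ ?_
    · exact ((integrable_indicator_iff mS).2 ((hI z).1.const_mul _)).integrableOn
    · have hz' : ∀ᵐ w ∂(μ.restrict (kOut t)), w ≠ z := by
        refine ae_restrict_of_ae ?_
        exact measure_eq_zero_iff_ae_notMem.1 (measure_singleton z)
      filter_upwards [hz', ae_restrict_mem (kOut_meas t)] with w hwz hw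
      have hw0 := kOut_ne ht.le hw
      have hw1 : t < ‖w‖ ^ 2 := hw
      have hz1 : t < ‖z‖ ^ 2 := hz
      have hpos : 0 < ‖z - w‖ := norm_pos_iff.2 (sub_ne_zero.2 hwz.symm)
      have hq : ‖z - w‖ ^ 2 ≤ kq t z w := by
        have := kq_sub ht z w
        have h3 : 0 ≤ (‖z‖ ^ 2 - t) * (‖w‖ ^ 2 - t) / t :=
          div_nonneg (mul_nonneg (by linarith) (by linarith)) ht.le
        linarith
      have hPQ := kern_le (s := lam / 2) (by linarith) (by positivity) hq
      have hQ0 : 0 ≤ kq t z w ^ (-(lam / 2)) := Real.rpow_nonneg (kq_nonneg ht z hw0) _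
      have hT0 := kT_pos (lam := lam) ht h.pv hw0
      by_cases hwS : w ∈ S
      · rw [Set.indicator_of_mem hwS]
        have hb : kT lam t v w ^ p - v w ^ p ≤ p * M ^ (p - 1) * D := by
          rcases le_total (kT lam t v w) (v w) with hc | hc
          · have := Real.rpow_le_rpow hT0.le hc (by linarith : 0 ≤ p)
            have : 0 ≤ p * M ^ (p - 1) * D := by positivity
            linarith
          · refine (rpow_sub_le (h.pv w) hc hp1).trans ?_
            have h4 : kT lam t v w ^ (p - 1) ≤ M ^ (p - 1) :=
              Real.rpow_le_rpow hT0.le (kT_le hlam ht htr h.pv hMv hw) (by linarith)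
            have h5 := hstep w hwS
            have : 0 ≤ kT lam t v w - v w := by linarith
            gcongr
        have h6 : 0 ≤ p * M ^ (p - 1) * D := by positivity
        nlinarith [mul_nonneg (sub_nonneg.2 hPQ) (sub_nonneg.2 hb), mul_nonneg h6 hQ0]
      · rw [Set.indicator_of_notMem hwS]
        have hwr : r ≤ ‖w‖ ^ 2 := by
          by_contra hc
          exact hwS ⟨hw, not_le.1 hc⟩
        have := Real.rpow_le_rpow hT0.le (hfar w hwr) (by linarith : 0 ≤ p)
        nlinarith [mul_nonneg (sub_nonneg.2 hPQ) (sub_nonneg.2 this)]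
  refine hle.trans ?_
  rw [setIntegral_indicator mS, Set.inter_eq_self_of_subset_right Set.inter_subset_left,
    integral_const_mul]
  have := (hI z).2
  nlinarith [mul_le_mul_of_nonneg_right this hD]

/-- the moving sphere inequality -/
def kGood (lam t : ℝ) (u v : E → ℝ) : Prop :=
  ∀ z ∈ kOut t, kT lam t u z ≤ u z ∧ kT lam t v z ≤ v z

lemma Sol.narrow {lam p t r M : ℝ} {u v : E → ℝ} (h : Sol μ lam p u v) (hlam : 0 < lam)
    (hp1 : 1 ≤ p) (hp : lam / 2 * p = Module.finrank ℝ E - lam / 2) (ht : 0 < t) (htr : t ≤ r)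
    (hM : ∀ y : E, ‖y‖ ^ 2 ≤ r → u y ≤ M ∧ v y ≤ M)
    (hI : ∀ z : E, IntegrableOn (fun y : E => (‖z - y‖ ^ 2) ^ (-(lam / 2)))
      (kOut t ∩ {w | ‖w‖ ^ 2 < r}) μ ∧
      p * M ^ (p - 1) * ∫ y in kOut t ∩ {w | ‖w‖ ^ 2 < r}, (‖z - y‖ ^ 2) ^ (-(lam / 2)) ∂μ ≤ 1 / 2)
    (hfar : ∀ z : E, r ≤ ‖z‖ ^ 2 → kT lam t u z ≤ u z ∧ kT lam t v z ≤ v z) :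
    kGood lam t u v := by
  have hM0 : 0 < M := (h.pv 0).trans_le (hM 0 (by simp; linarith)).2
  have key : ∀ k : ℕ, ∀ z ∈ (kOut t : Set E), kT lam t u z - u z ≤ M * (1 / 2) ^ k ∧
      kT lam t v z - v z ≤ M * (1 / 2) ^ k := by
    intro k
    induction k with
    | zero =>
      intro z hz
      have a := kT_le hlam ht htr h.pu (fun y hy => (hM y hy).1) hz
      have b := kT_le hlam ht htr h.pv (fun y hy => (hM y hy).2) hz
      have := h.pu z
      have := h.pv z
      constructor <;> simp <;> linarith
    | succ k ih =>
      intro z hz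
      have e : M * (1 / 2 : ℝ) ^ (k + 1) = M * (1 / 2) ^ k / 2 := by ring
      rw [e]
      exact ⟨h.narrow_step hlam hp1 hp ht htr (fun y hy => (hM y hy).2) hI
        (fun z hz => (hfar z hz).2) (by positivity) (fun w hw => (ih w hw.1).2) hz,
        h.symm.narrow_step hlam hp1 hp ht htr (fun y hy => (hM y hy).1) hI
        (fun z hz => (hfar z hz).1) (by positivity) (fun w hw => (ih w hw.1).1) hz⟩
  have lim : Filter.Tendsto (fun k : ℕ => M * (1 / 2 : ℝ) ^ k) Filter.atTop (nhds 0) := by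
    simpa using (tendsto_pow_atTop_nhds_zero_of_lt_one (by norm_num : (0:ℝ) ≤ 1 / 2)
      (by norm_num)).const_mul M
  intro z hz
  have a := ge_of_tendsto' lim (fun k => (key k z hz).1)
  have b := ge_of_tendsto' lim (fun k => (key k z hz).2)
  constructor <;> linarith

end Moving

section Moving2

variable {E : Type*} [NormedAddCommGroup E] [InnerProductSpace ℝ E]
variable [FiniteDimensional ℝ E] [MeasurableSpace E] [BorelSpace E] {μ : Measure E}
  [μ.IsAddHaarMeasure]

lemma kT_cont {lam t : ℝ} {u : E → ℝ} (cu : Continuous u) (ht : 0 < t) {w : E} (hw : 0 < ‖w‖) :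
    ContinuousAt (kT lam t u) w := by
  have h1 : ContinuousAt (fun z : E => t / ‖z‖ ^ 2) w :=
    continuousAt_const.div (by fun_prop) (by positivity)
  have h2 : ContinuousAt (fun z : E => (t / ‖z‖ ^ 2) ^ (lam / 2)) w :=
    h1.rpow_const (Or.inl (by positivity))
  have h3 : ContinuousAt (kJ t : E → E) w := h1.smul continuousAt_id
  exact h2.mul (ContinuousAt.comp (f := kJ t) cu.continuousAt h3)

lemma kT_cont_t {lam : ℝ} (hlam : 0 < lam) {u : E → ℝ} (cu : Continuous u) (z : E) :
    Continuous (fun t => kT lam t u z) := by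
  have h1 : Continuous (fun t : ℝ => t / ‖z‖ ^ 2) := by fun_prop
  exact (h1.rpow_const (fun _ => Or.inr (by linarith))).mul (cu.comp (h1.smul continuous_const))

lemma kT_zero {lam : ℝ} (hlam : 0 < lam) (u : E → ℝ) (z : E) : kT lam 0 u z = 0 := by
  simp [kT, Real.zero_rpow (by positivity : lam / 2 ≠ 0)]

lemma kT_unif {lam T δ c : ℝ} (hlam : 0 < lam) {u : E → ℝ} (cu : Continuous u) (hT : 0 ≤ T)
    (hδ : 0 < δ) (hc : 0 < c) :
    ∃ ε : ℝ, 0 < ε ∧ ∀ t, T < t → t < T + ε → ∀ z : E, T + δ ≤ ‖z‖ ^ 2 →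
      kT lam t u z ≤ kT lam T u z + c * (‖z‖ ^ 2) ^ (-(lam / 2)) := by
  set K : Set E := Metric.closedBall 0 (1 / √δ)
  have hK : IsCompact K := isCompact_closedBall _ _
  have cG : Continuous (fun q : ℝ × E => q.1 ^ (lam / 2) * u (q.1 • q.2)) := by
    refine (continuous_fst.rpow_const (fun _ => Or.inr (by linarith))).mul (cu.comp (by fun_prop))
  have cG2 : Continuous (fun q : ℝ × E => q.1 ^ (lam / 2) * u (q.1 • q.2) -
      T ^ (lam / 2) * u (T • q.2)) :=
    cG.sub (continuous_const.mul (cu.comp (by fun_prop)))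
  have H : ∀ᶠ t in nhds T, ∀ w ∈ K, t ^ (lam / 2) * u (t • w) - T ^ (lam / 2) * u (T • w) < c := by
    refine hK.eventually_forall_of_forall_eventually (fun w _ => ?_)
    refine cG2.continuousAt.eventually_lt continuousAt_const ?_
    simpa using hc
  obtain ⟨ε, hε, H⟩ := Metric.eventually_nhds_iff.1 H
  refine ⟨ε, hε, fun t h1 h2 z hz => ?_⟩
  have hz2 : δ ≤ ‖z‖ ^ 2 := by linarith
  have hz0 : 0 < ‖z‖ := by
    rcases (norm_nonneg z).lt_or_eq with h | h
    · exact h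
    · rw [← h] at hz2; norm_num at hz2; linarith
  have h3 := H (y := t) (by rw [Real.dist_eq, abs_of_pos] <;> linarith) ((1 / ‖z‖ ^ 2) • z) (by
    rw [mem_closedBall_zero_iff, norm_smul, Real.norm_of_nonneg (by positivity)]
    rw [show 1 / ‖z‖ ^ 2 * ‖z‖ = 1 / ‖z‖ by field_simp]
    apply one_div_le_one_div_of_le (by positivity)
    exact Real.sqrt_le_iff.2 ⟨hz0.le, hz2⟩)
  have e : ∀ t : ℝ, 0 ≤ t → kT lam t u z =
      (t ^ (lam / 2) * u (t • ((1 / ‖z‖ ^ 2) • z))) * (‖z‖ ^ 2) ^ (-(lam / 2)) := by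
    intro t ht
    rw [kT, kJ, smul_smul, Real.div_rpow ht (by positivity), Real.rpow_neg (by positivity)]
    rw [mul_one_div]; ring
  rw [e t (by linarith), e T hT, ← add_mul]
  exact mul_le_mul_of_nonneg_right (by linarith) (by positivity)

variable (μ) in
lemma shell_small {T : ℝ} (hT : 0 ≤ T) {η : ℝ≥0∞} (hη : 0 < η) :
    ∃ δ : ℝ, 0 < δ ∧ δ ≤ 1 ∧ μ (kOut T ∩ {w | ‖w‖ ^ 2 < T + δ} : Set E) < η := by
  set A : ℕ → Set E := fun k => kOut T ∩ {w | ‖w‖ ^ 2 < T + 1 / ((k : ℝ) + 1)} with hA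
  have hmeas : ∀ k, MeasurableSet (A k) := fun k => (kOut_meas T).inter
    (isOpen_lt (continuous_norm.pow 2) continuous_const).measurableSet
  have hanti : Antitone A := by
    intro a b hab w hw
    refine ⟨hw.1, lt_of_lt_of_le (show ‖w‖ ^ 2 < T + 1 / ((b : ℝ) + 1) from hw.2) ?_⟩
    have := Nat.one_div_le_one_div (α := ℝ) hab
    linarith
  have hfin : μ (A 0) ≠ ⊤ := by
    refine ((measure_mono ?_).trans_lt (measure_ball_lt_top (x := (0 : E)) (r := T + 2))).ne
    intro w hw
    have h2 : ‖w‖ ^ 2 < T + 1 / (((0 : ℕ) : ℝ) + 1) := hw.2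
    norm_num at h2
    rw [mem_ball_zero_iff]
    nlinarith [norm_nonneg w]
  have hlim := tendsto_measure_iInter_atTop (μ := μ) (s := A)
    (fun k => (hmeas k).nullMeasurableSet) hanti ⟨0, hfin⟩
  have hempty : ⋂ k, A k = ∅ := by
    ext w
    simp only [Set.mem_iInter, Set.mem_empty_iff_false, iff_false, not_forall]
    by_cases hw : w ∈ kOut T
    · have hw1 : T < ‖w‖ ^ 2 := hw
      obtain ⟨k, hk⟩ := exists_nat_one_div_lt (sub_pos.2 hw1)
      refine ⟨k, fun hc => ?_⟩
      have h2 : ‖w‖ ^ 2 < T + 1 / ((k : ℝ) + 1) := hc.2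
      linarith
    · exact ⟨0, fun hc => hw hc.1⟩
  rw [hempty, measure_empty] at hlim
  obtain ⟨k, hk⟩ := (hlim.eventually_lt_const hη).exists
  refine ⟨1 / ((k : ℝ) + 1), by positivity, ?_, hk⟩
  rw [div_le_one (by positivity)]
  have : (0 : ℝ) ≤ k := by positivity
  linarith

/-- lower bound at time `T` -/
def kLow (lam T : ℝ) (u : E → ℝ) : Prop := ∀ δ : ℝ, 0 < δ → ∃ c : ℝ, 0 < c ∧
  ∀ z : E, T + δ ≤ ‖z‖ ^ 2 → kT lam T u z + c * (‖z‖ ^ 2) ^ (-(lam / 2)) ≤ u z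

variable [Nontrivial E]

lemma Sol.extend {lam p T : ℝ} {u v : E → ℝ} (h : Sol μ lam p u v) (hlam : 0 < lam)
    (hp1 : 1 ≤ p) (hp : lam / 2 * p = Module.finrank ℝ E - lam / 2) (hT : 0 ≤ T)
    (hu : kLow lam T u) (hv : kLow lam T v) :
    ∃ ε : ℝ, 0 < ε ∧ ∀ t, T < t → t < T + ε → kGood lam t u v := by
  obtain ⟨M1, hM1, b1⟩ := exists_bound_ball h.cu (T + 1)
  obtain ⟨M2, hM2, b2⟩ := exists_bound_ball h.cv (T + 1)
  set M := max M1 M2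
  have hM : 0 < M := lt_max_of_lt_left hM1
  have hCpos : 0 < p * M ^ (p - 1) := by positivity
  obtain ⟨η, hη, H⟩ := h.riesz_small hlam hp1 (ε := 1 / 2 / (p * M ^ (p - 1))) (by positivity)
  obtain ⟨δ, hδ, hδ1, hsh⟩ := shell_small μ hT hη
  obtain ⟨c1, hc1, l1⟩ := hu δ hδ
  obtain ⟨c2, hc2, l2⟩ := hv δ hδ
  obtain ⟨ε1, hε1, k1⟩ := kT_unif hlam h.cu hT hδ hc1
  obtain ⟨ε2, hε2, k2⟩ := kT_unif hlam h.cv hT hδ hc2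
  refine ⟨min δ (min ε1 ε2), by positivity, fun t h1 h2 => ?_⟩
  have h3 : t < T + δ := h2.trans_le (by gcongr; exact min_le_left _ _)
  have h4 : t < T + ε1 := h2.trans_le (by gcongr; exact (min_le_right _ _).trans (min_le_left _ _))
  have h5 : t < T + ε2 := h2.trans_le (by gcongr; exact (min_le_right _ _).trans (min_le_right _ _))
  refine h.narrow (M := M) (r := T + δ) hlam hp1 hp (by linarith) h3.le ?_ ?_ ?_
  · intro y hy
    have : ‖y‖ ≤ T + 1 := by nlinarith [norm_nonneg y]
    exact ⟨(b1 y this).trans (le_max_left _ _), (b2 y this).trans (le_max_right _ _)⟩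
  · intro z
    have hsub : (kOut t ∩ {w | ‖w‖ ^ 2 < T + δ} : Set E) ⊆ kOut T ∩ {w | ‖w‖ ^ 2 < T + δ} :=
      fun w hw => ⟨h1.trans (show t < ‖w‖ ^ 2 from hw.1), hw.2⟩
    obtain ⟨i, b⟩ := H _ ((kOut_meas t).inter
      (isOpen_lt (continuous_norm.pow 2) continuous_const).measurableSet)
      ((measure_mono hsub).trans_lt hsh) z
    refine ⟨i, ?_⟩
    rw [le_div_iff₀ hCpos, mul_comm] at b
    exact b
  · intro z hz
    exact ⟨(k1 t h1 h4 z hz).trans (l1 z hz), (k2 t h1 h5 z hz).trans (l2 z hz)⟩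

lemma Sol.low_zero {lam p : ℝ} {u v : E → ℝ} (h : Sol μ lam p u v) (hlam : 0 < lam)
    (hp1 : 1 ≤ p) : kLow lam 0 u := by
  intro δ hδ
  obtain ⟨c, hc, hcv⟩ := exists_lower_ball h.cv h.pv 1
  set b : ℝ := 2 + 2 / δ
  have hb : 0 < b := by positivity
  set m := μ.real (Metric.ball (0 : E) 1)
  have hm : 0 < m := ENNReal.toReal_pos (Metric.measure_ball_pos μ 0 one_pos).ne'
    measure_ball_lt_top.ne
  refine ⟨c ^ p * b ^ (-(lam / 2)) * m, by positivity, fun z hz => ?_⟩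
  rw [zero_add] at hz
  rw [kT_zero hlam, zero_add, h.eu z]
  have h1 : ∫ y in Metric.ball (0 : E) 1, v y ^ p * (‖z - y‖ ^ 2) ^ (-(lam / 2)) ∂μ ≤
      ∫ y, v y ^ p * (‖z - y‖ ^ 2) ^ (-(lam / 2)) ∂μ := by
    refine setIntegral_le_integral (h.iu z) (Filter.Eventually.of_forall fun y => ?_)
    have := h.pv y
    simp only [Pi.zero_apply]; positivity
  refine le_trans ?_ h1
  have h2 : ∫ y in Metric.ball (0 : E) 1, (c ^ p * (b ^ (-(lam / 2)) * (‖z‖ ^ 2) ^ (-(lam / 2)))) ∂μ ≤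
      ∫ y in Metric.ball (0 : E) 1, v y ^ p * (‖z - y‖ ^ 2) ^ (-(lam / 2)) ∂μ := by
    refine integral_mono_ae (integrableOn_const measure_ball_lt_top.ne) (h.iu z).integrableOn ?_
    have hz' : ∀ᵐ w ∂(μ.restrict (Metric.ball (0 : E) 1)), w ≠ z := by
      refine ae_restrict_of_ae ?_
      exact measure_eq_zero_iff_ae_notMem.1 (measure_singleton z)
    filter_upwards [hz', ae_restrict_mem measurableSet_ball] with w hwz hw
    have hw1 : ‖w‖ ≤ 1 := by simpa using (Metric.mem_ball.1 hw).le
    have hpos : 0 < ‖z - w‖ := norm_pos_iff.2 (sub_ne_zero.2 hwz.symm)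
    have a1 : c ^ p ≤ v w ^ p := Real.rpow_le_rpow hc.le (hcv w hw1) (by linarith)
    rw [← Real.mul_rpow hb.le (by positivity)]
    have a2 : ‖z - w‖ ^ 2 ≤ b * ‖z‖ ^ 2 := by
      have b1 := norm_sub_le z w
      have b2 : 1 ≤ ‖z‖ ^ 2 / δ := by rw [one_le_div hδ]; exact hz
      have b3 : b * ‖z‖ ^ 2 = 2 * ‖z‖ ^ 2 + 2 * (‖z‖ ^ 2 / δ) := by simp only [b]; ring
      rw [b3]
      nlinarith [sq_nonneg (‖z‖ - 1), norm_nonneg w, norm_nonneg z]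
    have a3 := kern_le (s := lam / 2) (by linarith) (by positivity) a2
    exact mul_le_mul a1 a3 (by positivity) (by have := h.pv w; positivity)
  refine le_trans (le_of_eq ?_) h2
  rw [setIntegral_const, smul_eq_mul]
  change _ = m * _
  ring

set_option maxHeartbeats 800000 in
lemma Sol.low {lam p T : ℝ} {u v : E → ℝ} (h : Sol μ lam p u v) (hlam : 0 < lam)
    (hp1 : 1 ≤ p) (hp : lam / 2 * p = Module.finrank ℝ E - lam / 2) (hT : 0 < T)
    (hv : ∀ z ∈ kOut T, kT lam T v z ≤ v z) (hne : ∃ w ∈ kOut T, kT lam T v w < v w) :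
    kLow lam T u := by
  intro δ hδ
  obtain ⟨w0, hw0, hlt⟩ := hne
  have hw0p := kOut_ne hT.le hw0
  have hw0' : T < ‖w0‖ ^ 2 := hw0
  set F : E → ℝ := fun w => v w ^ p - kT lam T v w ^ p with hF
  have cF : ContinuousAt F w0 := by
    refine ContinuousAt.sub ?_ ?_
    · exact h.cv.continuousAt.rpow_const (Or.inl (h.pv _).ne')
    · exact (kT_cont h.cv hT hw0p).rpow_const (Or.inl (kT_pos hT h.pv hw0p).ne')
  have hF0 : 0 < F w0 := sub_pos.2
    (Real.rpow_lt_rpow (kT_pos hT h.pv hw0p).le hlt (by linarith))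
  set c0 := F w0 / 2
  have hc0 : 0 < c0 := by positivity
  set η := (‖w0‖ ^ 2 - T) / 2
  have hη : 0 < η := by simp only [η]; linarith
  set R := ‖w0‖ + 1
  have ev : ∀ᶠ w in nhds w0, c0 < F w ∧ T + η < ‖w‖ ^ 2 ∧ ‖w‖ < R := by
    refine (continuousAt_const.eventually_lt cF (by simp only [c0]; linarith)).and
      (Filter.Eventually.and ?_ ?_)
    · exact continuousAt_const.eventually_lt (continuous_norm.pow 2).continuousAt
        (by simp only [η]; linarith)
    · exact continuous_norm.continuousAt.eventually_lt continuousAt_const (by simp [R])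
  obtain ⟨ρ, hρ, hball⟩ := Metric.eventually_nhds_iff_ball.1 ev
  set b : ℝ := 2 + 2 * R ^ 2 / T
  have hb : 0 < b := by positivity
  set d : ℝ := δ / (T + δ) * η / T
  have hd : 0 < d := by positivity
  set e := d / b
  have he : 0 < e := by positivity
  set s := lam / 2 with hs
  have hs0 : 0 < s := by positivity
  have hg : 0 < 1 - (1 + e) ^ (-s) := by
    have := Real.rpow_lt_one_of_one_lt_of_neg (x := 1 + e) (z := -s) (by linarith) (by linarith)
    linarith
  set m := μ.real (Metric.ball w0 ρ)
  have hm : 0 < m := ENNReal.toReal_pos (Metric.measure_ball_pos μ w0 hρ).ne'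
    measure_ball_lt_top.ne
  refine ⟨c0 * (1 - (1 + e) ^ (-s)) * b ^ (-s) * m, by positivity, fun z hz => ?_⟩
  have hzo : z ∈ kOut T := show T < ‖z‖ ^ 2 by linarith
  have hz0 := kOut_ne hT.le hzo
  obtain ⟨i1, e1⟩ := h.rep hT hp hzo
  rw [← hs] at i1 e1
  rw [← le_sub_iff_add_le', e1]
  have hsub : Metric.ball w0 ρ ⊆ kOut T := fun w hw => by
    have := (hball w hw).2.1
    change T < ‖w‖ ^ 2
    linarith
  -- kernel facts
  have hker : ∀ w ∈ kOut T, w ≠ z → ‖z - w‖ ^ 2 ≤ kq T z w ∧ 0 < ‖z - w‖ := by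
    intro w hw hwz
    have hw1 : T < ‖w‖ ^ 2 := hw
    have hpos : 0 < ‖z - w‖ := norm_pos_iff.2 (sub_ne_zero.2 hwz.symm)
    refine ⟨?_, hpos⟩
    have := kq_sub hT z w
    have h3 : 0 ≤ (‖z‖ ^ 2 - T) * (‖w‖ ^ 2 - T) / T :=
      div_nonneg (mul_nonneg (by linarith) (by linarith)) hT.le
    linarith
  have h1 : ∫ w in Metric.ball w0 ρ, ((‖z - w‖ ^ 2) ^ (-s) - (kq T z w) ^ (-s)) *
      (v w ^ p - kT lam T v w ^ p) ∂μ ≤ ∫ w in kOut T, ((‖z - w‖ ^ 2) ^ (-s) - (kq T z w) ^ (-s)) *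
      (v w ^ p - kT lam T v w ^ p) ∂μ := by
    refine setIntegral_mono_set i1 ?_ hsub.eventuallyLE
    have hz' : ∀ᵐ w ∂(μ.restrict (kOut T)), w ≠ z := by
      refine ae_restrict_of_ae ?_
      exact measure_eq_zero_iff_ae_notMem.1 (measure_singleton z)
    filter_upwards [hz', ae_restrict_mem (kOut_meas T)] with w hwz hw
    obtain ⟨k1, k2⟩ := hker w hw hwz
    have k3 := kern_le hs0 (by positivity) k1
    have k4 := Real.rpow_le_rpow (kT_pos (lam := lam) hT h.pv (kOut_ne hT.le hw)).le (hv w hw)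
      (by linarith : 0 ≤ p)
    exact mul_nonneg (sub_nonneg.2 k3) (sub_nonneg.2 k4)
  refine le_trans ?_ h1
  have h2 : ∫ w in Metric.ball w0 ρ, ((1 - (1 + e) ^ (-s)) * (b ^ (-s) * (‖z‖ ^ 2) ^ (-s))) * c0 ∂μ ≤
      ∫ w in Metric.ball w0 ρ, ((‖z - w‖ ^ 2) ^ (-s) - (kq T z w) ^ (-s)) *
      (v w ^ p - kT lam T v w ^ p) ∂μ := by
    refine integral_mono_ae (integrableOn_const measure_ball_lt_top.ne) (i1.mono_set hsub) ?_
    have hz' : ∀ᵐ w ∂(μ.restrict (Metric.ball w0 ρ)), w ≠ z := by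
      refine ae_restrict_of_ae ?_
      exact measure_eq_zero_iff_ae_notMem.1 (measure_singleton z)
    filter_upwards [hz', ae_restrict_mem measurableSet_ball] with w hwz hw
    obtain ⟨g1, g2, g3⟩ := hball w hw
    obtain ⟨k1, k2⟩ := hker w (hsub hw) hwz
    rw [← Real.mul_rpow hb.le (by positivity)]
    have a2 : ‖z - w‖ ^ 2 ≤ b * ‖z‖ ^ 2 := by
      have b1 := norm_sub_le z w
      have b2 : 1 ≤ ‖z‖ ^ 2 / T := by rw [one_le_div hT]; linarith
      have b3 : b * ‖z‖ ^ 2 = 2 * ‖z‖ ^ 2 + 2 * R ^ 2 * (‖z‖ ^ 2 / T) := by simp only [b]; ring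
      rw [b3]
      have b4 : 2 * R ^ 2 * 1 ≤ 2 * R ^ 2 * (‖z‖ ^ 2 / T) := by gcongr
      nlinarith [sq_nonneg (‖z‖ - R), norm_nonneg w, norm_nonneg z]
    have a3 := kern_le hs0 (by positivity) a2
    have a4 : (1 + e) * ‖z - w‖ ^ 2 ≤ kq T z w := by
      have q1 := kq_sub hT z w
      have q2 : e * ‖z - w‖ ^ 2 ≤ d * ‖z‖ ^ 2 := by
        calc e * ‖z - w‖ ^ 2 ≤ e * (b * ‖z‖ ^ 2) := by gcongr
          _ = d * ‖z‖ ^ 2 := by simp only [e]; field_simp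
      have q3 : δ / (T + δ) * ‖z‖ ^ 2 ≤ ‖z‖ ^ 2 - T := by
        rw [div_mul_eq_mul_div, div_le_iff₀ (by positivity)]; nlinarith
      have q4 : d * ‖z‖ ^ 2 ≤ (‖z‖ ^ 2 - T) * (‖w‖ ^ 2 - T) / T := by
        calc d * ‖z‖ ^ 2 = (δ / (T + δ) * ‖z‖ ^ 2) * η / T := by simp only [d]; ring
          _ ≤ (‖z‖ ^ 2 - T) * (‖w‖ ^ 2 - T) / T := by
            have hh : η ≤ ‖w‖ ^ 2 - T := by linarith
            have hh2 : 0 ≤ ‖z‖ ^ 2 - T := by linarith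
            gcongr
      linarith
    have a5 := kern_le hs0 (by positivity) a4
    rw [Real.mul_rpow (by positivity) (by positivity)] at a5
    have a6 : (1 - (1 + e) ^ (-s)) * (b * ‖z‖ ^ 2) ^ (-s) ≤
        (‖z - w‖ ^ 2) ^ (-s) - (kq T z w) ^ (-s) := by
      refine (mul_le_mul_of_nonneg_left a3 hg.le).trans ?_
      linarith
    have a7 : 0 ≤ (1 - (1 + e) ^ (-s)) * (b * ‖z‖ ^ 2) ^ (-s) := by positivity
    exact mul_le_mul a6 g1.le hc0.le (a7.trans a6)
  refine le_trans (le_of_eq ?_) h2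
  rw [setIntegral_const, smul_eq_mul]
  change _ = m * _
  ring

end Moving2

section Moving3

variable {E : Type*} [NormedAddCommGroup E] [InnerProductSpace ℝ E]
variable [FiniteDimensional ℝ E] [MeasurableSpace E] [BorelSpace E] {μ : Measure E}
  [μ.IsAddHaarMeasure]

lemma kT_ray {lam s r : ℝ} (hs : 0 < s) (hr : 0 < r) (u : E → ℝ) {ω : E} (hω : 0 < ‖ω‖) :
    kT lam (r * s * ‖ω‖ ^ 2) u (r • ω) = (s / r) ^ (lam / 2) * u (s • ω) := by
  have e : r * s * ‖ω‖ ^ 2 / ‖r • ω‖ ^ 2 = s / r := by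
    rw [norm_smul, Real.norm_of_nonneg hr.le]; field_simp
  rw [kT, kJ, e, smul_smul]
  congr 3; field_simp

lemma mem_kOut_ray {s r : ℝ} (hs : 0 < s) (hr : s < r) {ω : E} (hω : 0 < ‖ω‖) :
    r • ω ∈ kOut (r * s * ‖ω‖ ^ 2) := by
  change r * s * ‖ω‖ ^ 2 < ‖r • ω‖ ^ 2
  rw [norm_smul, Real.norm_of_nonneg (by linarith), mul_pow]
  have : r * s < r ^ 2 := by nlinarith
  gcongr

lemma no_infinite [Nontrivial E] {lam q : ℝ} {u : E → ℝ} (cu : Continuous u) (pu : ∀ x, 0 < u x)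
    (hlam : 0 < lam) (hq : lam / 2 * q = Module.finrank ℝ E) (hq0 : 0 < q)
    (hint : ∫⁻ y, ENNReal.ofReal (u y ^ q) ∂μ < ⊤)
    (hg : ∀ t : ℝ, 0 < t → ∀ z ∈ kOut t, kT lam t u z ≤ u z) : False := by
  set F : E → ℝ≥0∞ := fun y => ENNReal.ofReal (u y ^ q) with hF
  have mF : Measurable F := by
    have : Measurable u := cu.measurable
    fun_prop
  set N := Module.finrank ℝ E with hN
  have hdbl : ∀ z : E, 1 ≤ ‖z‖ → F z ≤ ENNReal.ofReal (2 ^ N) * F ((2 : ℝ) • z) := by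
    intro z hz
    have hz0 : 0 < ‖z‖ := by linarith
    have h1 := hg (2 * 1 * ‖z‖ ^ 2) (by positivity) ((2 : ℝ) • z)
      (mem_kOut_ray one_pos (by norm_num) hz0)
    rw [kT_ray one_pos two_pos u hz0, one_smul] at h1
    rw [hF, ← ENNReal.ofReal_mul (by positivity)]
    apply ENNReal.ofReal_le_ofReal
    have h2 := Real.rpow_le_rpow (mul_nonneg (by positivity) (pu z).le) h1 hq0.le
    rw [Real.mul_rpow (by positivity) (pu z).le, ← Real.rpow_mul (by positivity), hq,
      Real.rpow_natCast] at h2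
    have h3 := mul_le_mul_of_nonneg_left h2 (by positivity : (0:ℝ) ≤ 2 ^ N)
    rw [← mul_assoc, ← mul_pow] at h3
    norm_num at h3
    exact h3
  set A : Set E := {z | 1 ≤ ‖z‖}
  set B : Set E := {z | 2 ≤ ‖z‖}
  have mA : MeasurableSet A := (isClosed_le continuous_const continuous_norm).measurableSet
  have mB : MeasurableSet B := (isClosed_le continuous_const continuous_norm).measurableSet
  have hpre : (fun z : E => (2 : ℝ) • z) ⁻¹' B = A := by
    ext z
    change 2 ≤ ‖(2 : ℝ) • z‖ ↔ 1 ≤ ‖z‖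
    rw [norm_smul]; norm_num
  have hscale : ∫⁻ z in A, F ((2 : ℝ) • z) ∂μ = ENNReal.ofReal ((2 ^ N)⁻¹) * ∫⁻ y in B, F y ∂μ := by
    have h1 := setLIntegral_map (μ := μ) (g := fun z : E => (2 : ℝ) • z) mB mF
      (measurable_const_smul (2 : ℝ))
    rw [hpre] at h1
    rw [← h1, Measure.map_addHaar_smul μ two_ne_zero, Measure.restrict_smul, lintegral_smul_measure,
      abs_of_pos (by positivity), smul_eq_mul]
  have hle : ∫⁻ z in A, F z ∂μ ≤ ∫⁻ y in B, F y ∂μ := by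
    calc ∫⁻ z in A, F z ∂μ ≤ ∫⁻ z in A, ENNReal.ofReal (2 ^ N) * F ((2 : ℝ) • z) ∂μ :=
          setLIntegral_mono' mA (fun z hz => hdbl z hz)
      _ = ENNReal.ofReal (2 ^ N) * ∫⁻ z in A, F ((2 : ℝ) • z) ∂μ :=
          lintegral_const_mul' _ _ ENNReal.ofReal_ne_top
      _ = ∫⁻ y in B, F y ∂μ := by
          rw [hscale, ← mul_assoc, ← ENNReal.ofReal_mul (by positivity),
            mul_inv_cancel₀ (by positivity), ENNReal.ofReal_one, one_mul]
  have hBA : B ⊆ A := fun z hz => by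
    change 1 ≤ ‖z‖
    have : 2 ≤ ‖z‖ := hz
    linarith
  have hsplit := lintegral_inter_add_sdiff (μ := μ) F A mB
  rw [Set.inter_eq_self_of_subset_right hBA] at hsplit
  have hBfin : ∫⁻ y in B, F y ∂μ ≠ ⊤ := ((setLIntegral_le_lintegral _ _).trans_lt hint).ne
  have hzero : ∫⁻ y in A \ B, F y ∂μ = 0 := by
    rw [← hsplit] at hle
    by_contra hne
    have := ENNReal.lt_add_right hBfin hne
    exact absurd hle (not_le.2 this)
  have hpos : 0 < ∫⁻ y in A \ B, F y ∂μ := by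
    rw [setLIntegral_pos_iff mF]
    obtain ⟨x, hx⟩ := exists_norm_eq E (by norm_num : (0:ℝ) ≤ 3 / 2)
    refine (Metric.measure_ball_pos μ x (by norm_num : (0:ℝ) < 1 / 4)).trans_le (measure_mono ?_)
    intro y hy
    rw [mem_ball_iff_norm] at hy
    have h1 := abs_norm_sub_norm_le y x
    rw [hx] at h1
    have h2 := abs_le.1 h1
    refine ⟨?_, ?_, ?_⟩
    · have : 0 < u y ^ q := Real.rpow_pos_of_pos (pu y) _
      simpa [hF] using this
    · change 1 ≤ ‖y‖; linarith
    · change ¬ 2 ≤ ‖y‖; rw [not_le]; linarith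
  exact hpos.ne' hzero

variable [Nontrivial E]

theorem Sol.sphere {lam p : ℝ} {u v : E → ℝ} (h : Sol μ lam p u v) (hlam : 0 < lam)
    (hp1 : 1 ≤ p) (hp : lam / 2 * p = Module.finrank ℝ E - lam / 2)
    (hint : ∫⁻ y, ENNReal.ofReal (u y ^ (p + 1)) ∂μ < ⊤) :
    ∃ T : ℝ, 0 < T ∧ (∀ t, 0 < t → t ≤ T → kGood lam t u v) ∧
      ∀ z ∈ kOut T, kT lam T u z = u z ∧ kT lam T v z = v z := by
  set A : Set ℝ := {τ | 0 < τ ∧ ∀ t, 0 < t → t ≤ τ → kGood lam t u v} with hA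
  obtain ⟨ε0, hε0, h0⟩ := h.extend hlam hp1 hp le_rfl (h.low_zero hlam hp1)
    (h.symm.low_zero hlam hp1)
  have hne : A.Nonempty := ⟨ε0 / 2, by positivity, fun t h1 h2 => h0 t h1 (by linarith)⟩
  have hbdd : BddAbove A := by
    by_contra hb
    rw [not_bddAbove_iff] at hb
    refine no_infinite (μ := μ) (lam := lam) (q := p + 1) h.cu h.pu hlam (by linarith) (by linarith)
      hint (fun t ht z hz => ?_)
    obtain ⟨τ, hτ, hlt⟩ := hb t
    exact (hτ.2 t ht hlt.le z hz).1
  set T := sSup A with hT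
  have hTpos : 0 < T := by
    obtain ⟨τ, hτ⟩ := hne
    exact hτ.1.trans_le (le_csSup hbdd hτ)
  have hlt : ∀ t, 0 < t → t < T → kGood lam t u v := by
    intro t ht htT
    obtain ⟨τ, hτ, h1⟩ := exists_lt_of_lt_csSup hne htT
    exact hτ.2 t ht h1.le
  have hlim : ∀ f : E → ℝ, Continuous f → (∀ t, 0 < t → t < T → ∀ z ∈ kOut t, kT lam t f z ≤ f z) →
      ∀ z ∈ kOut T, kT lam T f z ≤ f z := by
    intro f cf H z hz
    have hz1 : T < ‖z‖ ^ 2 := hz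
    have c := ((kT_cont_t hlam cf z).continuousAt (x := T)).tendsto.mono_left
      (nhdsWithin_le_nhds (s := Set.Iio T))
    refine le_of_tendsto c ?_
    filter_upwards [Ioo_mem_nhdsLT hTpos] with t ht
    exact H t ht.1 ht.2 z (show t < ‖z‖ ^ 2 from ht.2.trans hz1)
  have hgT : kGood lam T u v := fun z hz =>
    ⟨hlim u h.cu (fun t h1 h2 z hz => (hlt t h1 h2 z hz).1) z hz,
     hlim v h.cv (fun t h1 h2 z hz => (hlt t h1 h2 z hz).2) z hz⟩
  have hall : ∀ t, 0 < t → t ≤ T → kGood lam t u v := by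
    intro t h1 h2
    rcases h2.lt_or_eq with h3 | h3
    · exact hlt t h1 h3
    · rw [h3]; exact hgT
  refine ⟨T, hTpos, hall, ?_⟩
  -- the two implications between strictness
  have huv : (∃ w ∈ kOut T, kT lam T v w < v w) → ∃ w ∈ kOut T, kT lam T u w < u w := by
    intro hs
    obtain ⟨c, hc, H⟩ := h.low hlam hp1 hp hTpos (fun z hz => (hgT z hz).2) hs 1 one_pos
    obtain ⟨x, hx⟩ := exists_norm_eq E (by positivity : (0:ℝ) ≤ T + 1)
    have hx2 : T + 1 ≤ ‖x‖ ^ 2 := by rw [hx]; nlinarith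
    refine ⟨x, show T < ‖x‖ ^ 2 by linarith, lt_of_lt_of_le ?_ (H x hx2)⟩
    have : 0 < ‖x‖ := by rw [hx]; positivity
    have : 0 < c * (‖x‖ ^ 2) ^ (-(lam / 2)) := by positivity
    linarith
  have hvu : (∃ w ∈ kOut T, kT lam T u w < u w) → ∃ w ∈ kOut T, kT lam T v w < v w := by
    intro hs
    obtain ⟨c, hc, H⟩ := h.symm.low hlam hp1 hp hTpos (fun z hz => (hgT z hz).1) hs 1 one_pos
    obtain ⟨x, hx⟩ := exists_norm_eq E (by positivity : (0:ℝ) ≤ T + 1)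
    have hx2 : T + 1 ≤ ‖x‖ ^ 2 := by rw [hx]; nlinarith
    refine ⟨x, show T < ‖x‖ ^ 2 by linarith, lt_of_lt_of_le ?_ (H x hx2)⟩
    have : 0 < ‖x‖ := by rw [hx]; positivity
    have : 0 < c * (‖x‖ ^ 2) ^ (-(lam / 2)) := by positivity
    linarith
  have hno : ¬ ∃ w ∈ kOut T, kT lam T v w < v w := by
    intro hs
    obtain ⟨ε, hε, H⟩ := h.extend hlam hp1 hp hTpos.le
      (h.low hlam hp1 hp hTpos (fun z hz => (hgT z hz).2) hs)
      (h.symm.low hlam hp1 hp hTpos (fun z hz => (hgT z hz).1) (huv hs))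
    have hmem : T + ε / 2 ∈ A := by
      refine ⟨by positivity, fun t h1 h2 => ?_⟩
      rcases le_or_gt t T with h3 | h3
      · exact hall t h1 h3
      · exact H t h3 (by linarith)
    have := le_csSup hbdd hmem
    linarith
  intro z hz
  refine ⟨le_antisymm (hgT z hz).1 ?_, le_antisymm (hgT z hz).2 ?_⟩
  · by_contra hc
    exact hno (hvu ⟨z, hz, not_le.1 hc⟩)
  · by_contra hc
    exact hno ⟨z, hz, not_le.1 hc⟩

end Moving3

section OneDim
open Filter Topology

/-- The one-dimensional functional equation. -/
lemma one_dim {φ : ℝ → ℝ} (pos : ∀ t, 0 < φ t)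
    (fe : ∀ t s, φ t < s ^ 2 → φ (t + s) * φ t = s ^ 2 * φ (t + φ t / s))
    {a : ℝ} (ha : 0 < a) (mono : MonotoneOn (fun r => r / φ r) (Set.Ioo 0 a)) :
    ∃ B : ℝ, ∀ t, φ t = t ^ 2 + B * t + φ 0 := by
  -- a point of differentiability
  obtain ⟨t1, ht1, d, hd⟩ : ∃ t1, 0 < t1 ∧ ∃ d, HasDerivAt φ d t1 := by
    have h1 := mono.ae_differentiableWithinAt measurableSet_Ioo
    have : NeBot (ae (volume.restrict (Set.Ioo 0 a))) := by
      rw [ae_neBot, Ne, Measure.restrict_eq_zero, Real.volume_Ioo]; simpa using ha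
    obtain ⟨t1, h2, h3⟩ := (h1.and (ae_restrict_mem measurableSet_Ioo)).exists
    have h4 : DifferentiableAt ℝ (fun r => r / φ r) t1 :=
      h2.differentiableAt (Ioo_mem_nhds h3.1 h3.2)
    have h5 : DifferentiableAt ℝ (fun r => r / (r / φ r)) t1 :=
      differentiableAt_id.div h4 (div_pos h3.1 (pos _)).ne'
    have h6 : (fun r => r / (r / φ r)) =ᶠ[𝓝 t1] φ := by
      filter_upwards [Ioi_mem_nhds h3.1] with r hr
      have hr0 : (0:ℝ) < r := hr
      have := pos r
      field_simp
    exact ⟨t1, h3.1, _, (h5.congr_of_eventuallyEq h6.symm).hasDerivAt⟩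
  -- slope versus behaviour at infinity
  have big : ∀ t, ∀ᶠ s in Bornology.cobounded ℝ, φ t < s ^ 2 := by
    intro t
    have := (tendsto_pow_atTop (two_ne_zero)).comp (tendsto_norm_cobounded_atTop (E := ℝ))
    filter_upwards [this.eventually_gt_atTop (φ t)] with s hs
    simpa using hs
  have quot : ∀ t s, φ t < s ^ 2 → (φ (t + φ t / s) - φ t) / (φ t / s) = (φ (t + s) - s ^ 2) / s := by
    intro t s hs
    have h1 := fe t s hs
    have h2 := pos t
    have hs0 : s ≠ 0 := by rintro rfl; norm_num at hs; linarith
    have h3 : φ (t + φ t / s) = φ (t + s) * φ t / s ^ 2 := by rw [h1]; field_simp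
    rw [h3]; field_simp
  have scale_inf : ∀ c : ℝ, 0 < c → Tendsto (fun s : ℝ => c / s) (Bornology.cobounded ℝ) (𝓝[≠] 0) := by
    intro c hc
    have h1 : Tendsto (fun s : ℝ => s⁻¹) (Bornology.cobounded ℝ) (𝓝[≠] 0) := by
      refine tendsto_nhdsWithin_iff.2 ⟨tendsto_inv₀_cobounded, ?_⟩
      filter_upwards [Bornology.eventually_ne_cobounded (0:ℝ)] with s hs
      exact inv_ne_zero hs
    refine tendsto_nhdsWithin_iff.2 ⟨?_, ?_⟩
    · have := (h1.mono_right nhdsWithin_le_nhds).const_mul c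
      simpa [div_eq_mul_inv] using this
    · filter_upwards [(tendsto_nhdsWithin_iff.1 h1).2] with s hs
      have hs' : s⁻¹ ≠ 0 := hs
      change c / s ≠ 0
      rw [div_eq_mul_inv]
      exact mul_ne_zero hc.ne' hs'
  have shift : ∀ c : ℝ, Tendsto (fun s : ℝ => s + c) (Bornology.cobounded ℝ) (Bornology.cobounded ℝ) := by
    intro c
    rw [← tendsto_norm_atTop_iff_cobounded]
    refine tendsto_atTop_mono (f := fun s : ℝ => ‖s‖ + (-‖c‖)) (fun s => ?_)
      (tendsto_atTop_add_const_right _ _ tendsto_norm_cobounded_atTop)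
    have := norm_sub_le (s + c) c
    simp only [add_sub_cancel_right] at this
    linarith
  have ratio : ∀ c : ℝ, Tendsto (fun s : ℝ => s / (s + c)) (Bornology.cobounded ℝ) (𝓝 1) := by
    intro c
    have h1 : Tendsto (fun s : ℝ => (s + c)⁻¹) (Bornology.cobounded ℝ) (𝓝 0) :=
      tendsto_inv₀_cobounded.comp (shift c)
    have h2 := (h1.const_mul c).const_sub 1
    rw [mul_zero, sub_zero] at h2
    refine h2.congr' ?_
    have h3 : ∀ᶠ s : ℝ in Bornology.cobounded ℝ, s + c ≠ 0 :=
      (shift c).eventually (Bornology.eventually_ne_cobounded 0)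
    filter_upwards [h3] with s hs
    field_simp; ring
  set B := d - 2 * t1 with hB
  -- behaviour at infinity about any base point
  have base : ∀ t, Tendsto (fun s => (φ (t + s) - s ^ 2) / s) (Bornology.cobounded ℝ) (𝓝 (2 * t + B)) := by
    intro t
    have h1 : Tendsto (fun s => (φ (t1 + s) - s ^ 2) / s) (Bornology.cobounded ℝ) (𝓝 d) := by
      have h2 := hd.tendsto_slope_zero.comp (scale_inf (φ t1) (pos t1))
      refine h2.congr' ?_
      filter_upwards [big t1] with s hs
      rw [← quot t1 s hs]
      simp only [Function.comp, smul_eq_mul]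
      ring
    have h2 := h1.comp (shift (t - t1))
    set c := t - t1 with hc
    have h3 := ((h2.add_const (2 * c)).sub
      (((tendsto_inv₀_cobounded (α := ℝ)).comp (shift c)).const_mul (c ^ 2))).mul
      ((ratio c).inv₀ one_ne_zero)
    have e : (d + 2 * c - c ^ 2 * 0) * 1⁻¹ = 2 * t + B := by rw [hB, hc]; ring
    rw [e] at h3
    refine h3.congr' ?_
    have h5 : ∀ᶠ s : ℝ in Bornology.cobounded ℝ, s + c ≠ 0 :=
      (shift c).eventually (Bornology.eventually_ne_cobounded 0)
    filter_upwards [h5, Bornology.eventually_ne_cobounded 0] with s hs hs0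
    simp only [Function.comp]
    rw [show t1 + (s + c) = t + s by rw [hc]; ring]
    field_simp; ring
  have deriv_all : ∀ t, HasDerivAt φ (2 * t + B) t := by
    intro t
    rw [hasDerivAt_iff_tendsto_slope_zero]
    -- substitute s = φ t / τ
    have h1 : Tendsto (fun τ : ℝ => φ t / τ) (𝓝[≠] 0) (Bornology.cobounded ℝ) := by
      have h2 : Tendsto (fun τ : ℝ => τ⁻¹) (𝓝[≠] 0) (Bornology.cobounded ℝ) :=
        tendsto_inv₀_nhdsNE_zero
      rw [← tendsto_norm_atTop_iff_cobounded] at h2 ⊢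
      have h3 := h2.const_mul_atTop (pos t)
      refine h3.congr (fun τ => ?_)
      rw [div_eq_mul_inv, norm_mul, Real.norm_of_nonneg (pos t).le]
    have h2 := (base t).comp h1
    refine h2.congr' ?_
    filter_upwards [h1.eventually (big t), self_mem_nhdsWithin] with τ h3 h4
    have h4' : τ ≠ 0 := h4
    have h5 := pos t
    simp only [Function.comp]
    rw [← quot t _ h3, show φ t / (φ t / τ) = τ by field_simp, smul_eq_mul]
    ring
  refine ⟨B, fun t => ?_⟩
  have hconst : ∀ x y, (fun t => φ t - t ^ 2 - B * t) x = (fun t => φ t - t ^ 2 - B * t) y := by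
    have hh : ∀ t, HasDerivAt (fun t => φ t - t ^ 2 - B * t) 0 t := by
      intro t
      have := ((deriv_all t).sub (hasDerivAt_pow 2 t)).sub ((hasDerivAt_id t).const_mul B)
      exact this.congr_deriv (by simp)
    exact is_const_of_deriv_eq_zero (fun t => (hh t).differentiableAt) (fun t => (hh t).deriv)
  have := hconst t 0
  simp at this
  linarith

end OneDim

section Classify
open Filter Topology

variable {E : Type*} [NormedAddCommGroup E] [InnerProductSpace ℝ E]
variable [FiniteDimensional ℝ E] [MeasurableSpace E] [BorelSpace E] {μ : Measure E}
  [μ.IsAddHaarMeasure]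

lemma quad_of_lines {h : E → ℝ} (ch : Continuous h)
    (hl : ∀ x ω : E, ‖ω‖ = 1 → ∃ B : ℝ, ∀ t : ℝ, h (x + t • ω) = t ^ 2 + B * t + h x) :
    ∃ (X0 : E) (c : ℝ), ∀ y, h y = ‖y - X0‖ ^ 2 + c := by
  have h1 : ∀ m d : E, h (m + d) + h (m - d) = 2 * ‖d‖ ^ 2 + 2 * h m := by
    intro m d
    by_cases hd : d = 0
    · subst hd; simp; ring
    have hd0 : 0 < ‖d‖ := norm_pos_iff.2 hd
    obtain ⟨B, hB⟩ := hl m (‖d‖⁻¹ • d) (by rw [norm_smul, norm_inv, norm_norm]; field_simp)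
    have e1 := hB ‖d‖
    have e2 := hB (-‖d‖)
    rw [smul_smul, mul_inv_cancel₀ hd0.ne', one_smul] at e1
    rw [smul_smul, neg_mul, mul_inv_cancel₀ hd0.ne', neg_smul, one_smul, ← sub_eq_add_neg] at e2
    rw [e1, e2]; ring
  set q : E → ℝ := fun y => h y - ‖y‖ ^ 2 with hq
  have hmid : ∀ x y, q (midpoint ℝ x y) = midpoint ℝ (q x) (q y) := by
    intro x y
    have e1 := h1 (midpoint ℝ x y) ((1 / 2 : ℝ) • (y - x))
    have ey : midpoint ℝ x y + (1 / 2 : ℝ) • (y - x) = y := by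
      rw [midpoint_eq_smul_add, invOf_eq_inv]; module
    have ex : midpoint ℝ x y - (1 / 2 : ℝ) • (y - x) = x := by
      rw [midpoint_eq_smul_add, invOf_eq_inv]; module
    rw [ex, ey] at e1
    have e2 := parallelogram_law_with_norm ℝ (midpoint ℝ x y) ((1 / 2 : ℝ) • (y - x))
    rw [ex, ey] at e2
    rw [midpoint_eq_smul_add ℝ (q x), invOf_eq_inv, smul_eq_mul, hq]
    dsimp only
    nlinarith
  set f := AffineMap.ofMapMidpoint q hmid (by fun_prop)
  have hf : ∀ y, q y = f.linear y + q 0 := by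
    intro y
    have := f.map_vadd 0 y
    have h2 : f y = f.linear y + f 0 := by simpa using this
    exact h2
  set L : E →L[ℝ] ℝ := LinearMap.toContinuousLinearMap f.linear
  set w := (InnerProductSpace.toDual ℝ E).symm L
  have hw : ∀ y, f.linear y = inner ℝ w y := by
    intro y
    have : inner ℝ w y = L y := InnerProductSpace.toDual_symm_apply
    rw [this]; rfl
  refine ⟨-((1 / 2 : ℝ) • w), q 0 - ‖(1 / 2 : ℝ) • w‖ ^ 2, fun y => ?_⟩
  have e := hf y
  rw [hw] at e
  have e3 : h y = q y + ‖y‖ ^ 2 := by rw [hq]; ring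
  rw [e3, e, sub_neg_eq_add, norm_add_sq_real, inner_smul_right, real_inner_comm]
  ring

lemma kelvin_lim {lam T : ℝ} {u : E → ℝ} (cu : Continuous u) (hT : 0 < T)
    (he : ∀ z ∈ kOut T, kT lam T u z = u z) :
    Tendsto (fun z => (‖z‖ ^ 2) ^ (lam / 2) * u z) (Bornology.cobounded E)
      (𝓝 (T ^ (lam / 2) * u 0)) := by
  have hn := tendsto_norm_cobounded_atTop (E := E)
  have h0 : ∀ᶠ z in Bornology.cobounded E, 0 < ‖z‖ := hn.eventually_gt_atTop 0
  have h1 : Tendsto (fun z : E => kJ T z) (Bornology.cobounded E) (𝓝 0) := by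
    rw [tendsto_zero_iff_norm_tendsto_zero]
    have h2 : Tendsto (fun z : E => T / ‖z‖) (Bornology.cobounded E) (𝓝 0) :=
      hn.const_div_atTop T
    refine h2.congr' ?_
    filter_upwards [h0] with z hz
    rw [kJ_norm hT.le hz]
  have h2 := ((cu.tendsto 0).comp h1).const_mul (T ^ (lam / 2))
  refine h2.congr' ?_
  have h3 : ∀ᶠ z in Bornology.cobounded E, T < ‖z‖ ^ 2 :=
    ((tendsto_pow_atTop (two_ne_zero)).comp hn).eventually_gt_atTop T
  filter_upwards [h0, h3] with z hz hz3
  rw [← he z hz3, kT, ← mul_assoc, ← Real.mul_rpow (by positivity) (by positivity)]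
  congr 2
  field_simp

lemma shift_lim {lam A : ℝ} {u : E → ℝ}
    (hA : Tendsto (fun z => (‖z‖ ^ 2) ^ (lam / 2) * u z) (Bornology.cobounded E) (𝓝 A)) (x : E) :
    Tendsto (fun z => (‖z‖ ^ 2) ^ (lam / 2) * u (x + z)) (Bornology.cobounded E) (𝓝 A) := by
  have hn := tendsto_norm_cobounded_atTop (E := E)
  have hs : Tendsto (fun z : E => x + z) (Bornology.cobounded E) (Bornology.cobounded E) := by
    rw [← tendsto_norm_atTop_iff_cobounded]
    refine tendsto_atTop_mono (f := fun s : E => ‖s‖ + (-‖x‖)) (fun s => ?_)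
      (tendsto_atTop_add_const_right _ _ hn)
    have := norm_sub_le (x + s) x
    simp only [add_sub_cancel_left] at this
    linarith
  have h0 : ∀ᶠ z in Bornology.cobounded E, 0 < ‖z‖ := hn.eventually_gt_atTop 0
  have hr : Tendsto (fun z : E => ‖z‖ / ‖x + z‖) (Bornology.cobounded E) (𝓝 1) := by
    have h1 : Tendsto (fun z : E => ‖x + z‖ / ‖z‖) (Bornology.cobounded E) (𝓝 1) := by
      rw [tendsto_iff_norm_sub_tendsto_zero]
      have h2 : Tendsto (fun z : E => ‖x‖ / ‖z‖) (Bornology.cobounded E) (𝓝 0) :=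
        hn.const_div_atTop _
      refine squeeze_zero' (Eventually.of_forall fun _ => norm_nonneg _) ?_ h2
      filter_upwards [h0] with z hz
      have e : ‖x + z‖ / ‖z‖ - 1 = (‖x + z‖ - ‖z‖) / ‖z‖ := by field_simp
      rw [e, norm_div, norm_norm, Real.norm_eq_abs]
      gcongr
      have := abs_norm_sub_norm_le (x + z) z
      simpa using this
    have h2 := h1.inv₀ one_ne_zero
    simpa using h2
  have h2 := ((hr.pow 2).rpow_const (p := lam / 2) (Or.inl (by norm_num))).mul (hA.comp hs)
  simp only [one_pow, Real.one_rpow, one_mul] at h2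
  refine h2.congr' ?_
  filter_upwards [h0, hs.eventually h0] with z hz hz2
  simp only [Function.comp]
  rw [← mul_assoc, ← Real.mul_rpow (by positivity) (by positivity)]
  congr 2
  field_simp

theorem Sol.classify [Nontrivial E] {lam p : ℝ} {u v : E → ℝ} (h : Sol μ lam p u v)
    (hlam : 0 < lam) (hp1 : 1 ≤ p) (hp : lam / 2 * p = Module.finrank ℝ E - lam / 2)
    (hint : ∫⁻ y, ENNReal.ofReal (u y ^ (p + 1)) ∂μ < ⊤) :
    ∃ (A A' c : ℝ) (X0 : E), 0 < A ∧ 0 < A' ∧ 0 < c ∧ ∀ y,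
      u y = A * (‖y - X0‖ ^ 2 + c) ^ (-(lam / 2)) ∧
      v y = A' * (‖y - X0‖ ^ 2 + c) ^ (-(lam / 2)) := by
  have hS := fun x : E => (h.translate x).sphere hlam hp1 hp (by
    rw [lintegral_add_left_eq_self (fun y => ENNReal.ofReal (u y ^ (p + 1))) x]; exact hint)
  choose T hT0 hTg hTe using hS
  set A := T 0 ^ (lam / 2) * u 0 with hAd
  set A' := T 0 ^ (lam / 2) * v 0 with hAd'
  have hA0 : 0 < A := mul_pos (Real.rpow_pos_of_pos (hT0 0) _) (h.pu 0)
  have hA0' : 0 < A' := mul_pos (Real.rpow_pos_of_pos (hT0 0) _) (h.pv 0)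
  have hu : ∀ x, T x ^ (lam / 2) * u x = A := by
    have h1 := kelvin_lim (h.translate 0).cu (hT0 0) (fun z hz => (hTe 0 z hz).1)
    simp only [zero_add] at h1
    intro x
    have h2 := kelvin_lim (h.translate x).cu (hT0 x) (fun z hz => (hTe x z hz).1)
    simp only [add_zero] at h2
    exact tendsto_nhds_unique h2 (shift_lim h1 x)
  have hv : ∀ x, T x ^ (lam / 2) * v x = A' := by
    have h1 := kelvin_lim (h.translate 0).cv (hT0 0) (fun z hz => (hTe 0 z hz).2)
    simp only [zero_add] at h1
    intro x
    have h2 := kelvin_lim (h.translate x).cv (hT0 x) (fun z hz => (hTe x z hz).2)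
    simp only [add_zero] at h2
    exact tendsto_nhds_unique h2 (shift_lim h1 x)
  have hu' : ∀ x, u x = A * (T x)⁻¹ ^ (lam / 2) := by
    intro x
    have := Real.rpow_pos_of_pos (hT0 x) (lam / 2)
    rw [← hu x, Real.inv_rpow (hT0 x).le]; field_simp
  have hv' : ∀ x, v x = A' * (T x)⁻¹ ^ (lam / 2) := by
    intro x
    have := Real.rpow_pos_of_pos (hT0 x) (lam / 2)
    rw [← hv x, Real.inv_rpow (hT0 x).le]; field_simp
  have hl2 : 0 < lam / 2 := by positivity
  have cT : Continuous T := by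
    have e : T = fun x => (A / u x) ^ (lam / 2)⁻¹ := by
      funext x
      rw [← hu x, mul_div_assoc, div_self (h.pu x).ne', mul_one, Real.rpow_rpow_inv (hT0 x).le hl2.ne']
    rw [e]
    have := h.cu
    refine (continuous_const.div h.cu (fun x => (h.pu x).ne')).rpow_const (fun x => Or.inr (by positivity))
  have fe : ∀ x s : E, T x < ‖s‖ ^ 2 → T (x + s) * T x = ‖s‖ ^ 2 * T (x + kJ (T x) s) := by
    intro x s hs
    have hs0 : 0 < ‖s‖ := kOut_ne (hT0 x).le hs
    have e := (hTe x s hs).1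
    rw [kT] at e
    rw [hu' (x + kJ (T x) s), hu' (x + s), mul_left_comm,
      ← Real.mul_rpow (div_nonneg (hT0 x).le (by positivity)) (inv_nonneg.2 (hT0 _).le)] at e
    have e2 := mul_left_cancel₀ hA0.ne' e
    rw [Real.rpow_left_inj (mul_nonneg (div_nonneg (hT0 x).le (by positivity)) (inv_nonneg.2 (hT0 _).le))
      (inv_nonneg.2 (hT0 _).le) hl2.ne'] at e2
    have h1 := hT0 (x + s)
    have h2 := hT0 (x + kJ (T x) s)
    have h3 := hT0 x
    field_simp at e2
    linarith
  obtain ⟨X0, c, hc⟩ := quad_of_lines cT (by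
    intro x ω hω
    have hω0 : 0 < ‖ω‖ := by rw [hω]; exact one_pos
    obtain ⟨B, hB⟩ := one_dim (φ := fun t => T (x + t • ω)) (fun t => hT0 _) (by
      intro t s hs
      have hsn : ‖s • ω‖ ^ 2 = s ^ 2 := by rw [norm_smul, hω, mul_one, Real.norm_eq_abs, sq_abs]
      have e := fe (x + t • ω) (s • ω) (by rw [hsn]; exact hs)
      rw [kJ, hsn, smul_smul, add_assoc, add_assoc, ← add_smul, ← add_smul] at e
      rw [e]
      congr 5
      by_cases hs0 : s = 0
      · subst hs0; simp
      · field_simp) (Real.sqrt_pos.2 (hT0 x)) (by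
      intro s hs r hr hsr
      rcases hsr.eq_or_lt with hsr | hsr
      · rw [hsr]
      have hs0 : 0 < s := hs.1
      have hr0 : 0 < r := hr.1
      have hle : r * s * ‖ω‖ ^ 2 ≤ T x := by
        rw [hω, one_pow, mul_one, ← Real.mul_self_sqrt (hT0 x).le]
        have h1 := hs.2
        have h2 := hr.2
        gcongr
      have e := (hTg x (r * s * ‖ω‖ ^ 2) (by positivity) hle _ (mem_kOut_ray hs0 hsr hω0)).1
      rw [kT_ray hs0 hr0 _ hω0] at e
      dsimp only at e ⊢
      have h1 := hT0 (x + s • ω)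
      have h2 := hT0 (x + r • ω)
      rw [hu' (x + s • ω), hu' (x + r • ω), mul_left_comm, mul_le_mul_iff_right₀ hA0,
        ← Real.mul_rpow (by positivity) (by positivity),
        Real.rpow_le_rpow_iff (by positivity) (by positivity) hl2] at e
      have e2 := mul_le_mul_of_nonneg_left e hr0.le
      calc s / T (x + s • ω) = r * (s / r * (T (x + s • ω))⁻¹) := by field_simp
        _ ≤ _ := e2
        _ = _ := by field_simp)
    refine ⟨B, fun t => ?_⟩
    have := hB t
    simpa using this)
  have hc0 : 0 < c := by
    have := hT0 X0
    rw [hc] at this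
    simpa using this
  refine ⟨A, A', c, X0, hA0, hA0', hc0, fun y => ?_⟩
  rw [hu', hv', ← hc y, Real.inv_rpow (hT0 y).le, Real.rpow_neg (hT0 y).le]
  exact ⟨rfl, rfl⟩

end Classify

section Extend
open Filter Topology

variable {E : Type*} [NormedAddCommGroup E] [InnerProductSpace ℝ E]
variable [FiniteDimensional ℝ E] [MeasurableSpace E] [BorelSpace E] {μ : Measure E}
  [μ.IsAddHaarMeasure]

/-- truncated kernel -/
def kk1 (lam : ℝ) (w : E) : ℝ := (max (‖w‖ ^ 2) 1) ^ (-(lam / 2))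

/-- kernel -/
def kk (lam : ℝ) (w : E) : ℝ := (‖w‖ ^ 2) ^ (-(lam / 2))

lemma kk1_cont (lam : ℝ) : Continuous (kk1 lam : E → ℝ) := by
  unfold kk1
  refine ((continuous_norm.pow 2).max continuous_const).rpow_const (fun x => Or.inl ?_)
  have : (1:ℝ) ≤ max (‖x‖ ^ 2) 1 := le_max_right _ _
  positivity

lemma kk_meas (lam : ℝ) : Measurable (kk lam : E → ℝ) := by
  unfold kk; fun_prop

lemma kk_nonneg (lam : ℝ) (w : E) : 0 ≤ kk lam w := by unfold kk; positivity

lemma kk1_nonneg (lam : ℝ) (w : E) : 0 ≤ kk1 lam w := by unfold kk1; positivity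

lemma kk1_le {lam : ℝ} (hl : 0 < lam) {w : E} (hw : 0 < ‖w‖) : kk1 lam w ≤ kk lam w := by
  unfold kk1 kk
  exact Real.rpow_le_rpow_of_nonpos (by positivity) (le_max_left _ _) (by linarith)

lemma kk1_le_one {lam : ℝ} (hl : 0 < lam) (w : E) : kk1 lam w ≤ 1 := by
  unfold kk1
  exact Real.rpow_le_one_of_one_le_of_nonpos (le_max_right _ _) (by linarith)

lemma kk1_eq {lam : ℝ} {w : E} (hw : 1 ≤ ‖w‖) : kk1 lam w = kk lam w := by
  unfold kk1 kk
  rw [max_eq_left]; nlinarith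

lemma kk1_shift {lam : ℝ} (hl : 0 < lam) {a b : E} (hab : ‖a - b‖ ≤ 1) :
    kk1 lam a ≤ (1 / 4 : ℝ) ^ (-(lam / 2)) * kk1 lam b := by
  unfold kk1
  rw [← Real.mul_rpow (by norm_num) (by positivity)]
  refine Real.rpow_le_rpow_of_nonpos (by positivity) ?_ (by linarith)
  have h1 : ‖b‖ ≤ ‖a‖ + 1 := by
    have := norm_sub_norm_le b a
    rw [norm_sub_rev] at this; linarith
  have h2 := le_max_left (‖a‖ ^ 2) 1
  have h3 := le_max_right (‖a‖ ^ 2) 1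
  have h4 : max (‖b‖ ^ 2) 1 ≤ 4 * max (‖a‖ ^ 2) 1 := by
    refine max_le ?_ (by linarith)
    have := norm_nonneg b
    nlinarith [sq_nonneg (‖a‖ - 1)]
  linarith

lemma pot_cont {lam : ℝ} (hl : 0 < lam) {f : E → ℝ} (cf : Continuous f) (pf : ∀ x, 0 < f x)
    {D : Set E} (hD : Dense D) (hNA : ∀ z : E, ∀ᵐ y ∂μ, y ≠ z)
    (hi : ∀ z ∈ D, Integrable (fun y => f y * kk lam (z - y)) μ) :
    (∀ z, Integrable (fun y => f y * kk lam (z - y)) μ) ∧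
      Continuous (fun z => ∫ y, f y * kk lam (z - y) ∂μ) := by
  obtain ⟨z1, hz1⟩ := hD.nonempty
  have mf := cf.measurable
  have mk := kk_meas (E := E) lam
  have mk1 := (kk1_cont (E := E) lam).measurable
  -- truncated part
  have i1 : ∀ z, Integrable (fun y => f y * kk1 lam (z - y)) μ := by
    intro z
    obtain ⟨w, hw, hwD⟩ := hD.exists_mem_open Metric.isOpen_ball ⟨z, Metric.mem_ball_self one_pos⟩
    have hwz : ‖z - w‖ ≤ 1 := by
      rw [← dist_eq_norm, dist_comm]; exact (Metric.mem_ball.1 hwD).le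
    refine ((hi w hw).const_mul ((1 / 4 : ℝ) ^ (-(lam / 2)))).mono' (by fun_prop) ?_
    filter_upwards [hNA w] with y hy
    have h0 := kk1_nonneg lam (z - y)
    have hf := (pf y).le
    rw [Real.norm_of_nonneg (by positivity)]
    have h1 : kk1 lam (z - y) ≤ (1 / 4 : ℝ) ^ (-(lam / 2)) * kk1 lam (w - y) :=
      kk1_shift hl (by simpa using hwz)
    have h2 : kk1 lam (w - y) ≤ kk lam (w - y) :=
      kk1_le hl (norm_pos_iff.2 (sub_ne_zero.2 hy.symm))
    calc f y * kk1 lam (z - y) ≤ f y * ((1 / 4 : ℝ) ^ (-(lam / 2)) * kk lam (w - y)) := by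
          gcongr
          exact h1.trans (by gcongr)
      _ = _ := by ring
  have c1 : Continuous (fun z => ∫ y, f y * kk1 lam (z - y) ∂μ) := by
    rw [continuous_iff_continuousAt]
    intro z
    refine continuousAt_of_dominated
      (bound := fun y => (1 / 4 : ℝ) ^ (-(lam / 2)) * (f y * kk1 lam (z - y)))
      (Eventually.of_forall fun w => (i1 w).aestronglyMeasurable) ?_ ((i1 z).const_mul _) ?_
    · filter_upwards [Metric.ball_mem_nhds z one_pos] with w hw
      refine Eventually.of_forall fun y => ?_
      have h0 := kk1_nonneg lam (w - y)
      have hf := (pf y).le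
      rw [Real.norm_of_nonneg (by positivity)]
      have h1 : kk1 lam (w - y) ≤ (1 / 4 : ℝ) ^ (-(lam / 2)) * kk1 lam (z - y) :=
        kk1_shift hl (by simpa [← dist_eq_norm] using (Metric.mem_ball.1 hw).le)
      calc _ ≤ f y * ((1 / 4 : ℝ) ^ (-(lam / 2)) * kk1 lam (z - y)) := by gcongr
        _ = _ := by ring
    · refine Eventually.of_forall fun y => ?_
      have := kk1_cont (E := E) lam
      exact Continuous.continuousAt (by fun_prop)
  -- singular part
  set k2 : E → ℝ := fun w => kk lam w - kk1 lam w with hk2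
  have mk2 : Measurable k2 := by fun_prop
  have k2z : ∀ w : E, 1 ≤ ‖w‖ → k2 w = 0 := fun w hw => by
    rw [hk2]; dsimp only; rw [kk1_eq hw, sub_self]
  have ik2 : Integrable k2 μ := by
    obtain ⟨c, hc, hcl⟩ := exists_lower_ball cf pf (‖z1‖ + 1)
    have h1 := (hi z1 hz1).comp_sub_left z1
    simp only [_root_.sub_sub_cancel] at h1
    refine (h1.const_mul (c⁻¹)).mono' mk2.aestronglyMeasurable ?_
    filter_upwards [hNA 0] with w hw
    have hk := kk_nonneg lam w
    have hw0 : 0 < ‖w‖ := norm_pos_iff.2 hw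
    have hf := pf (z1 - w)
    rcases le_or_gt 1 ‖w‖ with h2 | h2
    · rw [k2z w h2, norm_zero]; positivity
    · have h3 := kk1_le hl hw0
      have h4 := kk1_nonneg lam w
      have h5 := hcl (z1 - w) ((norm_sub_le _ _).trans (by linarith))
      rw [Real.norm_of_nonneg (by rw [hk2]; dsimp only; linarith)]
      calc k2 w ≤ kk lam w := by rw [hk2]; dsimp only; linarith
        _ = c⁻¹ * (c * kk lam w) := by field_simp
        _ ≤ _ := by gcongr
  have bd2 : ∀ z : E, ∃ M : ℝ, 0 < M ∧ ∀ w : E, ‖w - z‖ ≤ 1 → ∀ y, ‖f (w - y) * k2 y‖ ≤ M * ‖k2 y‖ := by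
    intro z
    obtain ⟨M, hM, hb⟩ := exists_bound_ball cf (‖z‖ + 2)
    refine ⟨M, hM, fun w hw y => ?_⟩
    rcases le_or_gt 1 ‖y‖ with h2 | h2
    · rw [k2z y h2]; simp
    · rw [norm_mul, Real.norm_of_nonneg (pf _).le]
      gcongr
      apply hb
      have e : w - y = (w - z) + z - y := by abel
      have a1 := norm_sub_le ((w - z) + z) y
      have a2 := norm_add_le (w - z) z
      rw [e]; linarith
  have i2' : ∀ z, Integrable (fun y => f (z - y) * k2 y) μ := by
    intro z
    obtain ⟨M, hM, hb⟩ := bd2 z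
    refine (ik2.norm.const_mul M).mono' (by fun_prop) (Eventually.of_forall fun y => ?_)
    exact hb z (by simp) y
  have i2 : ∀ z, Integrable (fun y => f y * k2 (z - y)) μ := by
    intro z
    have := (i2' z).comp_sub_left z
    simpa only [_root_.sub_sub_cancel] using this
  have e2 : ∀ z, ∫ y, f y * k2 (z - y) ∂μ = ∫ y, f (z - y) * k2 y ∂μ := by
    intro z
    rw [← integral_sub_left_eq_self (fun y => f y * k2 (z - y)) μ z]
    simp only [_root_.sub_sub_cancel]
  have c2 : Continuous (fun z => ∫ y, f y * k2 (z - y) ∂μ) := by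
    simp only [e2]
    rw [continuous_iff_continuousAt]
    intro z
    obtain ⟨M, hM, hb⟩ := bd2 z
    refine continuousAt_of_dominated (bound := fun y => M * ‖k2 y‖)
      (Eventually.of_forall fun w => (i2' w).aestronglyMeasurable) ?_ (ik2.norm.const_mul M) ?_
    · filter_upwards [Metric.ball_mem_nhds z one_pos] with w hw
      refine Eventually.of_forall fun y => hb w ?_ y
      rw [← dist_eq_norm]; exact (Metric.mem_ball.1 hw).le
    · exact Eventually.of_forall fun y => Continuous.continuousAt (by fun_prop)
  have esum : ∀ z y, f y * kk lam (z - y) = f y * kk1 lam (z - y) + f y * k2 (z - y) := by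
    intro z y; rw [hk2]; ring
  constructor
  · intro z
    simp only [esum]
    exact (i1 z).add (i2 z)
  · have : (fun z => ∫ y, f y * kk lam (z - y) ∂μ) =
        fun z => (∫ y, f y * kk1 lam (z - y) ∂μ) + ∫ y, f y * k2 (z - y) ∂μ := by
      funext z
      simp only [esum]
      exact integral_add (i1 z) (i2 z)
    rw [this]
    exact c1.add c2

lemma pot_extend {lam : ℝ} (hl : 0 < lam) {f g : E → ℝ} (cf : Continuous f) (pf : ∀ x, 0 < f x)
    (cg : Continuous g) (pg : ∀ x, 0 < g x)
    {D : Set E} (hD : Dense D) (hNA : ∀ z : E, ∀ᵐ y ∂μ, y ≠ z)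
    (he : ∀ z ∈ D, ENNReal.ofReal (g z) =
      ∫⁻ y, ENNReal.ofReal (f y) * ENNReal.ofReal ‖z - y‖ ^ (-lam) ∂μ) :
    (∀ z, Integrable (fun y => f y * (‖z - y‖ ^ 2) ^ (-(lam / 2))) μ) ∧
      ∀ z, g z = ∫ y, f y * (‖z - y‖ ^ 2) ^ (-(lam / 2)) ∂μ := by
  have mf := cf.measurable
  have mk := kk_meas (E := E) lam
  have he' : ∀ z ∈ D, ENNReal.ofReal (g z) = ∫⁻ y, ENNReal.ofReal (f y * kk lam (z - y)) ∂μ := by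
    intro z hz
    rw [he z hz]
    refine lintegral_congr_ae ?_
    filter_upwards [hNA z] with y hy
    have h0 : 0 < ‖z - y‖ := norm_pos_iff.2 (sub_ne_zero.2 hy.symm)
    rw [ENNReal.ofReal_rpow_of_pos h0, ← ENNReal.ofReal_mul (pf y).le, kk,
      ← Real.rpow_natCast, ← Real.rpow_mul h0.le]
    congr 3
    push_cast; ring
  have hnn : ∀ z, 0 ≤ᵐ[μ] fun y => f y * kk lam (z - y) := fun z =>
    Eventually.of_forall fun y => mul_nonneg (pf y).le (kk_nonneg _ _)
  have hi : ∀ z ∈ D, Integrable (fun y => f y * kk lam (z - y)) μ := by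
    intro z hz
    refine ⟨by fun_prop, ?_⟩
    rw [hasFiniteIntegral_iff_ofReal (hnn z), ← he' z hz]
    exact ENNReal.ofReal_lt_top
  obtain ⟨h1, h2⟩ := pot_cont hl cf pf hD hNA hi
  refine ⟨h1, fun z => ?_⟩
  have h3 := Continuous.ext_on hD cg h2 (by
    intro z hz
    have e := he' z hz
    rw [← ofReal_integral_eq_lintegral_ofReal (h1 z) (hnn z)] at e
    exact (ENNReal.ofReal_eq_ofReal_iff (pg z).le (integral_nonneg_of_ae (hnn z))).1 e)
  exact congrFun h3 z

end Extend

section Reduce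
open Filter Topology

lemma pDist_comm {n m : ℕ} (X Y : EuclideanSpace ℝ (Fin n) × EuclideanSpace ℝ (Fin m)) :
    pDist X Y = pDist Y X := by
  unfold pDist; rw [norm_sub_rev, norm_sub_rev X.2]

set_option maxHeartbeats 1000000 in
lemma exp_le_zero {n m : ℕ} (hm : 1 ≤ m) {lam α β κ : ℝ} (hlam0 : 0 < lam)
    {u v : EuclideanSpace ℝ (Fin n) × EuclideanSpace ℝ (Fin m) → ℝ}
    (hu_cont : Continuous u) (hv_cont : Continuous v)
    (hv_pos : ∀ X, 0 < v X)
    (hu_eq : ∀ X : EuclideanSpace ℝ (Fin n) × EuclideanSpace ℝ (Fin m), X.2 ≠ 0 →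
      ENNReal.ofReal (u X) = ENNReal.ofReal (‖X.2‖ ^ (-α)) *
        ∫⁻ Y, ENNReal.ofReal (v Y ^ κ) * ENNReal.ofReal ‖Y.2‖ ^ (-β) *
          ENNReal.ofReal (pDist X Y) ^ (-lam)) : α ≤ 0 := by
  by_contra hα
  push Not at hα
  have : Nonempty (Fin m) := ⟨⟨0, hm⟩⟩
  obtain ⟨e, he⟩ := exists_ne (0 : EuclideanSpace ℝ (Fin m))
  have mv := hv_cont.measurable
  set G : EuclideanSpace ℝ (Fin n) × EuclideanSpace ℝ (Fin m) → ℝ≥0∞ := fun Y =>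
    ENNReal.ofReal (v Y ^ κ) * ENNReal.ofReal ‖Y.2‖ ^ (-β) with hG
  have mG : Measurable G := by fun_prop
  set X : ℕ → EuclideanSpace ℝ (Fin n) × EuclideanSpace ℝ (Fin m) := fun k =>
    (0, (1 / ((k : ℝ) + 1)) • e) with hX
  have hX2 : ∀ k, (X k).2 ≠ 0 := fun k => smul_ne_zero (by positivity) he
  have hXlim : Tendsto X atTop (𝓝 0) := by
    have := (tendsto_one_div_add_atTop_nhds_zero_nat (𝕜 := ℝ)).smul_const e
    rw [zero_smul] at this
    exact (tendsto_const_nhds (x := (0 : EuclideanSpace ℝ (Fin n)))).prodMk_nhds this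
  set K : EuclideanSpace ℝ (Fin n) × EuclideanSpace ℝ (Fin m) →
    EuclideanSpace ℝ (Fin n) × EuclideanSpace ℝ (Fin m) → ℝ≥0∞ := fun X Y =>
    ENNReal.ofReal (pDist X Y) ^ (-lam) with hK
  have mp : ∀ X, Measurable (fun Y => pDist (n := n) (m := m) X Y) := fun X =>
    Continuous.measurable (by unfold pDist; fun_prop)
  have mK : ∀ X, Measurable (K X) := by
    intro X
    have := mp X
    fun_prop
  have hI : ∀ k, ∫⁻ Y, G Y * K (X k) Y = ENNReal.ofReal (u (X k) * ‖(X k).2‖ ^ α) := by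
    intro k
    have h1 := hu_eq (X k) (hX2 k)
    have h0 : 0 < ‖(X k).2‖ := norm_pos_iff.2 (hX2 k)
    change _ = _ * ∫⁻ Y, G Y * K (X k) Y at h1
    rw [mul_comm, ENNReal.ofReal_mul (by positivity), h1, ← mul_assoc,
      ← ENNReal.ofReal_mul (by positivity), ← Real.rpow_add h0]
    simp
  have hlim : Tendsto (fun k => ∫⁻ Y, G Y * K (X k) Y) atTop (𝓝 0) := by
    simp only [hI]
    have h1 : Continuous (fun Z : EuclideanSpace ℝ (Fin n) × EuclideanSpace ℝ (Fin m) => u Z * ‖Z.2‖ ^ α) :=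
      hu_cont.mul ((continuous_norm.comp continuous_snd).rpow_const (fun _ => Or.inr hα.le))
    have h2 := ((ENNReal.continuous_ofReal.comp h1).tendsto 0).comp hXlim
    have e0 : (ENNReal.ofReal ∘ fun Z : EuclideanSpace ℝ (Fin n) × EuclideanSpace ℝ (Fin m) =>
        u Z * ‖Z.2‖ ^ α) 0 = 0 := by
      simp [Real.zero_rpow hα.ne']
    rw [e0] at h2
    exact h2
  have hfatou := lintegral_liminf_le (μ := volume) (u := atTop) (f := fun k Y => G Y * K (X k) Y)
    (fun k => mG.mul (mK _))
  rw [hlim.liminf_eq] at hfatou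
  have hK0 : ∀ Y, K 0 Y ≠ 0 := by
    intro Y h0
    rw [hK] at h0
    dsimp only at h0
    rw [ENNReal.rpow_eq_zero_iff] at h0
    rcases h0 with ⟨_, h0⟩ | ⟨h0, _⟩
    · linarith
    · exact ENNReal.ofReal_ne_top h0
  have hpt : ∀ Y, liminf (fun k => G Y * K (X k) Y) atTop = G Y * K 0 Y := by
    intro Y
    apply Tendsto.liminf_eq
    refine ENNReal.Tendsto.const_mul ?_ (Or.inl (hK0 Y))
    have h0 : Continuous (fun Z => pDist (n := n) (m := m) Z Y) := by unfold pDist; fun_prop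
    have h1 : Continuous (fun Z => K Z Y) :=
      (ENNReal.continuous_rpow_const (y := -lam)).comp (ENNReal.continuous_ofReal.comp h0)
    exact (h1.tendsto 0).comp hXlim
  simp only [hpt] at hfatou
  have h0 := (lintegral_eq_zero_iff (mG.mul (mK 0))).1 (le_antisymm hfatou zero_le)
  have hopen : IsOpen {Y : EuclideanSpace ℝ (Fin n) × EuclideanSpace ℝ (Fin m) | Y.2 ≠ 0} :=
    isOpen_ne_fun continuous_snd continuous_const
  have hnull : volume {Y : EuclideanSpace ℝ (Fin n) × EuclideanSpace ℝ (Fin m) | Y.2 ≠ 0} = 0 := by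
    have h2 : ∀ᵐ Y : EuclideanSpace ℝ (Fin n) × EuclideanSpace ℝ (Fin m), Y.2 = 0 := by
      filter_upwards [h0] with Y hY
      by_contra hne
      have hY' : G Y * K 0 Y = 0 := hY
      rcases mul_eq_zero.1 hY' with h3 | h3
      · rcases mul_eq_zero.1 h3 with h4 | h4
        · have := Real.rpow_pos_of_pos (hv_pos Y) κ
          exact absurd (ENNReal.ofReal_eq_zero.1 h4) (not_le.2 this)
        · rw [ENNReal.rpow_eq_zero_iff] at h4
          rcases h4 with ⟨h5, _⟩ | ⟨h5, _⟩
          · exact absurd (ENNReal.ofReal_eq_zero.1 h5) (not_le.2 (norm_pos_iff.2 hne))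
          · exact ENNReal.ofReal_ne_top h5
      · exact hK0 Y h3
    exact h2
  rw [Measure.volume_eq_prod] at hnull
  have hnull := (hopen.measure_eq_zero_iff (μ := (volume : Measure (EuclideanSpace ℝ (Fin n))).prod (volume : Measure (EuclideanSpace ℝ (Fin m))))).1 hnull
  have : ((0 : EuclideanSpace ℝ (Fin n)), e) ∈ {Y : EuclideanSpace ℝ (Fin n) × EuclideanSpace ℝ (Fin m) | Y.2 ≠ 0} := he
  rw [hnull] at this
  exact this

end Reduce

section Transfer
open Filter Topology

lemma haar_ae_ne {E : Type*} [NormedAddCommGroup E] [InnerProductSpace ℝ E] [Nontrivial E]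
    [FiniteDimensional ℝ E] [MeasurableSpace E] [BorelSpace E] (μ : Measure E)
    [μ.IsAddHaarMeasure] (z : E) : ∀ᵐ y ∂μ, y ≠ z := Measure.ae_ne μ z

lemma pDist_eq {n m : ℕ} (z w : WithLp 2 (EuclideanSpace ℝ (Fin n) × EuclideanSpace ℝ (Fin m))) :
    pDist (WithLp.ofLp z) (WithLp.ofLp w) = ‖z - w‖ := by
  rw [← Real.sqrt_sq (norm_nonneg (z - w)), WithLp.prod_norm_sq_eq_of_L2]
  rfl

lemma sol_half {n m : ℕ} (hm : 1 ≤ m) {lam κ : ℝ} (hlam0 : 0 < lam)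
    {u v : EuclideanSpace ℝ (Fin n) × EuclideanSpace ℝ (Fin m) → ℝ}
    (hu_cont : Continuous u) (hv_cont : Continuous v)
    (hu_pos : ∀ X, 0 < u X) (hv_pos : ∀ X, 0 < v X)
    (hu_eq : ∀ X : EuclideanSpace ℝ (Fin n) × EuclideanSpace ℝ (Fin m), X.2 ≠ 0 →
      ENNReal.ofReal (u X) = 
        ∫⁻ Y, ENNReal.ofReal (v Y ^ κ) * ENNReal.ofReal (pDist X Y) ^ (-lam)) :
    (∀ z : WithLp 2 (EuclideanSpace ℝ (Fin n) × EuclideanSpace ℝ (Fin m)),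
      Integrable (fun y : WithLp 2 (EuclideanSpace ℝ (Fin n) × EuclideanSpace ℝ (Fin m)) =>
        v (WithLp.ofLp y) ^ κ * (‖z - y‖ ^ 2) ^ (-(lam / 2))) volume) ∧
    (∀ z : WithLp 2 (EuclideanSpace ℝ (Fin n) × EuclideanSpace ℝ (Fin m)),
      u (WithLp.ofLp z) = ∫ y : WithLp 2 (EuclideanSpace ℝ (Fin n) × EuclideanSpace ℝ (Fin m)),
        v (WithLp.ofLp y) ^ κ * (‖z - y‖ ^ 2) ^ (-(lam / 2))) := by
  have : Nonempty (Fin m) := ⟨⟨0, hm⟩⟩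
  obtain ⟨e, he⟩ := exists_ne (0 : EuclideanSpace ℝ (Fin m))
  have : Nontrivial (WithLp 2 (EuclideanSpace ℝ (Fin n) × EuclideanSpace ℝ (Fin m))) :=
    ⟨WithLp.toLp 2 (0, e), 0, fun h => he (congrArg (fun z => z.snd) h)⟩
  have co : Continuous (WithLp.ofLp : WithLp 2 (EuclideanSpace ℝ (Fin n) × EuclideanSpace ℝ (Fin m)) → _) :=
    WithLp.prod_continuous_ofLp 2 _ _
  have ct : Continuous (WithLp.toLp 2 : EuclideanSpace ℝ (Fin n) × EuclideanSpace ℝ (Fin m) → _) :=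
    WithLp.prod_continuous_toLp 2 _ _
  have hD : Dense {z : WithLp 2 (EuclideanSpace ℝ (Fin n) × EuclideanSpace ℝ (Fin m)) | z.snd ≠ 0} := by
    have d1 : Dense ({0}ᶜ : Set (EuclideanSpace ℝ (Fin m))) := dense_compl_singleton 0
    have d2 := (d1.preimage (isOpenMap_snd (X := EuclideanSpace ℝ (Fin n)))).preimage
      (f := (WithLp.ofLp : WithLp 2 (EuclideanSpace ℝ (Fin n) × EuclideanSpace ℝ (Fin m)) → _)) (by
        intro s hs
        have : WithLp.ofLp '' s = (WithLp.toLp 2) ⁻¹' s := by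
          ext x
          constructor
          · rintro ⟨y, hy, rfl⟩; exact hy
          · intro hx; exact ⟨_, hx, rfl⟩
        rw [this]
        exact hs.preimage ct)
    exact d2
  refine pot_extend hlam0 (f := fun y => v (WithLp.ofLp y) ^ κ) (g := fun y => u (WithLp.ofLp y))
    ((hv_cont.comp co).rpow_const (fun x => Or.inl (hv_pos _).ne'))
    (fun x => Real.rpow_pos_of_pos (hv_pos _) _) (hu_cont.comp co) (fun x => hu_pos _) hD
    (haar_ae_ne _) ?_
  intro z hz
  rw [hu_eq (WithLp.ofLp z) hz]
  have mp : Measurable (fun Y => pDist (n := n) (m := m) (WithLp.ofLp z) Y) :=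
    Continuous.measurable (by unfold pDist; fun_prop)
  have mv := hv_cont.measurable
  rw [← (WithLp.volume_preserving_ofLp (EuclideanSpace ℝ (Fin n))
    (EuclideanSpace ℝ (Fin m))).lintegral_comp (by fun_prop)]
  simp only [pDist_eq]

end Transfer

/-- Classification of positive solutions of the Euler–Lagrange system on `ℝ^{n+m}` on the
slice `{x̂ = 0}` in the conformal case. -/
theorem classification_euler_lagrange_Rnm_conformal
    (n m : ℕ) (hm : 1 ≤ m) (lam α β θ κ : ℝ)
    (hlam0 : 0 < lam) (hlam1 : lam < (n : ℝ) + m)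
    (hla : 0 < lam + 2 * α) (hlb : 0 < lam + 2 * β)
    (hθdef : θ = (2 * ((n : ℝ) + m) - lam - 2 * α) / (lam + 2 * α))
    (hκdef : κ = (2 * ((n : ℝ) + m) - lam - 2 * β) / (lam + 2 * β))
    (hκ : 0 < κ) (hθ : 0 < θ) (hκθ : 1 ≤ κ * θ)
    (hα : α < m / (θ + 1)) (hβ : β < m / (κ + 1)) (hαβ : 0 ≤ α + β)
    (u v : EuclideanSpace ℝ (Fin n) × EuclideanSpace ℝ (Fin m) → ℝ)
    (hu_cont : Continuous u) (hv_cont : Continuous v)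
    (hu_pos : ∀ X, 0 < u X) (hv_pos : ∀ X, 0 < v X)
    (hu_int : (∫⁻ X, ENNReal.ofReal (u X ^ (θ + 1))) < ⊤)
    (hu_eq : ∀ X : EuclideanSpace ℝ (Fin n) × EuclideanSpace ℝ (Fin m), X.2 ≠ 0 →
      ENNReal.ofReal (u X) = ENNReal.ofReal (‖X.2‖ ^ (-α)) *
        ∫⁻ Y, ENNReal.ofReal (v Y ^ κ) * ENNReal.ofReal ‖Y.2‖ ^ (-β) *
          ENNReal.ofReal (pDist X Y) ^ (-lam))
    (hv_eq : ∀ Y : EuclideanSpace ℝ (Fin n) × EuclideanSpace ℝ (Fin m), Y.2 ≠ 0 →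
      ENNReal.ofReal (v Y) = ENNReal.ofReal (‖Y.2‖ ^ (-β)) *
        ∫⁻ X, ENNReal.ofReal (u X ^ θ) * ENNReal.ofReal ‖X.2‖ ^ (-α) *
          ENNReal.ofReal (pDist X Y) ^ (-lam)) :
    ∃ c₃ c₄ a : ℝ, 0 < c₃ ∧ 0 < c₄ ∧ 0 < a ∧
      ∃ x₀ : EuclideanSpace ℝ (Fin n), ∀ x : EuclideanSpace ℝ (Fin n),
        u (x, 0) = c₃ * (‖x - x₀‖ ^ 2 + a ^ 2) ^ (-((lam + 2 * α) / 2)) ∧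
        v (x, 0) = c₄ * (‖x - x₀‖ ^ 2 + a ^ 2) ^ (-((lam + 2 * β) / 2)) := by
  have hα0 : α ≤ 0 := exp_le_zero hm hlam0 hu_cont hv_cont hv_pos hu_eq
  have hβ0 : β ≤ 0 := exp_le_zero (β := α) (κ := θ) hm hlam0 hv_cont hu_cont hu_pos (by
    intro X hX
    rw [hv_eq X hX]
    simp only [pDist_comm X])
  have hα1 : α = 0 := by linarith
  have hβ1 : β = 0 := by linarith
  subst hα1
  subst hβ1
  simp only [neg_zero, Real.rpow_zero, ENNReal.ofReal_one, one_mul, ENNReal.rpow_zero, mul_one,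
    mul_zero, add_zero, sub_zero] at *
  have hκθ' : κ = θ := by rw [hθdef, hκdef]
  subst hκθ'
  have : Nonempty (Fin m) := ⟨⟨0, hm⟩⟩
  obtain ⟨e, he⟩ := exists_ne (0 : EuclideanSpace ℝ (Fin m))
  have : Nontrivial (WithLp 2 (EuclideanSpace ℝ (Fin n) × EuclideanSpace ℝ (Fin m))) :=
    ⟨WithLp.toLp 2 (0, e), 0, fun h => he (congrArg (fun z => z.snd) h)⟩
  have co : Continuous (WithLp.ofLp : WithLp 2 (EuclideanSpace ℝ (Fin n) × EuclideanSpace ℝ (Fin m)) → _) :=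
    WithLp.prod_continuous_ofLp 2 _ _
  obtain ⟨iu, eu⟩ := sol_half hm hlam0 hu_cont hv_cont hu_pos hv_pos hu_eq
  obtain ⟨iv, ev⟩ := sol_half (κ := κ) hm hlam0 hv_cont hu_cont hv_pos hu_pos (by
    intro X hX
    rw [hv_eq X hX]
    simp only [pDist_comm X])
  have hS : Sol volume lam κ
      (fun z : WithLp 2 (EuclideanSpace ℝ (Fin n) × EuclideanSpace ℝ (Fin m)) => u (WithLp.ofLp z))
      (fun z => v (WithLp.ofLp z)) :=
    ⟨hu_cont.comp co, hv_cont.comp co, fun _ => hu_pos _, fun _ => hv_pos _, iu, iv, eu, ev⟩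
  have hfin : Module.finrank ℝ (WithLp 2 (EuclideanSpace ℝ (Fin n) × EuclideanSpace ℝ (Fin m))) = n + m := by
    rw [(WithLp.linearEquiv 2 ℝ (EuclideanSpace ℝ (Fin n) × EuclideanSpace ℝ (Fin m))).finrank_eq]; simp
  have mu := hu_cont.measurable
  obtain ⟨A, A', c, X0, hA, hA', hc, hcl⟩ := hS.classify hlam0
    (by rw [hκdef, le_div_iff₀ hlam0]; linarith)
    (by rw [hfin, hκdef]; push_cast; field_simp)
    (by
      rw [(WithLp.volume_preserving_ofLp (EuclideanSpace ℝ (Fin n))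
        (EuclideanSpace ℝ (Fin m))).lintegral_comp (f := fun X => ENNReal.ofReal (u X ^ (κ + 1)))
          (by fun_prop)]
      exact hu_int)
  refine ⟨A, A', √(c + ‖X0.snd‖ ^ 2), hA, hA', Real.sqrt_pos.2 (by positivity), X0.fst, fun x => ?_⟩
  have h1 := hcl (WithLp.toLp 2 (x, 0))
  rw [WithLp.prod_norm_sq_eq_of_L2] at h1
  have e1 : ‖x - X0.fst‖ ^ 2 + √(c + ‖X0.snd‖ ^ 2) ^ 2 =
      ‖(WithLp.toLp 2 (x, (0 : EuclideanSpace ℝ (Fin m))) - X0).fst‖ ^ 2 +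
      ‖(WithLp.toLp 2 (x, (0 : EuclideanSpace ℝ (Fin m))) - X0).snd‖ ^ 2 + c := by
    rw [Real.sq_sqrt (by positivity)]
    simp
    ring
  rw [e1]
  exact h1
end
end

section
/- Let n ≥ 1 be an integer and 1 < p < n+1. Let α₁, β₁ ∈ ℝ and set p* = p(n+1+β₁)/(n+1+α₁−p). Assume p < p*, pn/p* − (n+1−p) < α₁ < p−1 and −1 < β₁ ≤ α₁(n+1)/(n+1−p). Then there exists a constant S > 0 such that for every smooth compactly supported function u : ℝ^{n+1} → ℝ, (∫_{ℝ^{n+1}_+} t^{β₁} |u(x,t)|^{p*} dx dt)^{p/p*} ≤ S · ∫_{ℝ^{n+1}_+} t^{α₁} |∇u(x,t)|^p dx dt. -/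
open MeasureTheory ENNReal

noncomputable section

/-- The upper half space of `ℝ^{n+1}`, with `t` the last coordinate. -/
def upperHalfE (n : ℕ) : Set (EuclideanSpace ℝ (Fin (n + 1))) :=
  {X | 0 < X (Fin.last n)}

open Set

/-- weight -/
def wt (β t : ℝ) : ℝ≥0∞ := (Ioi (0:ℝ)).indicator (fun t => ENNReal.ofReal (t ^ β)) t

lemma wt_meas (β : ℝ) : Measurable (wt β) := by
  unfold wt
  apply Measurable.indicator _ measurableSet_Ioi
  fun_prop

lemma wt_of_pos {β t : ℝ} (h : 0 < t) : wt β t = ENNReal.ofReal (t ^ β) := by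
  simp [wt, h]

lemma wt_of_nonpos {β t : ℝ} (h : t ≤ 0) : wt β t = 0 := by
  simp [wt, h]

/-- weighted measure -/
def muw (β : ℝ) (n : ℕ) : Measure (ℝ × (Fin n → ℝ)) :=
  volume.withDensity (fun X => wt β X.1)

lemma wt_int_eq {β s δ : ℝ} (hβ : -1 < β) (hδ : 0 < δ) (hδs : δ ≤ s) :
    ∫⁻ r in Ioc 0 δ, wt β (s - r) =
      ENNReal.ofReal ((s ^ (β + 1) - (s - δ) ^ (β + 1)) / (β + 1)) := by
  have h1 : ∫⁻ r in Ioc 0 δ, wt β (s - r) = ∫⁻ r in Ioc 0 δ, ENNReal.ofReal ((s - r) ^ β) := by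
    rw [← restrict_Ioo_eq_restrict_Ioc]
    apply setLIntegral_congr_fun measurableSet_Ioo
    intro r hr
    exact wt_of_pos (by linarith [hr.2])
  rw [h1]
  have hi : IntervalIntegrable (fun r : ℝ => (s - r) ^ β) volume 0 δ := by
    have := (intervalIntegral.intervalIntegrable_rpow' (a := s) (b := s - δ) hβ).comp_sub_left s
    simpa using this
  rw [← ofReal_integral_eq_lintegral_ofReal]
  · congr 1
    rw [← intervalIntegral.integral_of_le hδ.le, intervalIntegral.integral_comp_sub_left (fun x => x ^ β)]
    rw [integral_rpow (Or.inl hβ)]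
    simp
  · exact (intervalIntegrable_iff_integrableOn_Ioc_of_le hδ.le).1 hi
  · filter_upwards [ae_restrict_mem measurableSet_Ioc] with r hr
    exact Real.rpow_nonneg (by linarith [hr.2]) _

lemma rpow_diff_le {b s δ : ℝ} (hb : 0 < b) (hδ : 0 < δ) (hδs : δ ≤ s) :
    s ^ b - (s - δ) ^ b ≤ max b 1 * s ^ (b - 1) * δ := by
  have hs : 0 < s := hδ.trans_le hδs
  have hx0 : 0 ≤ δ / s := by positivity
  have hx1 : δ / s ≤ 1 := (div_le_one hs).2 hδs
  have key : 1 - max b 1 * (δ / s) ≤ (1 - δ / s) ^ b := by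
    rcases le_total b 1 with h | h
    · rw [max_eq_right h]
      have := Real.rpow_le_rpow_of_exponent_ge' (x := 1 - δ / s) (y := 1) (z := b)
        (by linarith) (by linarith) hb.le h
      rw [Real.rpow_one] at this
      linarith
    · rw [max_eq_left h]
      have := one_add_mul_self_le_rpow_one_add (s := -(δ / s)) (by linarith) h
      have e : 1 + -(δ/s) = 1 - δ/s := by ring
      rw [e] at this
      linarith
  have e1 : s - δ = s * (1 - δ / s) := by field_simp
  rw [e1, Real.mul_rpow hs.le (by linarith), Real.rpow_sub_one hs.ne']
  have hsb : 0 < s ^ b := by positivity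
  have := mul_le_mul_of_nonneg_left key hsb.le
  have e2 : max b 1 * (s ^ b / s) * δ = s ^ b * (max b 1 * (δ / s)) := by ring
  rw [e2]
  linarith

/-- constant -/
def Kc (β : ℝ) : ℝ := max (β + 1) 1 / (β + 1)

lemma Kc_pos {β : ℝ} (hβ : -1 < β) : 0 < Kc β := by
  unfold Kc
  have : 0 < β + 1 := by linarith
  positivity

lemma wt_int_le {β s δ : ℝ} (hβ : -1 < β) (hδ : 0 < δ) (hδs : δ ≤ s) :
    ∫⁻ r in Ioc 0 δ, wt β (s - r) ≤ ENNReal.ofReal (Kc β * s ^ β * δ) := by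
  rw [wt_int_eq hβ hδ hδs]
  apply ENNReal.ofReal_le_ofReal
  have hb : 0 < β + 1 := by linarith
  have := rpow_diff_le hb hδ hδs
  rw [div_le_iff₀ hb]
  refine this.trans (le_of_eq ?_)
  unfold Kc
  have : β + 1 - 1 = β := by ring
  rw [this]
  field_simp

lemma line_le {n : ℕ} {V : ℝ × (Fin n → ℝ) → ℝ} (hV : ContDiff ℝ 1 V) (hc : HasCompactSupport V)
    (X : ℝ × (Fin n → ℝ)) (z : Fin n → ℝ) (hz : ‖z‖ ≤ 1) :
    ‖V X‖ₑ ≤ ∫⁻ r in Ioi (0:ℝ), ‖fderiv ℝ V (X + r • ((1:ℝ), z))‖ₑ := by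
  set v : ℝ × (Fin n → ℝ) := ((1:ℝ), z) with hv
  have hvn : ‖v‖ ≤ 1 := by simp [hv, Prod.norm_def, hz]
  let f : ℝ → ℝ := fun r => V (X + (-r) • v)
  have hf : ContDiff ℝ 1 f := by
    apply hV.comp
    fun_prop
  have hcf : HasCompactSupport f := by
    have hemb : Topology.IsClosedEmbedding (fun r : ℝ => X + (-r) • v) := by
      have h1 : Topology.IsClosedEmbedding (fun r : ℝ => r • v) :=
        isClosedEmbedding_smul_left (by simp [hv])
      exact ((Homeomorph.addLeft X).isClosedEmbedding.comp h1).comp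
        (Homeomorph.neg ℝ).isClosedEmbedding
    exact hc.comp_isClosedEmbedding hemb
  have h0 := hcf.enorm_le_lintegral_Ici_deriv hf 0
  have hf0 : f 0 = V X := by simp [f]
  rw [hf0] at h0
  refine h0.trans ?_
  have hd : ∀ r, ‖deriv f r‖ₑ ≤ ‖fderiv ℝ V (X + (-r) • v)‖ₑ := by
    intro r
    have h1 : HasDerivAt (fun r : ℝ => X + (-r) • v) (-v) r := by
      have := ((hasDerivAt_id r).neg.smul_const v).const_add X
      simpa using this
    have h2 : HasDerivAt f (fderiv ℝ V (X + (-r) • v) (-v)) r :=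
      ((hV.differentiable one_ne_zero _).hasFDerivAt).comp_hasDerivAt r h1
    rw [h2.deriv, enorm_le_iff_norm_le]
    refine (ContinuousLinearMap.le_opNorm _ _).trans ?_
    rw [norm_neg]
    exact mul_le_of_le_one_right (norm_nonneg _) hvn
  calc ∫⁻ r in Iic 0, ‖deriv f r‖ₑ ≤ ∫⁻ r in Iic 0, ‖fderiv ℝ V (X + (-r) • v)‖ₑ :=
        lintegral_mono hd
    _ = ∫⁻ r in Ici (0:ℝ), ‖fderiv ℝ V (X + r • v)‖ₑ := by
        have := (Measure.measurePreserving_neg (volume : Measure ℝ)).setLIntegral_comp_preimage_emb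
          (MeasurableEquiv.neg ℝ).measurableEmbedding
          (fun r => ‖fderiv ℝ V (X + r • v)‖ₑ) (Ici 0)
        rw [← this]
        congr 2
        ext; simp
    _ = _ := by rw [restrict_Ioi_eq_restrict_Ici]

/-- section measure -/
def hE {n : ℕ} (E : Set (ℝ × (Fin n → ℝ))) (Y : ℝ × (Fin n → ℝ)) (r : ℝ) : ℝ≥0∞ :=
  ∫⁻ z in Metric.closedBall (0 : Fin n → ℝ) 1, E.indicator 1 (Y - r • ((1:ℝ), z))

lemma hE_le {n : ℕ} (E : Set (ℝ × (Fin n → ℝ))) (Y : ℝ × (Fin n → ℝ)) (r : ℝ) :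
    hE E Y r ≤ volume (Metric.closedBall (0 : Fin n → ℝ) 1) := by
  unfold hE
  calc _ ≤ ∫⁻ z in Metric.closedBall (0 : Fin n → ℝ) 1, 1 := by
        apply lintegral_mono
        intro z
        exact indicator_le_self' (by simp) _ 
    _ = _ := by simp

lemma hE_mul_le {n : ℕ} {E : Set (ℝ × (Fin n → ℝ))} (hE' : MeasurableSet E)
    (Y : ℝ × (Fin n → ℝ)) {r : ℝ} (hr : 0 ≤ r) :
    ENNReal.ofReal (r ^ n) * hE E Y r ≤ volume (Prod.mk (Y.1 - r) ⁻¹' E) := by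
  have hm : Measurable fun z : Fin n → ℝ => Y - r • ((1:ℝ), z) := by fun_prop
  have e : hE E Y r = volume ((fun z : Fin n → ℝ => Y - r • ((1:ℝ), z)) ⁻¹' E ∩
      Metric.closedBall (0 : Fin n → ℝ) 1) := by
    unfold hE
    rw [← Measure.restrict_apply (hm hE'), ← lintegral_indicator_one (hm hE')]
    rfl
  rw [e]
  have h := Measure.addHaar_smul_of_nonneg (volume : Measure (Fin n → ℝ)) hr
    ((fun z : Fin n → ℝ => Y - r • ((1:ℝ), z)) ⁻¹' E ∩ Metric.closedBall (0 : Fin n → ℝ) 1)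
  rw [Module.finrank_fin_fun] at h
  rw [← h]
  calc _ ≤ volume ((fun y => Y.2 - y) ⁻¹' (Prod.mk (Y.1 - r) ⁻¹' E)) := by
        apply measure_mono
        rintro _ ⟨z, ⟨hz, -⟩, rfl⟩
        simp only [mem_preimage] at hz ⊢
        convert hz using 1
        ext <;> simp
    _ = _ := by
        exact (Measure.measurePreserving_sub_left volume Y.2).measure_preimage
          (measurable_prodMk_left hE').nullMeasurableSet

lemma muw_apply {n : ℕ} (β : ℝ) {E : Set (ℝ × (Fin n → ℝ))} (hE' : MeasurableSet E) :
    muw β n E = ∫⁻ t, wt β t * volume (Prod.mk t ⁻¹' E) := by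
  unfold muw
  have hw := wt_meas β
  rw [withDensity_apply _ hE', ← lintegral_indicator hE', Measure.volume_eq_prod,
    lintegral_prod _ (by
      apply Measurable.aemeasurable
      exact Measurable.indicator (hw.comp measurable_fst) hE')]
  congr 1
  ext t
  rw [← lintegral_indicator_one (measurable_prodMk_left hE'), ← lintegral_const_mul]
  · congr 1
    ext y
    by_cases h : (t, y) ∈ E <;> simp [h]
  · exact (measurable_one.indicator (measurable_prodMk_left hE'))

lemma hE_int_le {n : ℕ} (β : ℝ) {E : Set (ℝ × (Fin n → ℝ))} (hE' : MeasurableSet E)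
    (Y : ℝ × (Fin n → ℝ)) :
    ∫⁻ r in Ioi (0:ℝ), wt β (Y.1 - r) * (ENNReal.ofReal (r ^ n) * hE E Y r) ≤ muw β n E := by
  rw [muw_apply β hE']
  calc _ ≤ ∫⁻ r in Ioi (0:ℝ), wt β (Y.1 - r) * volume (Prod.mk (Y.1 - r) ⁻¹' E) := by
        apply setLIntegral_mono' measurableSet_Ioi
        intro r hr
        gcongr
        exact hE_mul_le hE' Y (le_of_lt hr)
    _ ≤ ∫⁻ r, wt β (Y.1 - r) * volume (Prod.mk (Y.1 - r) ⁻¹' E) := setLIntegral_le_lintegral _ _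
    _ = _ := lintegral_sub_left_eq_self (fun t => wt β t * volume (Prod.mk t ⁻¹' E)) Y.1

/-- kernel integral -/
def HE {n : ℕ} (β : ℝ) (E : Set (ℝ × (Fin n → ℝ))) (Y : ℝ × (Fin n → ℝ)) : ℝ≥0∞ :=
  ∫⁻ r in Ioi (0:ℝ), wt β (Y.1 - r) * hE E Y r

lemma HE_zero {n : ℕ} (β : ℝ) (E : Set (ℝ × (Fin n → ℝ))) (Y : ℝ × (Fin n → ℝ)) (h : Y.1 ≤ 0) :
    HE β E Y = 0 := by
  unfold HE
  rw [setLIntegral_congr_fun measurableSet_Ioi (g := fun _ => 0)]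
  · simp
  · intro r hr
    have : (0:ℝ) < r := hr
    simp [wt_of_nonpos (β := β) (t := Y.1 - r) (by linarith)]

lemma HE_le1 {n : ℕ} {β : ℝ} (hβ : -1 < β) (E : Set (ℝ × (Fin n → ℝ))) (Y : ℝ × (Fin n → ℝ))
    {δ : ℝ} (hδ : 0 < δ) (hδs : δ ≤ Y.1) :
    ∫⁻ r in Ioc 0 δ, wt β (Y.1 - r) * hE E Y r ≤
      ENNReal.ofReal (Kc β * Y.1 ^ β * δ) * volume (Metric.closedBall (0 : Fin n → ℝ) 1) := by
  calc _ ≤ ∫⁻ r in Ioc 0 δ, wt β (Y.1 - r) * volume (Metric.closedBall (0 : Fin n → ℝ) 1) := by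
        apply lintegral_mono
        intro r
        dsimp only
        gcongr
        exact hE_le _ _ _
    _ = (∫⁻ r in Ioc 0 δ, wt β (Y.1 - r)) * volume (Metric.closedBall (0 : Fin n → ℝ) 1) := by
        rw [lintegral_mul_const]
        exact (wt_meas β).comp (by fun_prop)
    _ ≤ _ := by
        gcongr
        exact wt_int_le hβ hδ hδs

lemma HE_leA {n : ℕ} {β : ℝ} (hβ : -1 < β) (E : Set (ℝ × (Fin n → ℝ))) (Y : ℝ × (Fin n → ℝ))
    (hY : 0 < Y.1) :
    HE β E Y ≤
      ENNReal.ofReal (Kc β * Y.1 ^ β * Y.1) * volume (Metric.closedBall (0 : Fin n → ℝ) 1) := by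
  refine le_trans ?_ (HE_le1 hβ E Y hY le_rfl)
  unfold HE
  rw [← Ioc_union_Ioi_eq_Ioi hY.le]
  refine (lintegral_union_le _ _ _).trans ?_
  rw [setLIntegral_congr_fun (s := Ioi Y.1) measurableSet_Ioi (g := fun _ => 0)]
  · simp
  · intro r hr
    have : Y.1 < r := hr
    simp [wt_of_nonpos (β := β) (t := Y.1 - r) (by linarith)]

lemma HE_leB {n : ℕ} {β : ℝ} (hβ : -1 < β) {E : Set (ℝ × (Fin n → ℝ))} (hE' : MeasurableSet E)
    (Y : ℝ × (Fin n → ℝ)) {δ : ℝ} (hδ : 0 < δ) (hδs : δ ≤ Y.1) :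
    HE β E Y ≤
      ENNReal.ofReal (Kc β * Y.1 ^ β * δ) * volume (Metric.closedBall (0 : Fin n → ℝ) 1) +
      ENNReal.ofReal ((δ ^ n)⁻¹) * muw β n E := by
  unfold HE
  rw [← Ioc_union_Ioi_eq_Ioi hδ.le]
  refine (lintegral_union_le _ _ _).trans ?_
  gcongr
  · exact HE_le1 hβ E Y hδ hδs
  · refine le_trans ?_ (mul_le_mul_right (hE_int_le β hE' Y) _)
    rw [← lintegral_const_mul' _ _ (by simp)]
    refine le_trans ?_ (lintegral_mono_set (Ioi_subset_Ioi hδ.le))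
    apply setLIntegral_mono' measurableSet_Ioi
    intro r hr
    have hr' : δ < r := hr
    have h1 : 1 ≤ ENNReal.ofReal ((δ ^ n)⁻¹) * ENNReal.ofReal (r ^ n) := by
      rw [← ENNReal.ofReal_mul (by positivity), ENNReal.one_le_ofReal, inv_mul_eq_div,
        one_le_div (by positivity)]
      gcongr
    calc wt β (Y.1 - r) * hE E Y r = 1 * (wt β (Y.1 - r) * hE E Y r) := by rw [one_mul]
      _ ≤ ENNReal.ofReal ((δ ^ n)⁻¹) * ENNReal.ofReal (r ^ n) * (wt β (Y.1 - r) * hE E Y r) := by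
        gcongr
      _ = _ := by ring

lemma HE_bound {n : ℕ} {β θ : ℝ} (hβ : -1 < β) (hθ : 0 < θ) (hθn : θ * ((n:ℝ) + 1) ≤ 1)
    {E : Set (ℝ × (Fin n → ℝ))} (hE' : MeasurableSet E)
    (h0 : muw β n E ≠ 0) (ht : muw β n E ≠ ⊤) (Y : ℝ × (Fin n → ℝ)) :
    HE β E Y ≤ (ENNReal.ofReal (Kc β) * volume (Metric.closedBall (0 : Fin n → ℝ) 1) + 1) *
      muw β n E ^ θ * wt (β + 1 - θ * ((n:ℝ) + 1 + β)) Y.1 := by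
  set vB := volume (Metric.closedBall (0 : Fin n → ℝ) 1) with hvB
  rcases le_or_gt Y.1 0 with hs | hs
  · rw [HE_zero β E Y hs]; exact zero_le
  set s := Y.1 with hsdef
  obtain ⟨m0, hm0, hm⟩ : ∃ m0 : ℝ, 0 < m0 ∧ muw β n E = ENNReal.ofReal m0 :=
    ⟨(muw β n E).toReal, ENNReal.toReal_pos h0 ht, (ENNReal.ofReal_toReal ht).symm⟩
  have hK := Kc_pos hβ
  rw [wt_of_pos hs, hm, ENNReal.ofReal_rpow_of_pos hm0]
  set a := β + 1 - θ * ((n:ℝ) + 1 + β) with ha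
  set P := s ^ ((n:ℝ) + 1 + β) with hP
  have hPpos : 0 < P := by positivity
  have hPθ : s ^ (β + 1) = P ^ θ * s ^ a := by
    rw [hP, ← Real.rpow_mul hs.le, ← Real.rpow_add hs, ha]; congr 1; ring
  have hsβ : s ^ (β + 1) = s ^ β * s := Real.rpow_add_one hs.ne' β
  have hD : 0 < m0 ^ θ * s ^ a := by positivity
  have goal_eq : (ENNReal.ofReal (Kc β) * vB + 1) * ENNReal.ofReal (m0 ^ θ) * ENNReal.ofReal (s ^ a)
      = ENNReal.ofReal (Kc β * (m0 ^ θ * s ^ a)) * vB + ENNReal.ofReal (m0 ^ θ * s ^ a) := by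
    rw [ENNReal.ofReal_mul hK.le, ENNReal.ofReal_mul (by positivity)]; ring
  rw [goal_eq]
  rcases le_or_gt P m0 with hc | hc
  · refine (HE_leA hβ E Y hs).trans (le_trans ?_ le_self_add)
    gcongr ENNReal.ofReal ?_ * vB
    rw [mul_assoc, ← hsdef, ← hsβ, hPθ]
    gcongr
  · set m := m0 / P with hmdef
    have hmp : 0 < m := by positivity
    have hm1 : m < 1 := (div_lt_one hPpos).2 hc
    have hmθ : s ^ (β + 1) * m ^ θ = m0 ^ θ * s ^ a := by
      rw [hPθ, hmdef, Real.div_rpow hm0.le hPpos.le]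
      field_simp
    have hδ : 0 < s * m ^ θ := by positivity
    have hδs : s * m ^ θ ≤ s :=
      mul_le_of_le_one_right hs.le (Real.rpow_le_one hmp.le hm1.le hθ.le)
    refine (HE_leB hβ hE' Y hδ hδs).trans ?_
    rw [hm, ← ENNReal.ofReal_mul (by positivity)]
    gcongr ENNReal.ofReal ?_ * vB + ENNReal.ofReal ?_
    · rw [← hmθ, hsβ, ← hsdef]; apply le_of_eq; ring
    · rw [← hmθ]
      have e1 : m0 = m * (s ^ (β + 1) * s ^ n) := by
        rw [← Real.rpow_natCast s n, ← Real.rpow_add hs, hmdef, hP]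
        have : β + 1 + (n:ℝ) = n + 1 + β := by ring
        rw [this]; field_simp
      have e2 : ((s * m ^ θ) ^ n)⁻¹ * m0 = s ^ (β + 1) * m ^ (1 - θ * n) := by
        rw [Real.rpow_sub hmp, Real.rpow_one, Real.rpow_mul hmp.le, Real.rpow_natCast]
        conv_lhs => rw [e1]
        rw [mul_pow]
        field_simp
      rw [e2]
      gcongr ?_ * ?_
      apply Real.rpow_le_rpow_of_exponent_ge hmp hm1.le
      linarith

lemma weak_aux {n : ℕ} {β : ℝ} {V : ℝ × (Fin n → ℝ) → ℝ} (hV : ContDiff ℝ 1 V)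
    (hc : HasCompactSupport V) {E : Set (ℝ × (Fin n → ℝ))} (hE' : MeasurableSet E)
    (hEV : ∀ X ∈ E, 1 ≤ ‖V X‖ₑ) :
    volume (Metric.closedBall (0 : Fin n → ℝ) 1) * muw β n E ≤
      ∫⁻ Y, HE β E Y * ‖fderiv ℝ V Y‖ₑ := by
  set B := Metric.closedBall (0 : Fin n → ℝ) 1 with hB
  have hBm : MeasurableSet B := Metric.isClosed_closedBall.measurableSet
  let G : ℝ × (Fin n → ℝ) → ℝ≥0∞ := fun Y => ‖fderiv ℝ V Y‖ₑ
  have hG : Measurable G := by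
    have := (hV.continuous_fderiv one_ne_zero).measurable
    exact this.enorm
  have hw := wt_meas β
  have hI : Measurable (E.indicator (1 : ℝ × (Fin n → ℝ) → ℝ≥0∞)) := measurable_one.indicator hE'
  let f : ℝ × (Fin n → ℝ) → ℝ≥0∞ := fun X => E.indicator 1 X * wt β X.1
  have hf : Measurable f := hI.mul (hw.comp measurable_fst)
  have hmu : muw β n E = ∫⁻ X, f X := by
    unfold muw
    rw [withDensity_apply _ hE', ← lintegral_indicator hE']
    congr 1
    ext X
    by_cases h : X ∈ E <;> simp [f, h]
  have step1 : ∀ z ∈ B, muw β n E ≤ ∫⁻ r in Ioi (0:ℝ), ∫⁻ Y, f (Y - r • ((1:ℝ), z)) * G Y := by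
    intro z hz
    have hz1 : ‖z‖ ≤ 1 := by simpa [hB] using hz
    calc muw β n E = ∫⁻ X, f X := hmu
      _ ≤ ∫⁻ X, ∫⁻ r in Ioi (0:ℝ), f X * G (X + r • ((1:ℝ), z)) := by
          apply lintegral_mono
          intro X
          dsimp only
          rw [lintegral_const_mul _ (show Measurable fun r : ℝ => G (X + r • ((1:ℝ), z)) from
            hG.comp (by fun_prop))]
          by_cases h : X ∈ E
          · calc f X = f X * 1 := by rw [mul_one]
              _ ≤ _ := by
                gcongr
                exact (hEV X h).trans (line_le hV hc X z hz1)
          · simp [f, h]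
      _ = ∫⁻ r in Ioi (0:ℝ), ∫⁻ X, f X * G (X + r • ((1:ℝ), z)) := by
          apply lintegral_lintegral_swap
          apply Measurable.aemeasurable
          exact (hf.comp measurable_fst).mul (hG.comp (by fun_prop))
      _ = _ := by
          congr 1
          ext r
          have : (volume : Measure (ℝ × (Fin n → ℝ))).IsAddHaarMeasure := by
            rw [Measure.volume_eq_prod]; infer_instance
          rw [← lintegral_add_right_eq_self (fun Y => f (Y - r • ((1:ℝ), z)) * G Y) (r • ((1:ℝ), z))]
          simp
  calc volume B * muw β n E = ∫⁻ z in B, muw β n E := by simp [mul_comm]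
    _ ≤ ∫⁻ z in B, ∫⁻ r in Ioi (0:ℝ), ∫⁻ Y, f (Y - r • ((1:ℝ), z)) * G Y := 
        setLIntegral_mono' hBm step1
    _ = ∫⁻ r in Ioi (0:ℝ), ∫⁻ z in B, ∫⁻ Y, f (Y - r • ((1:ℝ), z)) * G Y := by
        apply lintegral_lintegral_swap
        apply Measurable.aemeasurable
        apply Measurable.lintegral_prod_right' (f := fun q : ((Fin n → ℝ) × ℝ) × (ℝ × (Fin n → ℝ)) =>
          f (q.2 - q.1.2 • ((1:ℝ), q.1.1)) * G q.2)
        exact (hf.comp (by fun_prop)).mul (hG.comp measurable_snd)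
    _ = ∫⁻ r in Ioi (0:ℝ), ∫⁻ Y, (wt β (Y.1 - r) * hE E Y r) * G Y := by
        congr 1
        ext r
        rw [lintegral_lintegral_swap]
        · congr 1
          ext Y
          rw [lintegral_mul_const _ (show Measurable fun z : Fin n → ℝ => f (Y - r • ((1:ℝ), z)) from
            hf.comp (by fun_prop))]
          congr 1
          unfold hE
          rw [← lintegral_const_mul _ (show Measurable fun z : Fin n → ℝ =>
            E.indicator (1 : ℝ × (Fin n → ℝ) → ℝ≥0∞) (Y - r • ((1:ℝ), z)) from hI.comp (by fun_prop))]
          congr 1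
          ext z
          simp [f, mul_comm]
        · apply Measurable.aemeasurable
          exact (hf.comp (by fun_prop)).mul (hG.comp measurable_snd)
    _ = ∫⁻ Y, ∫⁻ r in Ioi (0:ℝ), (wt β (Y.1 - r) * hE E Y r) * G Y := by
        have hhE : Measurable fun q : ℝ × (ℝ × (Fin n → ℝ)) => hE E q.2 q.1 := by
          unfold hE
          apply Measurable.lintegral_prod_right' (f := fun q : (ℝ × (ℝ × (Fin n → ℝ))) × (Fin n → ℝ) =>
            E.indicator 1 (q.1.2 - q.1.1 • ((1:ℝ), q.2)))
          exact hI.comp (by fun_prop)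
        apply lintegral_lintegral_swap
        apply Measurable.aemeasurable
        exact ((hw.comp (by fun_prop)).mul hhE).mul (hG.comp measurable_snd)
    _ = _ := by
        congr 1
        ext Y
        unfold HE
        have hhE : Measurable fun r : ℝ => hE E Y r := by
          unfold hE
          apply Measurable.lintegral_prod_right' (f := fun q : ℝ × (Fin n → ℝ) =>
            E.indicator 1 (Y - q.1 • ((1:ℝ), q.2)))
          exact hI.comp (by fun_prop)
        rw [lintegral_mul_const _ (show Measurable fun r : ℝ => wt β (Y.1 - r) * hE E Y r from
          (hw.comp (by fun_prop)).mul hhE)]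

lemma weak_L1 {n : ℕ} {β θ : ℝ} (hβ : -1 < β) (hθ : 0 < θ) (hθ1 : θ < 1) (hθn : θ * ((n:ℝ) + 1) ≤ 1) :
    ∃ C : ℝ≥0∞, C ≠ ⊤ ∧ ∀ V : ℝ × (Fin n → ℝ) → ℝ, ContDiff ℝ 1 V → HasCompactSupport V →
      ∀ E : Set (ℝ × (Fin n → ℝ)), MeasurableSet E → (∀ X ∈ E, 1 ≤ ‖V X‖ₑ) → muw β n E ≠ ⊤ →
      muw β n E ^ (1 - θ) ≤
        C * ∫⁻ Y, wt (β + 1 - θ * ((n:ℝ) + 1 + β)) Y.1 * ‖fderiv ℝ V Y‖ₑ := by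
  set vB := volume (Metric.closedBall (0 : Fin n → ℝ) 1) with hvB
  have hv0 : vB ≠ 0 := (Metric.measure_closedBall_pos volume _ one_pos).ne'
  have hvt : vB ≠ ⊤ := measure_closedBall_lt_top.ne
  refine ⟨vB⁻¹ * (ENNReal.ofReal (Kc β) * vB + 1), ?_, ?_⟩
  · apply ENNReal.mul_ne_top (ENNReal.inv_ne_top.2 hv0)
    exact ENNReal.add_ne_top.2 ⟨ENNReal.mul_ne_top ENNReal.ofReal_ne_top hvt, one_ne_top⟩
  intro V hV hc E hE' hEV ht
  by_cases h0 : muw β n E = 0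
  · rw [h0, ENNReal.zero_rpow_of_pos (by linarith)]
    exact zero_le
  have h := weak_aux (β := β) hV hc hE' hEV
  set M := muw β n E
  set w := wt (β + 1 - θ * ((n:ℝ) + 1 + β))
  have hG : Measurable fun Y => ‖fderiv ℝ V Y‖ₑ :=
    (hV.continuous_fderiv one_ne_zero).measurable.enorm
  have h2 : vB * M ≤ (ENNReal.ofReal (Kc β) * vB + 1) * M ^ θ * ∫⁻ Y, w Y.1 * ‖fderiv ℝ V Y‖ₑ := by
    refine h.trans ?_
    rw [← lintegral_const_mul _ (show Measurable fun Y : ℝ × (Fin n → ℝ) => w Y.1 * ‖fderiv ℝ V Y‖ₑ from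
      ((wt_meas _).comp measurable_fst).mul hG)]
    apply lintegral_mono
    intro Y
    dsimp only
    rw [← mul_assoc]
    gcongr
    exact HE_bound hβ hθ hθn hE' h0 ht Y
  have hMθ0 : M ^ θ ≠ 0 := by simp [h0, ht]
  have hMθt : M ^ θ ≠ ⊤ := by simp [h0, ht]
  have e : M = M ^ (1 - θ) * M ^ θ := by
    rw [← ENNReal.rpow_add _ _ h0 ht]; simp
  have h3 : (vB * M ^ θ) * M ^ (1 - θ) ≤ (vB * M ^ θ) * (vB⁻¹ * (ENNReal.ofReal (Kc β) * vB + 1) * ∫⁻ Y, w Y.1 * ‖fderiv ℝ V Y‖ₑ) := by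
    calc _ = vB * M := by rw [mul_assoc, mul_comm (M ^ θ), ← e]
      _ ≤ _ := h2
      _ = (vB * vB⁻¹) * ((ENNReal.ofReal (Kc β) * vB + 1) * M ^ θ * ∫⁻ Y, w Y.1 * ‖fderiv ℝ V Y‖ₑ) := by
        rw [ENNReal.mul_inv_cancel hv0 hvt, one_mul]
      _ = _ := by ring
  exact (ENNReal.mul_le_mul_iff_right (mul_ne_zero hv0 hMθ0) (ENNReal.mul_ne_top hvt hMθt)).1 h3

lemma sum_abs {p q : ℝ} (hp : 1 < p) (hpq : p < q) {D : ℝ≥0∞} (m A : ℤ → ℝ≥0∞)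
    (hT : ∑' k : ℤ, (2:ℝ≥0∞) ^ ((k:ℝ) * q) * m k ≠ ⊤)
    (h : ∀ k : ℤ, m (k + 1) ^ (1 - (1 / p - 1 / q)) ≤
      D * 2 ^ (-(k:ℝ)) * (A k ^ (1 / p) * m k ^ (1 - 1 / p))) :
    (∑' k : ℤ, (2:ℝ≥0∞) ^ ((k:ℝ) * q) * m k) ^ (p / q) ≤
      (2 ^ q * D ^ (1 - (1 / p - 1 / q))⁻¹) ^ (p * (1 - (1 / p - 1 / q))) * ∑' k, A k := by
  have hp0 : 0 < p := by linarith
  have hq0 : 0 < q := by linarith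
  have hinv : 1 / q < 1 / p := one_div_lt_one_div_of_lt hp0 hpq
  have hp1 : 1 / p < 1 := by rw [div_lt_one hp0]; exact hp
  have hq1 : 0 < 1 / q := by positivity
  set κ := 1 - (1 / p - 1 / q) with hκ
  have hκ0 : 0 < κ := by linarith
  have hκ1 : κ < 1 := by linarith
  set b := κ⁻¹ with hb
  have hb1 : 1 < b := (one_lt_inv₀ hκ0).2 hκ1
  have hκb : κ * b = 1 := mul_inv_cancel₀ hκ0.ne'
  set M : ℤ → ℝ≥0∞ := fun k => (2:ℝ≥0∞) ^ ((k:ℝ) * q) * m k with hM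
  set T := ∑' k, M k with hTdef
  set AA := ∑' k, A k with hAA
  set p' := 1 - 1 / p with hp'
  have hp'0 : 0 < p' := by linarith
  have hqp' : q - b = q * p' * b := by
    have : κ * q = q * p' + 1 := by
      rw [hκ, hp']; field_simp
      ring
    have h2 : q = b * (κ * q) := by rw [← mul_assoc, mul_comm b, hκb, one_mul]
    conv_lhs => rw [h2, this]
    ring
  let x : ℤ → ℝ≥0∞ := fun k => A k ^ (1 / p) * M k ^ p'
  have step : ∀ k, M (k + 1) ≤ 2 ^ q * D ^ b * x k ^ b := by
    intro k
    have h1 : m (k + 1) ≤ (D * 2 ^ (-(k:ℝ)) * (A k ^ (1 / p) * m k ^ p')) ^ b := by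
      calc m (k + 1) = (m (k + 1) ^ κ) ^ b := by rw [← ENNReal.rpow_mul, hκb, ENNReal.rpow_one]
        _ ≤ _ := ENNReal.rpow_le_rpow (h k) (by linarith)
    have h2 : (2:ℝ≥0∞) ^ (((k+1:ℤ):ℝ) * q) * (2 ^ (-(k:ℝ))) ^ b = 2 ^ q * (2 ^ ((k:ℝ) * q * p')) ^ b := by
      rw [← ENNReal.rpow_mul, ← ENNReal.rpow_mul, ← ENNReal.rpow_add _ _ (by simp) (by simp),
        ← ENNReal.rpow_add _ _ (by simp) (by simp)]
      congr 1
      push_cast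
      linear_combination (k:ℝ) * hqp'
    have hb0 : 0 ≤ b := by linarith
    calc M (k + 1) ≤ 2 ^ (((k+1:ℤ):ℝ) * q) * (D * 2 ^ (-(k:ℝ)) * (A k ^ (1 / p) * m k ^ p')) ^ b := by
          simp only [hM]; gcongr
      _ = (2 ^ (((k+1:ℤ):ℝ) * q) * (2 ^ (-(k:ℝ))) ^ b) * D ^ b * (A k ^ (1 / p) * m k ^ p') ^ b := by
          rw [ENNReal.mul_rpow_of_nonneg _ _ hb0, ENNReal.mul_rpow_of_nonneg _ _ hb0]; ring
      _ = 2 ^ q * D ^ b * ((2 ^ ((k:ℝ) * q * p')) * (A k ^ (1 / p) * m k ^ p')) ^ b := by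
          rw [h2, ENNReal.mul_rpow_of_nonneg (2 ^ ((k:ℝ) * q * p')) _ hb0]; ring
      _ = _ := by
          congr 2
          simp only [x, hM]
          rw [ENNReal.mul_rpow_of_nonneg _ _ hp'0.le, ← ENNReal.rpow_mul]
          ring
  have hholder : ∑' k, x k ≤ AA ^ (1 / p) * T ^ p' := by
    have hc : p.HolderConjugate p'⁻¹ := by
      rw [Real.holderConjugate_iff]
      refine ⟨hp, ?_⟩
      rw [inv_inv, hp']; simp
    have := ENNReal.lintegral_mul_le_Lp_mul_Lq (Measure.count : Measure ℤ) hc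
      (f := fun k => A k ^ (1 / p)) (g := fun k => M k ^ p')
      (measurable_of_countable _).aemeasurable (measurable_of_countable _).aemeasurable
    simp only [lintegral_count, Pi.mul_apply, ← ENNReal.rpow_mul] at this
    rw [one_div_mul_cancel hp0.ne', mul_inv_cancel₀ hp'0.ne'] at this
    simp only [ENNReal.rpow_one] at this
    rw [one_div p'⁻¹, inv_inv] at this
    exact this
  have hS : ∑' k, x k ^ b ≤ (∑' k, x k) ^ b := by
    have e : ∀ y : ℝ≥0∞, y ^ b = y * y ^ (b - 1) := by
      intro y
      conv_rhs => rw [← ENNReal.rpow_one y, ← ENNReal.rpow_mul, one_mul]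
      rw [← ENNReal.rpow_add_of_nonneg _ _ (by norm_num) (by linarith)]
      congr 1; ring
    calc ∑' k, x k ^ b ≤ ∑' k, x k * (∑' k, x k) ^ (b - 1) := by
          apply ENNReal.tsum_le_tsum
          intro k
          rw [e]
          have hk : x k ≤ ∑' k, x k := ENNReal.le_tsum k
          exact mul_le_mul_right (ENNReal.rpow_le_rpow hk (by linarith)) _
      _ = _ := by rw [ENNReal.tsum_mul_right, ← e]
  have hmain : T ≤ 2 ^ q * D ^ b * (AA ^ (1 / p) * T ^ p') ^ b := by
    calc T = ∑' k, M (k + 1) := ((Equiv.addRight (1:ℤ)).tsum_eq M).symm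
      _ ≤ ∑' k, 2 ^ q * D ^ b * x k ^ b := ENNReal.tsum_le_tsum step
      _ = 2 ^ q * D ^ b * ∑' k, x k ^ b := ENNReal.tsum_mul_left
      _ ≤ _ := by
        gcongr
        refine hS.trans ?_
        gcongr
  by_cases hT0 : T = 0
  · rw [hT0, ENNReal.zero_rpow_of_pos (by positivity)]; exact zero_le
  have hTp0 : T ^ (p' * b) ≠ 0 := by simp [hT0, hT]
  have hTpt : T ^ (p' * b) ≠ ⊤ := by simp [hT0, hT]
  have hbq : 1 - p' * b = b / q := by
    have : b / q = (q - q * p' * b) / q := by rw [← hqp']; ring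
    rw [this]; field_simp
  have h5 : T ^ (b / q) ≤ 2 ^ q * D ^ b * AA ^ (b / p) := by
    have : T ^ (p' * b) * T ^ (b / q) ≤ T ^ (p' * b) * (2 ^ q * D ^ b * AA ^ (b / p)) := by
      rw [← ENNReal.rpow_add _ _ hT0 hT, ← hbq]
      have : p' * b + (1 - p' * b) = 1 := by ring
      rw [this, ENNReal.rpow_one]
      refine hmain.trans (le_of_eq ?_)
      rw [ENNReal.mul_rpow_of_nonneg _ _ (by linarith), ← ENNReal.rpow_mul, ← ENNReal.rpow_mul]
      have : 1 / p * b = b / p := by ring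
      rw [this]; ring
    exact (ENNReal.mul_le_mul_iff_right hTp0 hTpt).1 this
  have h6 := ENNReal.rpow_le_rpow h5 (z := p * κ) (by positivity)
  rw [← ENNReal.rpow_mul, ENNReal.mul_rpow_of_nonneg _ _ (by positivity), ← ENNReal.rpow_mul AA] at h6
  have e1 : b / q * (p * κ) = p / q := by
    calc b / q * (p * κ) = (κ * b) * (p / q) := by ring
      _ = _ := by rw [hκb, one_mul]
  have e2 : b / p * (p * κ) = 1 := by
    calc b / p * (p * κ) = (κ * b) * (p / p) := by ring
      _ = _ := by rw [hκb, one_mul, div_self hp0.ne']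
  rw [e1, e2, ENNReal.rpow_one] at h6
  exact h6

lemma sum_finite {q : ℝ} (hq : 0 < q) (m : ℤ → ℝ≥0∞) (m0 : ℝ≥0∞) (hm0 : m0 ≠ ⊤)
    (hm : ∀ k, m k ≤ m0) (K : ℤ) (hK : ∀ k, K < k → m k = 0) :
    ∑' k : ℤ, (2:ℝ≥0∞) ^ ((k:ℝ) * q) * m k ≠ ⊤ := by
  have hinj : Function.Injective (fun j : ℕ => K - (j:ℤ)) := by
    intro a b h; simpa using h
  have hsup : Function.support (fun k : ℤ => (2:ℝ≥0∞) ^ ((k:ℝ) * q) * m k) ⊆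
      range (fun j : ℕ => K - (j:ℤ)) := by
    intro k hk
    have : k ≤ K := by
      by_contra hcon
      push Not at hcon
      exact hk (by simp [hK k hcon])
    exact ⟨(K - k).toNat, by simp; omega⟩
  rw [← hinj.tsum_eq hsup]
  have hle : ∑' j : ℕ, (2:ℝ≥0∞) ^ (((K - (j:ℤ) : ℤ):ℝ) * q) * m (K - j) ≤
      ∑' j : ℕ, (2:ℝ≥0∞) ^ ((K:ℝ) * q) * m0 * ((2:ℝ≥0∞) ^ (-q)) ^ j := by
    apply ENNReal.tsum_le_tsum
    intro j
    have : (2:ℝ≥0∞) ^ (((K - (j:ℤ) : ℤ):ℝ) * q) = (2:ℝ≥0∞) ^ ((K:ℝ) * q) * ((2:ℝ≥0∞) ^ (-q)) ^ j := by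
      rw [← ENNReal.rpow_natCast, ← ENNReal.rpow_mul, ← ENNReal.rpow_add _ _ (by simp) (by simp)]
      congr 1; push_cast; ring
    rw [this]
    calc _ ≤ (2:ℝ≥0∞) ^ ((K:ℝ) * q) * ((2:ℝ≥0∞) ^ (-q)) ^ j * m0 := by gcongr; exact hm _
      _ = _ := by ring
  refine ne_top_of_le_ne_top ?_ hle
  rw [ENNReal.tsum_mul_left, ENNReal.tsum_geometric]
  apply ENNReal.mul_ne_top (ENNReal.mul_ne_top (by simp) hm0)
  rw [ENNReal.inv_ne_top]
  have : (2:ℝ≥0∞) ^ (-q) < 1 := ENNReal.rpow_lt_one_of_one_lt_of_neg (by norm_num) (by linarith)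
  exact (tsub_pos_of_lt this).ne'

/-- cutoff -/
def psi (x : ℝ) : ℝ := Real.smoothTransition (x ^ 2 - 1)

lemma psi_contDiff : ContDiff ℝ 1 psi := by
  unfold psi
  exact Real.smoothTransition.contDiff.comp (by fun_prop)

lemma psi_one {x : ℝ} (h : 2 ≤ |x|) : psi x = 1 := by
  apply Real.smoothTransition.one_of_one_le
  have : 4 ≤ |x| ^ 2 := by nlinarith
  rw [sq_abs] at this; linarith

lemma psi_zero : psi 0 = 0 := by
  apply Real.smoothTransition.zero_of_nonpos; norm_num

lemma psi_deriv_zero {x : ℝ} (h : ¬ (1 ≤ |x| ∧ |x| < 2)) : deriv psi x = 0 := by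
  by_cases h1 : |x| < 1
  · have : psi =ᶠ[nhds x] fun _ => 0 := by
      filter_upwards [(isOpen_lt continuous_abs continuous_const).mem_nhds h1] with y hy
      apply Real.smoothTransition.zero_of_nonpos
      have hy' : |y| < 1 := hy
      have : |y| ^ 2 ≤ 1 := by nlinarith [abs_nonneg y]
      rw [sq_abs] at this; linarith
    rw [this.deriv_eq]; simp
  · have h2 : 3 / 2 < |x| := by
      by_contra hcon
      exact h ⟨not_lt.1 h1, by linarith⟩
    have : psi =ᶠ[nhds x] fun _ => 1 := by
      filter_upwards [(isOpen_lt continuous_const continuous_abs).mem_nhds h2] with y hy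
      apply Real.smoothTransition.one_of_one_le
      have hy' : 3 / 2 < |y| := hy
      have : 2 ≤ |y| ^ 2 := by nlinarith [abs_nonneg y]
      rw [sq_abs] at this; linarith
    rw [this.deriv_eq]; simp

lemma psi_bound : ∃ C : ℝ, 0 ≤ C ∧ ∀ x, ‖deriv psi x‖ ≤ C := by
  have hcont : Continuous (deriv psi) := psi_contDiff.continuous_deriv le_rfl
  have hcs : HasCompactSupport (deriv psi) := by
    apply HasCompactSupport.intro (isCompact_closedBall (0:ℝ) 2)
    intro x hx
    apply psi_deriv_zero
    intro h
    apply hx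
    simp [h.2.le]
  obtain ⟨C, hC⟩ := hcs.exists_bound_of_continuous hcont
  exact ⟨C, (norm_nonneg _).trans (hC 0), hC⟩

lemma level_step {n : ℕ} {β θ : ℝ} (hβ : -1 < β) (hθ : 0 < θ) (hθ1 : θ < 1)
    (hθn : θ * ((n:ℝ) + 1) ≤ 1) :
    ∃ C : ℝ≥0∞, C ≠ ⊤ ∧ ∀ V : ℝ × (Fin n → ℝ) → ℝ, ContDiff ℝ 1 V → HasCompactSupport V →
      ∀ c : ℝ, 0 < c → muw β n {X | 2 * c ≤ |V X|} ≠ ⊤ →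
      muw β n {X | 2 * c ≤ |V X|} ^ (1 - θ) ≤
        C * ENNReal.ofReal c⁻¹ * ∫⁻ Y in {X | c ≤ |V X| ∧ |V X| < 2 * c},
          wt (β + 1 - θ * ((n:ℝ) + 1 + β)) Y.1 * ‖fderiv ℝ V Y‖ₑ := by
  obtain ⟨C, hC, H⟩ := weak_L1 (n := n) hβ hθ hθ1 hθn
  obtain ⟨C', hC'0, hC'⟩ := psi_bound
  refine ⟨C * ENNReal.ofReal C', ENNReal.mul_ne_top hC ENNReal.ofReal_ne_top, ?_⟩
  intro V hV hc c hc0 ht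
  have hVm : Measurable V := hV.continuous.measurable
  set F := {X | c ≤ |V X| ∧ |V X| < 2 * c} with hF
  have hFm : MeasurableSet F :=
    (measurableSet_le measurable_const hVm.abs).inter (measurableSet_lt hVm.abs measurable_const)
  have hEm : MeasurableSet {X | 2 * c ≤ |V X|} := measurableSet_le measurable_const hVm.abs
  have h1 : ContDiff ℝ 1 (fun X => psi (c⁻¹ * V X)) :=
    psi_contDiff.comp (contDiff_const.mul hV)
  have h2 : HasCompactSupport (fun X => psi (c⁻¹ * V X)) :=
    hc.comp_left (g := fun y => psi (c⁻¹ * y)) (by simp [psi_zero])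
  have h3 := H _ h1 h2 _ hEm (by
    intro X hX
    have hX' : 2 * c ≤ |V X| := hX
    rw [psi_one]
    · simp
    · rw [abs_mul, abs_inv, abs_of_pos hc0, inv_mul_eq_div, le_div_iff₀ hc0]; exact hX') ht
  refine h3.trans ?_
  rw [mul_assoc, mul_assoc]
  gcongr
  rw [← lintegral_indicator hFm, ← mul_assoc, ← ENNReal.ofReal_mul hC'0,
    ← lintegral_const_mul' _ _ ENNReal.ofReal_ne_top]
  apply lintegral_mono
  intro Y
  dsimp only
  have hd : fderiv ℝ (fun X => psi (c⁻¹ * V X)) Y = deriv psi (c⁻¹ * V Y) • c⁻¹ • fderiv ℝ V Y := by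
    have a1 : HasFDerivAt (fun X => c⁻¹ * V X) (c⁻¹ • fderiv ℝ V Y) Y :=
      (hV.differentiable one_ne_zero Y).hasFDerivAt.const_mul c⁻¹
    have a2 : HasDerivAt psi (deriv psi (c⁻¹ * V Y)) (c⁻¹ * V Y) :=
      (psi_contDiff.differentiable one_ne_zero _).hasDerivAt
    exact (a2.comp_hasFDerivAt Y a1).fderiv
  rw [hd]
  by_cases hY : Y ∈ F
  · rw [indicator_of_mem hY, enorm_smul, enorm_smul]
    have : ‖deriv psi (c⁻¹ * V Y)‖ₑ * ‖c⁻¹‖ₑ ≤ ENNReal.ofReal (C' * c⁻¹) := by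
      rw [ENNReal.ofReal_mul hC'0, ← ofReal_norm, ← ofReal_norm (c⁻¹), Real.norm_of_nonneg (inv_nonneg.2 hc0.le)]
      gcongr
      exact hC' _
    calc _ = (‖deriv psi (c⁻¹ * V Y)‖ₑ * ‖c⁻¹‖ₑ) * (wt (β + 1 - θ * (↑n + 1 + β)) Y.1 * ‖fderiv ℝ V Y‖ₑ) := by ring
      _ ≤ _ := by gcongr
  · rw [enorm_smul, psi_deriv_zero]
    · rw [enorm_zero, zero_mul, mul_zero]; exact zero_le
    · rw [abs_mul, abs_inv, abs_of_pos hc0, inv_mul_eq_div, le_div_iff₀ hc0, div_lt_iff₀ hc0, one_mul]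
      exact hY

lemma wt_split {α β p t : ℝ} (hp : 1 < p) :
    wt (α / p + β * (1 - 1 / p)) t = wt α t ^ (1 / p) * wt β t ^ (1 - 1 / p) := by
  have hp0 : 0 < p := by linarith
  have hp1 : 1 / p < 1 := by rw [div_lt_one hp0]; exact hp
  rcases le_or_gt t 0 with h | h
  · rw [wt_of_nonpos h, wt_of_nonpos h, ENNReal.zero_rpow_of_pos (by positivity), zero_mul]
  · rw [wt_of_pos h, wt_of_pos h, wt_of_pos h, ENNReal.ofReal_rpow_of_pos (by positivity),
      ENNReal.ofReal_rpow_of_pos (by positivity), ← ENNReal.ofReal_mul (by positivity),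
      ← Real.rpow_mul h.le, ← Real.rpow_mul h.le, ← Real.rpow_add h]
    congr 2; ring

lemma holder_step {n : ℕ} {α β p : ℝ} (hp : 1 < p) {G : ℝ × (Fin n → ℝ) → ℝ≥0∞} (hG : Measurable G)
    {F : Set (ℝ × (Fin n → ℝ))} (hF : MeasurableSet F) :
    ∫⁻ Y in F, wt (α / p + β * (1 - 1 / p)) Y.1 * G Y ≤
      (∫⁻ Y in F, wt α Y.1 * G Y ^ p) ^ (1 / p) * (muw β n F) ^ (1 - 1 / p) := by
  have hp0 : 0 < p := by linarith
  have hp1 : 1 / p < 1 := by rw [div_lt_one hp0]; exact hp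
  set p' := 1 - 1 / p with hp'
  have hp'0 : 0 < p' := by linarith
  have hc : p.HolderConjugate p'⁻¹ := by
    rw [Real.holderConjugate_iff]
    refine ⟨hp, ?_⟩
    rw [inv_inv, hp']; simp
  have hwα : Measurable fun Y : ℝ × (Fin n → ℝ) => wt α Y.1 := (wt_meas α).comp measurable_fst
  have hwβ : Measurable fun Y : ℝ × (Fin n → ℝ) => wt β Y.1 := (wt_meas β).comp measurable_fst
  have h := ENNReal.lintegral_mul_le_Lp_mul_Lq (volume.restrict F) hc
    (f := fun Y => wt α Y.1 ^ (1 / p) * G Y) (g := fun Y => wt β Y.1 ^ p')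
    ((hwα.pow_const _).mul hG).aemeasurable (hwβ.pow_const _).aemeasurable
  have e1 : muw β n F = ∫⁻ Y in F, wt β Y.1 := by unfold muw; rw [withDensity_apply _ hF]
  have e2 : ∀ Y : ℝ × (Fin n → ℝ), (wt α Y.1 ^ (1 / p) * G Y) ^ p = wt α Y.1 * G Y ^ p := by
    intro Y
    rw [ENNReal.mul_rpow_of_nonneg _ _ hp0.le, ← ENNReal.rpow_mul, one_div_mul_cancel hp0.ne',
      ENNReal.rpow_one]
  have e3 : ∀ Y : ℝ × (Fin n → ℝ), (wt β Y.1 ^ p') ^ p'⁻¹ = wt β Y.1 := by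
    intro Y
    rw [← ENNReal.rpow_mul, mul_inv_cancel₀ hp'0.ne', ENNReal.rpow_one]
  simp only [e2, e3, ← e1] at h
  rw [one_div p'⁻¹, inv_inv] at h
  refine le_trans (le_of_eq ?_) h
  congr 1
  ext Y
  rw [wt_split hp]
  simp only [Pi.mul_apply]
  ring

lemma muw_finite {n : ℕ} {β : ℝ} (hβ : -1 < β) {K : Set (ℝ × (Fin n → ℝ))} (hK : IsCompact K) :
    muw β n K ≠ ⊤ := by
  obtain ⟨R, hR0, hR⟩ : ∃ R : ℝ, 0 < R ∧ K ⊆ Metric.closedBall 0 R := by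
    obtain ⟨R, hR⟩ := hK.isBounded.subset_closedBall 0
    exact ⟨max R 1, by positivity, hR.trans (Metric.closedBall_subset_closedBall (le_max_left _ _))⟩
  refine ne_top_of_le_ne_top ?_ (measure_mono hR)
  rw [muw_apply β Metric.isClosed_closedBall.measurableSet]
  have hle : ∀ t, wt β t * volume (Prod.mk t ⁻¹' (Metric.closedBall (0 : ℝ × (Fin n → ℝ)) R)) ≤
      (Ioc 0 R).indicator (fun t => ENNReal.ofReal (t ^ β) * volume (Metric.closedBall (0 : Fin n → ℝ) R)) t := by
    intro t
    rcases le_or_gt t 0 with h | h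
    · rw [wt_of_nonpos h, zero_mul]; exact zero_le
    rcases le_or_gt t R with h2 | h2
    · rw [indicator_of_mem (show t ∈ Ioc 0 R from ⟨h, h2⟩), wt_of_pos h]
      gcongr
      intro y hy
      have hy' : ‖((t, y) : ℝ × (Fin n → ℝ))‖ ≤ R := by simpa using hy
      simpa using (norm_snd_le _).trans hy'
    · have : Prod.mk t ⁻¹' (Metric.closedBall (0 : ℝ × (Fin n → ℝ)) R) = ∅ := by
        ext y
        simp only [mem_preimage, mem_closedBall_zero_iff, mem_empty_iff_false, iff_false, not_le]
        refine h2.trans_le (le_trans ?_ (norm_fst_le _))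
        exact le_abs_self t
      simp [this]
  refine ne_top_of_le_ne_top ?_ (lintegral_mono hle)
  rw [lintegral_indicator measurableSet_Ioc, lintegral_mul_const _ (by fun_prop)]
  apply ENNReal.mul_ne_top _ measure_closedBall_lt_top.ne
  have := intervalIntegral.intervalIntegrable_rpow' (a := 0) (b := R) hβ
  rw [intervalIntegrable_iff_integrableOn_Ioc_of_le hR0.le] at this
  exact this.lintegral_lt_top.ne

lemma two_zpow (k : ℤ) : ENNReal.ofReal ((2:ℝ) ^ k) = (2:ℝ≥0∞) ^ (k:ℝ) := by
  rw [← Real.rpow_intCast, ← ENNReal.ofReal_rpow_of_pos (by norm_num)]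
  simp

theorem main_prod {n : ℕ} {α β p q : ℝ} (hp : 1 < p) (hpq : p < q) (hβ : -1 < β)
    (hθn : (1 / p - 1 / q) * ((n:ℝ) + 1) ≤ 1)
    (ha : β + 1 - (1 / p - 1 / q) * ((n:ℝ) + 1 + β) = α / p + β * (1 - 1 / p)) :
    ∃ C : ℝ≥0∞, C ≠ ⊤ ∧ ∀ V : ℝ × (Fin n → ℝ) → ℝ, ContDiff ℝ 1 V → HasCompactSupport V →
      (∫⁻ X, wt β X.1 * ‖V X‖ₑ ^ q) ^ (p / q) ≤ C * ∫⁻ X, wt α X.1 * ‖fderiv ℝ V X‖ₑ ^ p := by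
  have hp0 : 0 < p := by linarith
  have hq0 : 0 < q := by linarith
  have hinv : 1 / q < 1 / p := one_div_lt_one_div_of_lt hp0 hpq
  have hp1 : 1 / p < 1 := by rw [div_lt_one hp0]; exact hp
  have hq1 : 0 < 1 / q := by positivity
  obtain ⟨D, hD, H⟩ := level_step (n := n) (θ := 1 / p - 1 / q) hβ (by linarith) (by linarith) hθn
  refine ⟨(2 ^ q) ^ (p / q) * (2 ^ q * D ^ (1 - (1 / p - 1 / q))⁻¹) ^ (p * (1 - (1 / p - 1 / q))), ?_, ?_⟩
  · have hκ : 0 < 1 - (1 / p - 1 / q) := by linarith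
    apply ENNReal.mul_ne_top
    · exact ENNReal.rpow_ne_top_of_nonneg (by positivity)
        (ENNReal.rpow_ne_top_of_nonneg hq0.le (by simp))
    · apply ENNReal.rpow_ne_top_of_nonneg (by positivity)
      apply ENNReal.mul_ne_top (ENNReal.rpow_ne_top_of_nonneg hq0.le (by simp))
      exact ENNReal.rpow_ne_top_of_nonneg (by positivity) hD
  intro V hV hc
  have hVm : Measurable V := hV.continuous.measurable
  have hG : Measurable fun Y => ‖fderiv ℝ V Y‖ₑ :=
    (hV.continuous_fderiv one_ne_zero).measurable.enorm
  let Ek : ℤ → Set (ℝ × (Fin n → ℝ)) := fun k => {X | (2:ℝ) ^ k ≤ |V X|}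
  have hEk : ∀ k, MeasurableSet (Ek k) := fun k => measurableSet_le measurable_const hVm.abs
  let F : ℤ → Set (ℝ × (Fin n → ℝ)) := fun k => {X | (2:ℝ) ^ k ≤ |V X| ∧ |V X| < 2 * 2 ^ k}
  have hF : ∀ k, MeasurableSet (F k) := fun k =>
    (measurableSet_le measurable_const hVm.abs).inter (measurableSet_lt hVm.abs measurable_const)
  let m : ℤ → ℝ≥0∞ := fun k => muw β n (Ek k)
  let A : ℤ → ℝ≥0∞ := fun k => ∫⁻ Y in F k, wt α Y.1 * ‖fderiv ℝ V Y‖ₑ ^ p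
  have hsub : ∀ k, Ek k ⊆ tsupport V := by
    intro k X hX
    apply subset_tsupport
    intro h0
    have hX' : (2:ℝ) ^ k ≤ |V X| := hX
    rw [h0, abs_zero] at hX'
    exact absurd hX' (not_le.2 (by positivity))
  have hfin : muw β n (tsupport V) ≠ ⊤ := muw_finite hβ hc
  have hmle : ∀ k, m k ≤ muw β n (tsupport V) := fun k => measure_mono (hsub k)
  obtain ⟨B, hB⟩ := hc.exists_bound_of_continuous hV.continuous
  obtain ⟨K, hK⟩ : ∃ K : ℕ, B < (2:ℝ) ^ K := pow_unbounded_of_one_lt B (by norm_num)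
  have hT := sum_finite hq0 m _ hfin hmle (K : ℤ) (by
    intro k hk
    have : Ek k = ∅ := by
      ext X
      simp only [mem_empty_iff_false, iff_false]
      intro hX
      have hX' : (2:ℝ) ^ k ≤ |V X| := hX
      have h1 : (2:ℝ) ^ (K:ℤ) ≤ 2 ^ k := zpow_le_zpow_right₀ (by norm_num) hk.le
      rw [zpow_natCast] at h1
      have := hB X
      rw [Real.norm_eq_abs] at this
      linarith
    simp [m, this])
  have hstep : ∀ k : ℤ, m (k + 1) ^ (1 - (1 / p - 1 / q)) ≤
      D * 2 ^ (-(k:ℝ)) * (A k ^ (1 / p) * m k ^ (1 - 1 / p)) := by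
    intro k
    have hEeq : {X | 2 * (2:ℝ) ^ k ≤ |V X|} = Ek (k + 1) := by
      ext X
      simp only [Ek, mem_ofPred_eq]
      rw [zpow_add_one₀ (by norm_num), mul_comm]
    have h1 := H V hV hc ((2:ℝ) ^ k) (by positivity) (by
      rw [hEeq]; exact ne_top_of_le_ne_top hfin (hmle _))
    rw [hEeq, ha] at h1
    refine h1.trans ?_
    have e : ENNReal.ofReal ((2:ℝ) ^ k)⁻¹ = 2 ^ (-(k:ℝ)) := by
      rw [← zpow_neg, two_zpow]; push_cast; rfl
    rw [e]
    gcongr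
    refine (holder_step hp hG (hF k)).trans ?_
    apply mul_le_mul_right
    apply ENNReal.rpow_le_rpow _ (by linarith)
    exact measure_mono fun X hX => hX.1
  have hsum := sum_abs hp hpq m A hT hstep
  have hA : ∑' k, A k ≤ ∫⁻ X, wt α X.1 * ‖fderiv ℝ V X‖ₑ ^ p := by
    have hdisj : Pairwise (Function.onFun Disjoint F) := by
      have key : ∀ i j : ℤ, i < j → Disjoint (F i) (F j) := by
        intro i j hij
        rw [Set.disjoint_left]
        intro X hi hj
        have h1 : (2:ℝ) ^ (i + 1) ≤ 2 ^ j := zpow_le_zpow_right₀ (by norm_num) hij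
        rw [zpow_add_one₀ (by norm_num)] at h1
        have h2 := hi.2
        have h3 := hj.1
        linarith
      intro i j hij
      rcases lt_or_gt_of_ne hij with h | h
      · exact key i j h
      · exact (key j i h).symm
    rw [← lintegral_iUnion hF hdisj]
    exact setLIntegral_le_lintegral _ _
  have hL : ∫⁻ X, wt β X.1 * ‖V X‖ₑ ^ q ≤ 2 ^ q * ∑' k : ℤ, (2:ℝ≥0∞) ^ ((k:ℝ) * q) * m k := by
    have hwβ : Measurable fun Y : ℝ × (Fin n → ℝ) => wt β Y.1 := (wt_meas β).comp measurable_fst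
    calc ∫⁻ X, wt β X.1 * ‖V X‖ₑ ^ q
        ≤ ∫⁻ X, ∑' k : ℤ, 2 ^ q * (2:ℝ≥0∞) ^ ((k:ℝ) * q) * (Ek k).indicator (fun X => wt β X.1) X := by
          apply lintegral_mono
          intro X
          dsimp only
          by_cases h0 : V X = 0
          · rw [h0, enorm_zero, ENNReal.zero_rpow_of_pos hq0, mul_zero]; exact zero_le
          obtain ⟨k, hk1, hk2⟩ := exists_mem_Ico_zpow (x := |V X|) (y := 2) (abs_pos.2 h0) (by norm_num)
          refine le_trans ?_ (ENNReal.le_tsum k)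
          rw [indicator_of_mem (show X ∈ Ek k from hk1), mul_comm (wt β X.1)]
          gcongr
          have : ‖V X‖ₑ ≤ 2 ^ ((k:ℝ) + 1) := by
            rw [← ofReal_norm, Real.norm_eq_abs]
            have := ENNReal.ofReal_le_ofReal hk2.le
            rw [two_zpow] at this
            simpa using this
          refine (ENNReal.rpow_le_rpow this hq0.le).trans (le_of_eq ?_)
          rw [← ENNReal.rpow_mul, ← ENNReal.rpow_add _ _ (by simp) (by simp)]
          congr 1; ring
      _ = ∑' k : ℤ, 2 ^ q * (2:ℝ≥0∞) ^ ((k:ℝ) * q) * m k := by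
          rw [lintegral_tsum]
          · congr 1
            ext k
            rw [lintegral_const_mul _ (hwβ.indicator (hEk k)), lintegral_indicator (hEk k)]
            simp only [m, muw]
            rw [withDensity_apply _ (hEk k)]
          · intro k
            exact ((hwβ.indicator (hEk k)).const_mul _).aemeasurable
      _ = _ := by
          rw [← ENNReal.tsum_mul_left]
          simp only [mul_assoc]
  calc _ ≤ (2 ^ q * ∑' k : ℤ, (2:ℝ≥0∞) ^ ((k:ℝ) * q) * m k) ^ (p / q) :=
        ENNReal.rpow_le_rpow hL (by positivity)
    _ = (2 ^ q) ^ (p / q) * (∑' k : ℤ, (2:ℝ≥0∞) ^ ((k:ℝ) * q) * m k) ^ (p / q) :=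
        ENNReal.mul_rpow_of_nonneg _ _ (by positivity)
    _ ≤ _ := by
        rw [mul_assoc]
        gcongr
        refine hsum.trans ?_
        gcongr

/-- linear coordinates -/
def Lmap (n : ℕ) : (ℝ × (Fin n → ℝ)) →ₗ[ℝ] EuclideanSpace ℝ (Fin (n + 1)) where
  toFun Z := WithLp.toLp 2 ((MeasurableEquiv.piFinSuccAbove (fun _ => ℝ) (Fin.last n)).symm Z)
  map_add' Z Z' := by
    ext i
    refine Fin.lastCases ?_ (fun j => ?_) i <;>
      simp [MeasurableEquiv.piFinSuccAbove, Fin.insertNthEquiv]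
  map_smul' c Z := by
    ext i
    refine Fin.lastCases ?_ (fun j => ?_) i <;>
      simp [MeasurableEquiv.piFinSuccAbove, Fin.insertNthEquiv]

lemma Lmap_last (n : ℕ) (Z : ℝ × (Fin n → ℝ)) : Lmap n Z (Fin.last n) = Z.1 := by
  simp [Lmap, MeasurableEquiv.piFinSuccAbove, Fin.insertNthEquiv]

lemma Lmap_mp (n : ℕ) : MeasurePreserving (Lmap n) volume volume :=
  (PiLp.volume_preserving_toLp (Fin (n + 1))).comp
    (volume_preserving_piFinSuccAbove (fun _ => ℝ) (Fin.last n)).symm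

lemma Lmap_inj (n : ℕ) : Function.Injective (Lmap n) :=
  (WithLp.toLp_injective 2).comp
    (MeasurableEquiv.piFinSuccAbove (fun _ => ℝ) (Fin.last n)).symm.injective

lemma half_eq {n : ℕ} (γ : ℝ) (f : EuclideanSpace ℝ (Fin (n + 1)) → ℝ≥0∞) (hf : Measurable f) :
    ∫⁻ X in upperHalfE n, ENNReal.ofReal (X (Fin.last n) ^ γ) * f X =
      ∫⁻ Z : ℝ × (Fin n → ℝ), wt γ Z.1 * f (Lmap n Z) := by
  have hcoord : Measurable fun X : EuclideanSpace ℝ (Fin (n + 1)) => X (Fin.last n) := by fun_prop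
  have hU : MeasurableSet (upperHalfE n) := measurableSet_lt measurable_const hcoord
  have hw : Measurable fun X : EuclideanSpace ℝ (Fin (n + 1)) => wt γ (X (Fin.last n)) * f X :=
    ((wt_meas γ).comp hcoord).mul hf
  have h := (Lmap_mp n).lintegral_comp hw
  simp only [Lmap_last] at h
  rw [h, ← lintegral_indicator hU]
  congr 1
  ext X
  by_cases hX : X ∈ upperHalfE n
  · rw [indicator_of_mem hX, wt_of_pos hX]
  · rw [indicator_of_notMem hX, wt_of_nonpos (not_lt.1 hX), zero_mul]

/-- Weighted Sobolev inequality with partial variable weight `t` on the upper half space. -/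
theorem weighted_sobolev_upper_half_space
    (n : ℕ) (hn : 1 ≤ n) (p α₁ β₁ pst : ℝ)
    (hp1 : 1 < p) (hpn : p < (n : ℝ) + 1)
    (hpst : pst = p * ((n : ℝ) + 1 + β₁) / ((n : ℝ) + 1 + α₁ - p))
    (hppst : p < pst)
    (hα₁l : p * n / pst - ((n : ℝ) + 1 - p) < α₁) (hα₁r : α₁ < p - 1)
    (hβ₁l : -1 < β₁) (hβ₁r : β₁ ≤ α₁ * ((n : ℝ) + 1) / ((n : ℝ) + 1 - p)) :
    ∃ S : ℝ, 0 < S ∧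
      ∀ u : EuclideanSpace ℝ (Fin (n + 1)) → ℝ,
        ContDiff ℝ (⊤ : ℕ∞) u → HasCompactSupport u →
        (∫⁻ X in upperHalfE n,
            ENNReal.ofReal (X (Fin.last n) ^ β₁) * ENNReal.ofReal |u X| ^ pst) ^ (p / pst)
          ≤ ENNReal.ofReal S *
            ∫⁻ X in upperHalfE n,
              ENNReal.ofReal (X (Fin.last n) ^ α₁) *
                ENNReal.ofReal ‖fderiv ℝ u X‖ ^ p := by
  have hp0 : 0 < p := by linarith
  have hq0 : 0 < pst := by linarith
  have hn1 : (1:ℝ) ≤ n := by exact_mod_cast hn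
  have hNβ : 0 < (n:ℝ) + 1 + β₁ := by linarith
  have hden : 0 < (n:ℝ) + 1 + α₁ - p := by
    by_contra hcon
    push Not at hcon
    have : pst ≤ 0 := by
      rw [hpst]
      exact div_nonpos_of_nonneg_of_nonpos (by positivity) hcon
    linarith
  have hinv : 1 / pst = ((n:ℝ) + 1 + α₁ - p) / (p * ((n:ℝ) + 1 + β₁)) := by
    rw [hpst, one_div_div]
  have hθeq : (1 / p - 1 / pst) * ((n:ℝ) + 1 + β₁) = (β₁ - α₁ + p) / p := by
    rw [hinv]; field_simp; ring
  have hNp : 0 < (n:ℝ) + 1 - p := by linarith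
  have hθn : (1 / p - 1 / pst) * ((n:ℝ) + 1) ≤ 1 := by
    rw [le_div_iff₀ hNp] at hβ₁r
    have e : (1 / p - 1 / pst) * ((n:ℝ) + 1) =
        ((β₁ - α₁ + p) * ((n:ℝ) + 1)) / (p * ((n:ℝ) + 1 + β₁)) := by
      rw [hinv]; field_simp; ring
    rw [e, div_le_one (by positivity)]
    nlinarith
  obtain ⟨C, hC, H⟩ := main_prod (n := n) (α := α₁) (β := β₁) hp1 hppst hβ₁l hθn (by
    rw [hθeq]; field_simp; ring)
  let L : (ℝ × (Fin n → ℝ)) →L[ℝ] EuclideanSpace ℝ (Fin (n + 1)) :=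
    LinearMap.toContinuousLinearMap (Lmap n)
  have hLL : ∀ Z, L Z = Lmap n Z := fun Z => rfl
  set C2 : ℝ≥0∞ := C * ‖L‖ₑ ^ p with hC2
  have hC2t : C2 ≠ ⊤ := ENNReal.mul_ne_top hC (ENNReal.rpow_ne_top_of_nonneg hp0.le enorm_ne_top)
  refine ⟨C2.toReal + 1, by positivity, ?_⟩
  intro u hu hcu
  have hu1 : ContDiff ℝ 1 u := hu.of_le (by exact_mod_cast le_top)
  have hum : Measurable u := hu1.continuous.measurable
  have hGm : Measurable fun X => ‖fderiv ℝ u X‖ :=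
    (hu1.continuous_fderiv one_ne_zero).measurable.norm
  rw [half_eq β₁ (fun X => ENNReal.ofReal |u X| ^ pst) (by fun_prop),
    half_eq α₁ (fun X => ENNReal.ofReal ‖fderiv ℝ u X‖ ^ p) (by fun_prop)]
  have hV : ContDiff ℝ 1 (fun Z => u (L Z)) := hu1.comp L.contDiff
  have hemb : Topology.IsClosedEmbedding (Lmap n) :=
    LinearMap.isClosedEmbedding_of_injective (LinearMap.ker_eq_bot.2 (Lmap_inj n))
  have hVc : HasCompactSupport (fun Z => u (L Z)) := hcu.comp_isClosedEmbedding hemb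
  have h := H _ hV hVc
  have hle : C2 ≤ ENNReal.ofReal (C2.toReal + 1) := by
    rw [ENNReal.le_ofReal_iff_toReal_le hC2t (by positivity)]; linarith
  calc _ = (∫⁻ X : ℝ × (Fin n → ℝ), wt β₁ X.1 * ‖u (L X)‖ₑ ^ pst) ^ (p / pst) := by
        simp only [← ofReal_norm, Real.norm_eq_abs, hLL]
    _ ≤ C * ∫⁻ X : ℝ × (Fin n → ℝ), wt α₁ X.1 * ‖fderiv ℝ (fun Z => u (L Z)) X‖ₑ ^ p := h
    _ ≤ C * ∫⁻ Z : ℝ × (Fin n → ℝ), ‖L‖ₑ ^ p * (wt α₁ Z.1 * ENNReal.ofReal ‖fderiv ℝ u (Lmap n Z)‖ ^ p) := by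
        apply mul_le_mul_right
        apply lintegral_mono
        intro Z
        dsimp only
        have hd : fderiv ℝ (fun Z => u (L Z)) Z = (fderiv ℝ u (L Z)).comp L :=
          ((hu1.differentiable one_ne_zero (L Z)).hasFDerivAt.comp Z L.hasFDerivAt).fderiv
        have hn' : ‖fderiv ℝ (fun Z => u (L Z)) Z‖ₑ ≤ ENNReal.ofReal ‖fderiv ℝ u (Lmap n Z)‖ * ‖L‖ₑ := by
          rw [hd, ← ofReal_norm, ← ofReal_norm L, ← ENNReal.ofReal_mul (norm_nonneg _)]
          exact ENNReal.ofReal_le_ofReal (ContinuousLinearMap.opNorm_comp_le _ _)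
        calc _ ≤ wt α₁ Z.1 * (ENNReal.ofReal ‖fderiv ℝ u (Lmap n Z)‖ * ‖L‖ₑ) ^ p := by
              gcongr
          _ = _ := by rw [ENNReal.mul_rpow_of_nonneg _ _ hp0.le]; ring
    _ = C2 * ∫⁻ Z : ℝ × (Fin n → ℝ), (wt α₁ Z.1 * ENNReal.ofReal ‖fderiv ℝ u (Lmap n Z)‖ ^ p) := by
        rw [lintegral_const_mul' _ _ (ENNReal.rpow_ne_top_of_nonneg hp0.le enorm_ne_top), ← mul_assoc]
    _ ≤ _ := by gcongr
end
end
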